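/- arXiv:2003.09247 — 3 statements merged into one kernel-verified Lean document; each statement's English description precedes it below -/
import Mathlib

section
/- There exists a constant ε > 0 such that for every large enough integer n the following holds. Let T be a tree on n vertices, let L be the set of leaves of T, and let v ∈ V(T) \ (L ∪ N_T(L)) be a vertex such that d_T(v) ≤ n/3 and the tree obtained from T by deleting v has maximum degree at most ε·√n. Let p be any vertex of K_n. Then, in the unbiased Waiter-Client game on the edge set of K_n, Waiter has a strategy to force Client to claim a copy of T within n rounds such that (a) in Client's copy of T, the vertex p of K_n represents the vertex v of T, and (b) in each round Waiter offers either exactly two edges incident to p or no edge incident to p. -/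
open Finset

/-- `WaiterWinsOffers board b allowed win t Cl W` : as in the usual `b`-biased Waiter-Client
game on the board `board` (each round Waiter offers `b+1` previously unclaimed elements — or all
remaining ones, if fewer — of which Client claims one and the rest go to Waiter), Waiter can
force, using only offers satisfying the constraint `allowed`, that within the next `t` rounds a
position is reached where `win` holds of (Client's elements, Waiter's elements). -/
def WaiterWinsOffers {X : Type*} [DecidableEq X] (board : Finset X) (b : ℕ)
    (allowed : Finset X → Prop) (win : Finset X → Finset X → Prop) :
    ℕ → Finset X → Finset X → Prop
  | 0, Cl, W => win Cl W
  | (t+1), Cl, W => win Cl W ∨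
      ∃ O : Finset X, O.Nonempty ∧ allowed O ∧ O ⊆ board \ (Cl ∪ W) ∧
        O.card = min (b + 1) ((board \ (Cl ∪ W)).card) ∧
        ∀ x ∈ O, WaiterWinsOffers board b allowed win t (insert x Cl) (W ∪ O.erase x)

/-- The edge set of the complete graph on `Fin n`. -/
def Kedges (n : ℕ) : Finset (Sym2 (Fin n)) :=
  Finset.univ.filter (fun e => ¬ e.IsDiag)

/-- The game of the theorem. -/
def Wins {n : ℕ} (T : SimpleGraph (Fin n)) (v p : Fin n) (t : ℕ)
    (Cl W : Finset (Sym2 (Fin n))) : Prop :=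
  WaiterWinsOffers (Kedges n) 1
          (fun O => (O.filter (fun e => p ∈ e)).card = 0 ∨
                    (O.filter (fun e => p ∈ e)).card = 2)
          (fun Cl _ => ∃ σ : Equiv.Perm (Fin n), σ v = p ∧
            ∀ e ∈ T.edgeSet, Sym2.map σ e ∈ Cl)
          t Cl W

lemma Wins.step {n : ℕ} {T : SimpleGraph (Fin n)} {v p : Fin n} {t : ℕ}
    {Cl W : Finset (Sym2 (Fin n))} {e f : Sym2 (Fin n)} (hef : e ≠ f)
    (he : ¬ e.IsDiag) (hf : ¬ f.IsDiag) (he' : e ∉ Cl ∪ W) (hf' : f ∉ Cl ∪ W)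
    (hp : p ∈ e ↔ p ∈ f)
    (h1 : Wins T v p t (insert e Cl) (insert f W))
    (h2 : Wins T v p t (insert f Cl) (insert e W)) : Wins T v p (t+1) Cl W := by
  unfold Wins WaiterWinsOffers
  right
  have hsub : ({e, f} : Finset (Sym2 (Fin n))) ⊆ Kedges n \ (Cl ∪ W) := by
    intro x hx
    simp only [Finset.mem_insert, Finset.mem_singleton] at hx
    rcases hx with rfl | rfl
    · simp only [Finset.mem_sdiff, Kedges, Finset.mem_filter, Finset.mem_univ, true_and]
      exact ⟨he, he'⟩
    · simp only [Finset.mem_sdiff, Kedges, Finset.mem_filter, Finset.mem_univ, true_and]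
      exact ⟨hf, hf'⟩
  have hc : ({e, f} : Finset (Sym2 (Fin n))).card = 2 := Finset.card_pair hef
  refine ⟨{e, f}, by simp, ?_, hsub, ?_, ?_⟩
  · by_cases h : p ∈ e
    · right
      rw [Finset.filter_true_of_mem]
      · exact hc
      · intro x hx
        simp only [Finset.mem_insert, Finset.mem_singleton] at hx
        rcases hx with rfl | rfl
        · exact h
        · exact hp.1 h
    · left
      rw [Finset.filter_false_of_mem]
      · simp
      · intro x hx
        simp only [Finset.mem_insert, Finset.mem_singleton] at hx
        rcases hx with rfl | rfl
        · exact h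
        · exact fun h' => h (hp.2 h')
  · have := Finset.card_le_card hsub
    omega
  · intro x hx
    simp only [Finset.mem_insert, Finset.mem_singleton] at hx
    rcases hx with rfl | rfl
    · have : W ∪ ({x, f} : Finset (Sym2 (Fin n))).erase x = insert f W := by
        ext y; simp only [Finset.mem_union, Finset.mem_erase, Finset.mem_insert,
          Finset.mem_singleton]; grind
      rw [this]; exact h1
    · have : W ∪ ({e, x} : Finset (Sym2 (Fin n))).erase x = insert e W := by
        ext y; simp only [Finset.mem_union, Finset.mem_erase, Finset.mem_insert,
          Finset.mem_singleton]; grind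
      rw [this]; exact h2

lemma Wins.of_win {n : ℕ} {T : SimpleGraph (Fin n)} {v p : Fin n} {t : ℕ}
    {Cl W : Finset (Sym2 (Fin n))} (σ : Fin n → Fin n) (hσ : Function.Injective σ)
    (hv : σ v = p) (h : ∀ x y, T.Adj x y → s(σ x, σ y) ∈ Cl) : Wins T v p t Cl W := by
  have hw : ∃ σ : Equiv.Perm (Fin n), σ v = p ∧
            ∀ e ∈ T.edgeSet, Sym2.map σ e ∈ Cl := by
    refine ⟨Equiv.ofBijective σ (Finite.injective_iff_bijective.1 hσ), hv, ?_⟩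
    intro e
    induction e using Sym2.ind with
    | _ x y => intro he; exact h x y he
  unfold Wins
  cases t with
  | zero => unfold WaiterWinsOffers; exact hw
  | succ t => unfold WaiterWinsOffers; exact Or.inl hw

lemma Wins.mono {n : ℕ} {T : SimpleGraph (Fin n)} {v p : Fin n} {t t' : ℕ} (htt : t ≤ t')
    {Cl W : Finset (Sym2 (Fin n))} (h : Wins T v p t Cl W) : Wins T v p t' Cl W := by
  unfold Wins at h ⊢
  induction t generalizing t' Cl W with
  | zero =>
    unfold WaiterWinsOffers at h
    cases t' with
    | zero => unfold WaiterWinsOffers; exact h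
    | succ t => unfold WaiterWinsOffers; exact Or.inl h
  | succ t ih =>
    obtain ⟨t', rfl⟩ : ∃ u, t' = u + 1 := ⟨t' - 1, by omega⟩
    unfold WaiterWinsOffers at h ⊢
    rcases h with h | ⟨O, h1, h2, h3, h4, h5⟩
    · exact Or.inl h
    · exact Or.inr ⟨O, h1, h2, h3, h4, fun x hx => ih (by omega) (h5 x hx)⟩

/-- Step where two edges `xa`, `xb` are offered. -/
lemma Wins.star {n : ℕ} {T : SimpleGraph (Fin n)} {v p : Fin n} {t : ℕ}
    {Cl W : Finset (Sym2 (Fin n))} {x a b : Fin n} (hab : a ≠ b) (hxa : x ≠ a) (hxb : x ≠ b)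
    (hpa : p ≠ a) (hpb : p ≠ b) (he' : s(x, a) ∉ Cl ∪ W) (hf' : s(x, b) ∉ Cl ∪ W)
    (h1 : Wins T v p t (insert s(x, a) Cl) (insert s(x, b) W))
    (h2 : Wins T v p t (insert s(x, b) Cl) (insert s(x, a) W)) : Wins T v p (t+1) Cl W := by
  refine Wins.step ?_ (by simpa using hxa) (by simpa using hxb) he' hf' ?_ h1 h2
  · simp only [ne_eq, Sym2.eq_iff]; grind
  · simp only [Sym2.mem_iff]; grind

/-- degree in a set of edges -/
def wdeg {n : ℕ} (W : Finset (Sym2 (Fin n))) (u : Fin n) : ℕ := (W.filter (fun e => u ∈ e)).card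

lemma wdeg_insert {n : ℕ} {W : Finset (Sym2 (Fin n))} {e : Sym2 (Fin n)} (he : e ∉ W)
    (u : Fin n) : wdeg (insert e W) u = wdeg W u + if u ∈ e then 1 else 0 := by
  unfold wdeg
  rw [Finset.filter_insert]
  split_ifs with h
  · rw [Finset.card_insert_of_notMem (by simp [he])]
  · rfl

lemma card_le_wdeg {n : ℕ} {α : Type*} [DecidableEq α] (W : Finset (Sym2 (Fin n))) (u : Fin n)
    (A : Finset α) (g : α → Fin n) (hg : Set.InjOn g A) (h : ∀ x ∈ A, s(u, g x) ∈ W) :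
    A.card ≤ wdeg W u := by
  unfold wdeg
  refine Finset.card_le_card_of_injOn (fun x => s(u, g x)) ?_ ?_
  · intro x hx; simp [h x hx]
  · intro x hx y hy hxy
    apply hg hx hy
    simp only [Sym2.eq_iff] at hxy; grind

/-- The unembedded vertices. -/
def Rm {n : ℕ} (S : Finset (Fin n)) (φ : Fin n → Fin n) : Finset (Fin n) :=
  Finset.univ \ S.image φ

lemma mem_Rm {n : ℕ} {S : Finset (Fin n)} {φ : Fin n → Fin n} {a : Fin n} :
    a ∈ Rm S φ ↔ ∀ x ∈ S, φ x ≠ a := by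
  simp [Rm]

lemma card_Rm {n : ℕ} {S : Finset (Fin n)} {φ : Fin n → Fin n} (h : Set.InjOn φ S) :
    (Rm S φ).card = n - S.card := by
  unfold Rm
  rw [Finset.card_sdiff_of_subset (Finset.subset_univ _), Finset.card_image_of_injOn h]
  simp

lemma Rm_insert {n : ℕ} {S : Finset (Fin n)} {φ : Fin n → Fin n} {a y : Fin n} (hy : y ∉ S) :
    Rm (insert y S) (Function.update φ y a) = (Rm S φ).erase a := by
  ext b
  simp only [mem_Rm, Finset.mem_insert, Finset.mem_erase, Function.update_apply]
  grind

/-- The greedy invariant. -/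
structure GInv {n : ℕ} (F : SimpleGraph (Fin n)) [DecidableRel F.Adj] (v p : Fin n) (D : ℕ)
    (S : Finset (Fin n)) (φ : Fin n → Fin n) (Cl W : Finset (Sym2 (Fin n))) : Prop where
  vmem : v ∈ S
  vp : φ v = p
  inj : Set.InjOn φ S
  cl : ∀ e, e ∈ Cl ↔ ∃ x ∈ S, ∃ y ∈ S, F.Adj x y ∧ e = s(φ x, φ y)
  wtouch : ∀ e ∈ W, ∃ x ∈ S, φ x ∈ e
  wdegS : ∀ x ∈ S, wdeg W (φ x) ≤ D + (S.filter (fun y => F.Adj x y)).card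
  pot : ∑ u ∈ Rm S φ, 2 ^ wdeg W u ≤ n

lemma GInv.wdeg_le {n : ℕ} {F : SimpleGraph (Fin n)} [DecidableRel F.Adj] {v p : Fin n} {D : ℕ}
    {S : Finset (Fin n)} {φ : Fin n → Fin n} {Cl W : Finset (Sym2 (Fin n))}
    (h : GInv F v p D S φ Cl W) (hD : n < 2 ^ (D+1)) {u : Fin n} (hu : u ∈ Rm S φ) :
    wdeg W u ≤ D := by
  have h1 : 2 ^ wdeg W u ≤ ∑ u ∈ Rm S φ, 2 ^ wdeg W u :=
    Finset.single_le_sum (f := fun u => 2 ^ wdeg W u) (fun _ _ => Nat.zero_le _) hu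
  have h2 : 2 ^ wdeg W u < 2 ^ (D+1) := lt_of_le_of_lt (h1.trans h.pot) hD
  have := (Nat.pow_lt_pow_iff_right (by norm_num : 1 < 2)).1 h2
  omega

lemma GInv.not_cl {n : ℕ} {F : SimpleGraph (Fin n)} [DecidableRel F.Adj] {v p : Fin n} {D : ℕ}
    {S : Finset (Fin n)} {φ : Fin n → Fin n} {Cl W : Finset (Sym2 (Fin n))}
    (h : GInv F v p D S φ Cl W) {u : Fin n} (hu : u ∈ Rm S φ) (w : Fin n) :
    s(w, u) ∉ Cl := by
  rw [h.cl]
  rintro ⟨x, hx, y, hy, -, he⟩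
  rw [mem_Rm] at hu
  have := hu x hx
  have := hu y hy
  simp only [Sym2.eq_iff] at he
  grind

lemma GInv.ext_core {n : ℕ} {F : SimpleGraph (Fin n)} [DecidableRel F.Adj] {v p : Fin n} {D : ℕ}
    {S : Finset (Fin n)} {φ : Fin n → Fin n} {Cl W : Finset (Sym2 (Fin n))}
    (h : GInv F v p D S φ Cl W) (hD : n < 2 ^ (D+1)) {x y : Fin n} (hx : x ∈ S) (hy : y ∉ S)
    (hxy : F.Adj x y) (huniq : ∀ w ∈ S, F.Adj w y → w = x) {a b : Fin n} (hab : a ≠ b)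
    (ha : a ∈ Rm S φ) (hb : b ∈ Rm S φ) (hb' : s(φ x, b) ∉ W)
    (hd : wdeg W a = wdeg W b) :
    GInv F v p D (insert y S) (Function.update φ y a) (insert s(φ x, a) Cl)
      (insert s(φ x, b) W) := by
  have ha' := mem_Rm.1 ha
  have hb2 := mem_Rm.1 hb
  have hne : ∀ z ∈ S, z ≠ y := fun z hz h => hy (h ▸ hz)
  have hup : ∀ z ∈ S, Function.update φ y a z = φ z := fun z hz =>
    Function.update_of_ne (hne z hz) _ _
  refine ⟨Finset.mem_insert_of_mem h.vmem, ?_, ?_, ?_, ?_, ?_, ?_⟩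
  · rw [hup v h.vmem, h.vp]
  · intro z hz w hw hzw
    simp only [Finset.coe_insert, Set.mem_insert_iff, Finset.mem_coe] at hz hw
    have := h.inj
    rcases hz with rfl | hz <;> rcases hw with rfl | hw
    · rfl
    · rw [hup w hw, Function.update_self] at hzw; exact absurd hzw.symm (ha' w hw)
    · rw [hup z hz, Function.update_self] at hzw; exact absurd hzw (ha' z hz)
    · rw [hup w hw, hup z hz] at hzw; exact h.inj hz hw hzw
  · intro e
    rw [Finset.mem_insert, h.cl]
    constructor
    · rintro (rfl | ⟨z, hz, w, hw, hzw, rfl⟩)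
      · exact ⟨x, by simp [hx], y, by simp, hxy, by rw [hup x hx, Function.update_self]⟩
      · exact ⟨z, by simp [hz], w, by simp [hw], hzw, by rw [hup z hz, hup w hw]⟩
    · rintro ⟨z, hz, w, hw, hzw, rfl⟩
      simp only [Finset.mem_insert] at hz hw
      rcases hz with rfl | hz <;> rcases hw with rfl | hw
      · exact absurd rfl hzw.ne
      · left; rw [hup w hw, Function.update_self, huniq w hw hzw.symm, Sym2.eq_swap]
      · left; rw [hup z hz, Function.update_self, huniq z hz hzw]
      · right; exact ⟨z, hz, w, hw, hzw, by rw [hup z hz, hup w hw]⟩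
  · intro e he
    rw [Finset.mem_insert] at he
    rcases he with rfl | he
    · exact ⟨x, by simp [hx], by rw [hup x hx]; simp⟩
    · obtain ⟨z, hz, hze⟩ := h.wtouch e he
      exact ⟨z, by simp [hz], by rwa [hup z hz]⟩
  · intro z hz
    rw [Finset.mem_insert] at hz
    rw [wdeg_insert hb']
    rcases hz with rfl | hz
    · rw [Function.update_self]
      have h1 := h.wdeg_le hD ha
      have h2 : a ∉ s(φ x, b) := by
        simp only [Sym2.mem_iff]; rintro (h | h)
        · exact ha' x hx h.symm
        · exact hab h
      rw [if_neg h2]; omega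
    · rw [hup z hz]
      have h1 := h.wdegS z hz
      have hle : (S.filter (fun y => F.Adj z y)).card ≤
          ((insert y S).filter (fun y => F.Adj z y)).card := by
        apply Finset.card_le_card
        exact Finset.filter_subset_filter _ (Finset.subset_insert _ _)
      by_cases hzx : z = x
      · subst hzx
        rw [Finset.filter_insert, if_pos hxy, Finset.card_insert_of_notMem (by simp [hy])]
        split_ifs <;> omega
      · have h2 : φ z ∉ s(φ x, b) := by
          simp only [Sym2.mem_iff]; rintro (h' | h')
          · exact hzx (h.inj hz hx h')
          · exact hb2 z hz h'
        rw [if_neg h2]; omega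
  · rw [Rm_insert hy]
    have hba : b ∈ (Rm S φ).erase a := by simp [hb, hab.symm]
    have h0 := h.pot
    rw [← Finset.add_sum_erase _ _ ha, ← Finset.add_sum_erase _ _ hba] at h0
    rw [← Finset.add_sum_erase _ _ hba, wdeg_insert hb', if_pos (by simp)]
    have : ∑ u ∈ ((Rm S φ).erase a).erase b, 2 ^ wdeg (insert s(φ x, b) W) u =
        ∑ u ∈ ((Rm S φ).erase a).erase b, 2 ^ wdeg W u := by
      apply Finset.sum_congr rfl
      intro u hu
      simp only [Finset.mem_erase] at hu
      have hnu : u ∉ s(φ x, b) := by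
        simp only [Sym2.mem_iff]; rintro (h' | h')
        · exact (mem_Rm.1 hu.2.2) x hx h'.symm
        · exact hu.1 h'
      rw [wdeg_insert hb', if_neg hnu, add_zero]
    rw [this, pow_succ]
    rw [hd] at h0
    omega

lemma GInv.ext {n : ℕ} {F : SimpleGraph (Fin n)} [DecidableRel F.Adj] {v p : Fin n} {D : ℕ}
    {S : Finset (Fin n)} {φ : Fin n → Fin n} {Cl W : Finset (Sym2 (Fin n))}
    (h : GInv F v p D S φ Cl W) (hD : n < 2 ^ (D+1)) {x y : Fin n} (hx : x ∈ S) (hy : y ∉ S)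
    (hxy : F.Adj x y) (huniq : ∀ w ∈ S, F.Adj w y → w = x)
    (hk : 2 * D + 2 + (S.filter (fun y => F.Adj x y)).card + S.card ≤ n)
    {T : SimpleGraph (Fin n)} {t : ℕ}
    (hw : ∀ a b, a ≠ b → a ∈ Rm S φ → b ∈ Rm S φ → 
      GInv F v p D (insert y S) (Function.update φ y a) (insert s(φ x, a) Cl)
        (insert s(φ x, b) W) → Wins T v p t (insert s(φ x, a) Cl) (insert s(φ x, b) W)) :
    Wins T v p (t+1) Cl W := by
  set A := (Rm S φ).filter (fun b => s(φ x, b) ∈ W) with hA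
  set B := (Rm S φ).filter (fun b => s(φ x, b) ∉ W) with hB
  have hAB : A.card + B.card = n - S.card := by
    rw [← card_Rm h.inj]; exact Finset.card_filter_add_card_filter_not _
  have hAc : A.card ≤ wdeg W (φ x) := card_le_wdeg W (φ x) A id (fun _ _ _ _ h => h)
    (fun z hz => (Finset.mem_filter.1 hz).2)
  have h1 := h.wdegS x hx
  have hlt : (Finset.range (D+1)).card < B.card := by
    rw [Finset.card_range]; omega
  obtain ⟨a, ha, b, hb, hab, hd⟩ := Finset.exists_ne_map_eq_of_card_lt_of_maps_to hlt
    (f := fun u => wdeg W u) (by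
      intro u hu
      have := h.wdeg_le hD (Finset.mem_filter.1 hu).1
      have h' : wdeg W u < D + 1 := by omega
      simpa using h')
  rw [hB, Finset.mem_filter] at ha hb
  have hpx : ∀ a ∈ Rm S φ, p ≠ a := fun a ha => by
    rw [← h.vp]; exact mem_Rm.1 ha v h.vmem
  refine Wins.star hab (mem_Rm.1 ha.1 x hx) (mem_Rm.1 hb.1 x hx) (hpx a ha.1) (hpx b hb.1) ?_ ?_
    (hw a b hab ha.1 hb.1 ?_) (hw b a hab.symm hb.1 ha.1 ?_)
  · rw [Finset.mem_union, not_or]; exact ⟨h.not_cl ha.1 _, ha.2⟩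
  · rw [Finset.mem_union, not_or]; exact ⟨h.not_cl hb.1 _, hb.2⟩
  · exact h.ext_core hD hx hy hxy huniq hab ha.1 hb.1 hb.2 hd
  · exact h.ext_core hD hx hy hxy huniq hab.symm hb.1 ha.1 ha.2 hd.symm

lemma GInv.root {n : ℕ} {F : SimpleGraph (Fin n)} [DecidableRel F.Adj] {v p : Fin n} {D : ℕ}
    {S : Finset (Fin n)} {φ : Fin n → Fin n} {Cl W : Finset (Sym2 (Fin n))}
    (h : GInv F v p D S φ Cl W) (hD : n < 2 ^ (D+1)) {y : Fin n} (hy : y ∉ S)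
    (huniq : ∀ w ∈ S, ¬ F.Adj w y) {a : Fin n} (ha : a ∈ Rm S φ) :
    GInv F v p D (insert y S) (Function.update φ y a) Cl W := by
  have ha' := mem_Rm.1 ha
  have hne : ∀ z ∈ S, z ≠ y := fun z hz h => hy (h ▸ hz)
  have hup : ∀ z ∈ S, Function.update φ y a z = φ z := fun z hz =>
    Function.update_of_ne (hne z hz) _ _
  refine ⟨Finset.mem_insert_of_mem h.vmem, ?_, ?_, ?_, ?_, ?_, ?_⟩
  · rw [hup v h.vmem, h.vp]
  · intro z hz w hw hzw
    simp only [Finset.coe_insert, Set.mem_insert_iff, Finset.mem_coe] at hz hw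
    have := h.inj
    rcases hz with rfl | hz <;> rcases hw with rfl | hw
    · rfl
    · rw [hup w hw, Function.update_self] at hzw; exact absurd hzw.symm (ha' w hw)
    · rw [hup z hz, Function.update_self] at hzw; exact absurd hzw (ha' z hz)
    · rw [hup w hw, hup z hz] at hzw; exact h.inj hz hw hzw
  · intro e
    rw [h.cl]
    constructor
    · rintro ⟨z, hz, w, hw, hzw, rfl⟩
      exact ⟨z, by simp [hz], w, by simp [hw], hzw, by rw [hup z hz, hup w hw]⟩
    · rintro ⟨z, hz, w, hw, hzw, rfl⟩
      simp only [Finset.mem_insert] at hz hw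
      rcases hz with rfl | hz <;> rcases hw with rfl | hw
      · exact absurd rfl hzw.ne
      · exact absurd hzw.symm (huniq w hw)
      · exact absurd hzw (huniq z hz)
      · exact ⟨z, hz, w, hw, hzw, by rw [hup z hz, hup w hw]⟩
  · intro e he
    obtain ⟨z, hz, hze⟩ := h.wtouch e he
    exact ⟨z, by simp [hz], by rwa [hup z hz]⟩
  · intro z hz
    rw [Finset.mem_insert] at hz
    rcases hz with rfl | hz
    · rw [Function.update_self]
      have h1 := h.wdeg_le hD ha
      omega
    · rw [hup z hz]
      have h1 := h.wdegS z hz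
      have hle : (S.filter (fun y => F.Adj z y)).card ≤
          ((insert y S).filter (fun y => F.Adj z y)).card := by
        apply Finset.card_le_card
        exact Finset.filter_subset_filter _ (Finset.subset_insert _ _)
      omega
  · rw [Rm_insert hy]
    exact (Finset.sum_le_sum_of_subset (Finset.erase_subset _ _)).trans h.pot

lemma GInv.init {n : ℕ} (F : SimpleGraph (Fin n)) [DecidableRel F.Adj] (v p : Fin n) (D : ℕ) :
    GInv F v p D {v} (fun _ => p) ∅ ∅ := by
  refine ⟨by simp, rfl, by simp, by simp, by simp, by simp [wdeg], ?_⟩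
  simp only [wdeg, Finset.filter_empty, Finset.card_empty, pow_zero, Finset.sum_const,
    smul_eq_mul, mul_one]
  exact (Finset.card_le_univ _).trans (by simp)

lemma GInv.greedy_aux {n : ℕ} {F : SimpleGraph (Fin n)} [DecidableRel F.Adj] {v p : Fin n}
    {D : ℕ} (hD : n < 2 ^ (D+1)) {par : Fin n → Fin n} {dep : Fin n → ℕ}
    {S0 S1 : Finset (Fin n)} (h01 : S0 ⊆ S1)
    (h1 : ∀ y ∈ S1, y ∉ S0 → par y ∈ S1 ∧ F.Adj (par y) y ∧ dep (par y) < dep y ∧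
      2 * D + 2 + (Finset.univ.filter (fun w => F.Adj (par y) w)).card + S1.card ≤ n)
    (h2 : ∀ y ∈ S1, y ∉ S0 → ∀ w ∈ S1, F.Adj w y → w = par y ∨ (w ∉ S0 ∧ par w = y))
    {T : SimpleGraph (Fin n)} {t : ℕ} {φ : Fin n → Fin n} {W : Finset (Sym2 (Fin n))}
    (hw : ∀ φ' Cl' W', GInv F v p D S1 φ' Cl' W' → (∀ x ∈ S0, φ' x = φ x) →
      (∀ x ∈ S0, (∀ y ∈ S1, y ∉ S0 → par y ≠ x) → ∀ e ∈ W', φ x ∈ e → e ∈ W) →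
      Wins T v p t Cl' W') (k : ℕ) :
    ∀ S φ' Cl' W', S0 ⊆ S → S ⊆ S1 → (S1 \ S).card = k → (∀ w ∈ S, w ∉ S0 → par w ∈ S) →
      GInv F v p D S φ' Cl' W' → (∀ x ∈ S0, φ' x = φ x) →
      (∀ x ∈ S0, (∀ y ∈ S1, y ∉ S0 → par y ≠ x) → ∀ e ∈ W', φ x ∈ e → e ∈ W) →
      Wins T v p (t + k) Cl' W' := by
  induction k with
  | zero =>
    intro S φ' Cl' W' hS0 hS1 hc _ hI hφ hW
    have : S = S1 := by
      apply Finset.Subset.antisymm hS1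
      rw [Finset.card_eq_zero, Finset.sdiff_eq_empty_iff_subset] at hc
      exact hc
    subst this
    exact hw φ' Cl' W' hI hφ hW
  | succ k ih =>
    intro S φ' Cl' W' hS0 hS1 hc hcl hI hφ hW
    have hne : (S1 \ S).Nonempty := by rw [← Finset.card_pos]; omega
    obtain ⟨y, hy, hmin⟩ := Finset.exists_min_image (S1 \ S) dep hne
    rw [Finset.mem_sdiff] at hy
    have hy0 : y ∉ S0 := fun h => hy.2 (hS0 h)
    obtain ⟨hp1, hadj, hlt, hk⟩ := h1 y hy.1 hy0
    have hpS : par y ∈ S := by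
      by_contra hcon
      have := hmin (par y) (by simp [hp1, hcon])
      omega
    have hcard : (S1 \ insert y S).card = k := by
      have : S1 \ insert y S = (S1 \ S).erase y := by ext z; simp; tauto
      rw [this, Finset.card_erase_of_mem (by simp [hy])]
      omega
    rw [← add_assoc]
    refine hI.ext hD hpS hy.2 hadj ?_ ?_ ?_
    · intro w hwS hwy
      rcases h2 y hy.1 hy0 w (hS1 hwS) hwy with h | ⟨h, h'⟩
      · exact h
      · exact absurd (h' ▸ hcl w hwS h) hy.2
    · have h3 : (S.filter (fun z => F.Adj (par y) z)).card ≤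
          (Finset.univ.filter (fun w => F.Adj (par y) w)).card :=
        Finset.card_le_card (Finset.filter_subset_filter _ (Finset.subset_univ _))
      have := Finset.card_le_card hS1
      omega
    · intro a b hab ha hb hI'
      refine ih (insert y S) _ _ _ (hS0.trans (Finset.subset_insert _ _)) ?_ hcard ?_ hI' ?_ ?_
      · exact Finset.insert_subset hy.1 hS1
      · intro w hw hw0
        rw [Finset.mem_insert] at hw
        rcases hw with rfl | hw
        · exact Finset.mem_insert_of_mem hpS
        · exact Finset.mem_insert_of_mem (hcl w hw hw0)
      · intro x hx
        rw [Function.update_of_ne, hφ x hx]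
        rintro rfl; exact hy0 hx
      · intro x hx hpx e he hxe
        rw [Finset.mem_insert] at he
        rcases he with rfl | he
        · exfalso
          rw [← hφ x hx, Sym2.mem_iff] at hxe
          rcases hxe with h | h
          · exact hpx y hy.1 hy0 (hI.inj (hS0 hx) hpS h).symm
          · exact mem_Rm.1 hb x (hS0 hx) h
        · exact hW x hx hpx e he hxe

lemma GInv.greedy {n : ℕ} {F : SimpleGraph (Fin n)} [DecidableRel F.Adj] {v p : Fin n}
    {D : ℕ} (hD : n < 2 ^ (D+1)) {par : Fin n → Fin n} {dep : Fin n → ℕ}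
    {S0 S1 : Finset (Fin n)} (h01 : S0 ⊆ S1)
    (h1 : ∀ y ∈ S1, y ∉ S0 → par y ∈ S1 ∧ F.Adj (par y) y ∧ dep (par y) < dep y ∧
      2 * D + 2 + (Finset.univ.filter (fun w => F.Adj (par y) w)).card + S1.card ≤ n)
    (h2 : ∀ y ∈ S1, y ∉ S0 → ∀ w ∈ S1, F.Adj w y → w = par y ∨ (w ∉ S0 ∧ par w = y))
    {T : SimpleGraph (Fin n)} {t : ℕ} {φ : Fin n → Fin n} {Cl W : Finset (Sym2 (Fin n))}
    (hI : GInv F v p D S0 φ Cl W)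
    (hw : ∀ φ' Cl' W', GInv F v p D S1 φ' Cl' W' → (∀ x ∈ S0, φ' x = φ x) →
      (∀ x ∈ S0, (∀ y ∈ S1, y ∉ S0 → par y ≠ x) → ∀ e ∈ W', φ x ∈ e → e ∈ W) →
      Wins T v p t Cl' W') : Wins T v p (t + (S1.card - S0.card)) Cl W := by
  rw [← Finset.card_sdiff_of_subset h01]
  exact GInv.greedy_aux hD h01 h1 h2 hw _ S0 φ Cl W le_rfl h01 rfl (fun w h h' => absurd h h')
    hI (fun _ _ => rfl) (fun _ _ _ _ he _ => he)

/-- rooted structure of a tree -/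
structure Rooted {n : ℕ} (T : SimpleGraph (Fin n)) (v : Fin n) (par : Fin n → Fin n)
    (dep : Fin n → ℕ) : Prop where
  parv : par v = v
  lt : ∀ y, y ≠ v → dep (par y) < dep y
  adj : ∀ x y, T.Adj x y ↔ (y ≠ v ∧ par y = x) ∨ (x ≠ v ∧ par x = y)

lemma exists_rooted {n : ℕ} {T : SimpleGraph (Fin n)} (hT : T.IsTree) (v : Fin n) :
    ∃ par dep, Rooted T v par dep := by
  classical
  have h1 : ∀ y, y ≠ v → ∃ x, T.Adj y x ∧ T.dist x v < T.dist y v := by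
    intro y hy
    obtain ⟨w, hw⟩ := hT.connected.exists_walk_length_eq_dist y v
    cases w with
    | nil => exact absurd rfl hy
    | cons h q =>
      refine ⟨_, h, ?_⟩
      have := SimpleGraph.dist_le q
      simp only [SimpleGraph.Walk.length_cons] at hw
      omega
  choose! f hf using h1
  have hpar : ∀ y, y ≠ v → (if y = v then v else f y) = f y := fun y hy => if_neg hy
  have hinj : Set.InjOn (fun y => s(y, f y)) (Finset.univ.erase v : Finset (Fin n)) := by
    intro y hy z hz hyz
    simp only [Finset.coe_erase, Finset.coe_univ, Set.mem_sdiff, Set.mem_univ,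
      Set.mem_singleton_iff, true_and] at hy hz
    simp only [Sym2.eq_iff] at hyz
    rcases hyz with h | ⟨h, h'⟩
    · exact h.1
    · have a1 := (hf y hy).2
      have a2 := (hf z hz).2
      rw [h'] at a1; rw [← h] at a2; omega
  have himg : (Finset.univ.erase v : Finset (Fin n)).image (fun y => s(y, f y)) = T.edgeFinset := by
    apply Finset.eq_of_subset_of_card_le
    · intro e he
      simp only [Finset.mem_image, Finset.mem_erase, Finset.mem_univ, and_true] at he
      obtain ⟨y, hy, rfl⟩ := he
      rw [SimpleGraph.mem_edgeFinset]
      exact (hf y hy).1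
    · rw [Finset.card_image_of_injOn hinj, Finset.card_erase_of_mem (Finset.mem_univ _)]
      have := hT.card_edgeFinset
      simp only [Fintype.card_fin] at this
      simp only [Finset.card_univ, Fintype.card_fin]
      omega
  refine ⟨fun y => if y = v then v else f y, fun y => T.dist y v, by simp, ?_, ?_⟩
  · intro y hy
    simp only [hpar y hy]
    exact (hf y hy).2
  · intro x y
    constructor
    · intro h
      have : s(x, y) ∈ T.edgeFinset := by rw [SimpleGraph.mem_edgeFinset]; exact h
      rw [← himg] at this
      simp only [Finset.mem_image, Finset.mem_erase, Finset.mem_univ, and_true] at this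
      obtain ⟨z, hz, he⟩ := this
      simp only [Sym2.eq_iff] at he
      rcases he with ⟨rfl, h2⟩ | ⟨rfl, h2⟩
      · right; exact ⟨hz, by rw [hpar z hz, h2]⟩
      · left; exact ⟨hz, by rw [hpar z hz, h2]⟩
    · rintro (⟨h, rfl⟩ | ⟨h, rfl⟩)
      · rw [hpar y h]; exact (hf y h).1.symm
      · rw [hpar x h]; exact (hf x h).1

lemma dichotomy {n : ℕ} {v : Fin n} {par : Fin n → Fin n} {dep : Fin n → ℕ}
    (hpv : par v = v) (hlt : ∀ y, y ≠ v → dep (par y) < dep y) {Δ r m : ℕ}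
    (hΔ : ∀ x, x ≠ v → (Finset.univ.filter (fun y => y ≠ v ∧ par y = x)).card ≤ Δ)
    (hv : ∀ y, y ≠ v → par y = v → ∃ z, z ≠ v ∧ par z = y)
    (hn : r * Δ + (2 * r + 1) * (m + 1) < n) :
    (∃ X : Finset (Fin n), X.card = r ∧ ∃ l : Fin n → Fin n, ∀ x ∈ X, x ≠ v ∧ l x ≠ v ∧
      par (l x) = x ∧ ∀ z, z ≠ v → par z ≠ l x) ∨
    ∃ z, ∀ j, j < m → par^[j+1] z ≠ v ∧ ∀ w, w ≠ v → par w = par^[j+1] z → w = par^[j] z := by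
  classical
  set L : Finset (Fin n) := Finset.univ.filter (fun y => y ≠ v ∧ ∀ z, z ≠ v → par z ≠ y) with hL
  set X := L.image par with hX
  have hvX : v ∉ X := by
    simp only [hX, hL, Finset.mem_image, Finset.mem_filter, Finset.mem_univ, true_and]
    rintro ⟨y, ⟨h1, h2⟩, h3⟩
    obtain ⟨z, hz, hz'⟩ := hv y h1 h3
    exact h2 z hz hz'
  by_cases hr : r ≤ X.card
  · left
    obtain ⟨X', hX', hc⟩ := Finset.exists_subset_card_eq hr
    have : ∀ x ∈ X, ∃ y, y ∈ L ∧ par y = x := fun x hx => by simpa [hX] using hx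
    choose! l hl using this
    refine ⟨X', hc, l, fun x hx => ?_⟩
    have h1 := hl x (hX' hx)
    simp only [hL, Finset.mem_filter, Finset.mem_univ, true_and] at h1
    exact ⟨fun h => hvX (h ▸ hX' hx), h1.1.1, h1.2, h1.1.2⟩
  · right
    push Not at hr
    set I : Finset (Fin n) := Finset.univ \ L with hI
    have hIpar : ∀ y, y ≠ v → par y ∈ I := by
      intro y hy
      simp only [hI, hL, Finset.mem_sdiff, Finset.mem_univ, Finset.mem_filter, true_and]
      rintro ⟨_, h⟩
      exact h y hy rfl
    have hvI : v ∈ I := by simp [hI, hL]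
    set ich : Fin n → ℕ := fun x => ((I.erase v).filter (fun y => par y = x)).card with hich
    have hsum : ∑ x ∈ I, ich x = I.card - 1 := by
      rw [← Finset.card_erase_of_mem hvI]
      symm
      apply Finset.card_eq_sum_card_fiberwise
      intro y hy
      simp only [Finset.coe_erase, Set.mem_sdiff, Finset.mem_coe, Set.mem_singleton_iff] at hy
      exact hIpar y hy.2
    set Ch := I.filter (fun x => x ≠ v ∧ x ∉ X ∧ ich x = 1) with hCh
    set NC := I.filter (fun x => ¬ (x ≠ v ∧ x ∉ X ∧ ich x = 1)) with hNC
    have hcc : Ch.card + NC.card = I.card := Finset.card_filter_add_card_filter_not _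
    have hkid : ∀ x, x ∉ X → ∀ y, y ≠ v → par y = x → y ∈ I := by
      intro x hx y hy hyx
      by_contra hc
      apply hx
      rw [hX, Finset.mem_image]
      exact ⟨y, by simpa [hI] using hc, hyx⟩
    have hpos : ∀ x ∈ I, x ≠ v → x ∉ X → 1 ≤ ich x := by
      intro x hx hxv hxX
      simp only [hI, hL, Finset.mem_sdiff, Finset.mem_univ, Finset.mem_filter, true_and] at hx
      push Not at hx
      obtain ⟨z, hz, hzx⟩ := hx hxv
      rw [hich, Nat.succ_le_iff, Finset.card_pos]
      exact ⟨z, by simp [hz, hzx, hkid x hxX z hz hzx]⟩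
    have hsplit : ∑ x ∈ Ch, ich x + ∑ x ∈ NC, ich x = ∑ x ∈ I, ich x :=
      Finset.sum_filter_add_sum_filter_not _ _ _
    have hs1 : ∑ x ∈ Ch, ich x = Ch.card := by
      rw [Finset.card_eq_sum_ones]
      apply Finset.sum_congr rfl
      intro x hx
      rw [hCh, Finset.mem_filter] at hx
      exact hx.2.2.2
    set Y := NC \ insert v X with hY
    have hs2 : 2 * Y.card ≤ ∑ x ∈ NC, ich x := by
      calc 2 * Y.card = ∑ x ∈ Y, 2 := by simp [mul_comm]
        _ ≤ ∑ x ∈ Y, ich x := by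
          apply Finset.sum_le_sum
          intro x hx
          simp only [hY, Finset.mem_sdiff, hNC, Finset.mem_filter, Finset.mem_insert, not_or] at hx
          have := hpos x hx.1.1 hx.2.1 hx.2.2
          have h3 : ich x ≠ 1 := fun h => hx.1.2 ⟨hx.2.1, hx.2.2, h⟩
          omega
        _ ≤ _ := Finset.sum_le_sum_of_subset Finset.sdiff_subset
    have hY2 : NC.card ≤ Y.card + (X.card + 1) := by
      have h1 : NC.card ≤ Y.card + (insert v X).card := Finset.card_le_card_sdiff_add_card
      have h2 := Finset.card_insert_le v X
      omega
    have hIpos : 1 ≤ I.card := Finset.card_pos.2 ⟨v, hvI⟩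
    have hNCc : NC.card ≤ 2 * r + 1 := by omega
    have hLc : L.card ≤ r * Δ := by
      have h1 : L.card ≤ ∑ x ∈ X, Δ := by
        rw [Finset.card_eq_sum_card_fiberwise (t := X) (f := par)
          (fun y hy => by simpa [hX] using ⟨y, hy, rfl⟩)]
        apply Finset.sum_le_sum
        intro x hx
        refine le_trans (Finset.card_le_card ?_) (hΔ x (fun h => hvX (h ▸ hx)))
        intro y hy
        simp only [hL, Finset.mem_filter, Finset.mem_univ, true_and] at hy ⊢
        exact ⟨hy.1.1, hy.2⟩
      rw [Finset.sum_const, smul_eq_mul] at h1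
      exact h1.trans (Nat.mul_le_mul_right _ hr.le)
    have hLI : L.card + I.card = n := by
      have : I.card + L.card = _ := Finset.card_sdiff_add_card_eq_card (Finset.subset_univ L)
      simp only [Finset.card_univ, Fintype.card_fin] at this
      omega
    have hdesc : ∀ M x, (Finset.univ.sup dep) - dep x = M → x ∈ Ch →
        ∃ z ∈ NC, ∃ i, par^[i+1] z = x ∧ ∀ j, j ≤ i → par^[j+1] z ∈ Ch := by
      intro M
      induction M using Nat.strong_induction_on with
      | _ M ih =>
        intro x hM hx
        have hx' := hx
        rw [hCh, Finset.mem_filter] at hx'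
        obtain ⟨hxI, hxv, hxX, h1⟩ := hx'
        have : 0 < ich x := by omega
        rw [hich, Finset.card_pos] at this
        obtain ⟨y, hy⟩ := this
        simp only [Finset.mem_filter, Finset.mem_erase] at hy
        obtain ⟨⟨hyv, hyI⟩, hyx⟩ := hy
        by_cases hyC : y ∈ Ch
        · have h2 := hlt y hyv
          rw [hyx] at h2
          have h3 : dep y ≤ Finset.univ.sup dep := Finset.le_sup (Finset.mem_univ y)
          obtain ⟨z, hz, i, hi, hj⟩ := ih _ (by omega) y rfl hyC
          refine ⟨z, hz, i+1, ?_, ?_⟩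
          · rw [Function.iterate_succ_apply', hi, hyx]
          · intro j hji
            rcases Nat.lt_or_ge i j with h | h
            · obtain rfl : j = i + 1 := by omega
              rw [Function.iterate_succ_apply', hi, hyx]; exact hx
            · exact hj j h
        · refine ⟨y, ?_, 0, by simpa using hyx, ?_⟩
          · rw [hNC, Finset.mem_filter]
            refine ⟨hyI, fun h => hyC ?_⟩
            rw [hCh, Finset.mem_filter]; exact ⟨hyI, h⟩
          · intro j hj
            obtain rfl : j = 0 := by omega
            simpa [hyx] using hx
    by_contra hcon
    push Not at hcon
    have hgood : ∀ z, ∃ j, j < m ∧ par^[j+1] z ∉ Ch := by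
      intro z
      by_contra hc
      push Not at hc
      obtain ⟨j, hj, h⟩ := hcon z
      have hjC := hc j hj
      rw [hCh, Finset.mem_filter] at hjC
      obtain ⟨w, hw, hw1, hw2⟩ := h hjC.2.1
      have h1 := hjC.2.2.2
      rw [hich, Finset.card_eq_one] at h1
      obtain ⟨u, hu⟩ := h1
      have hne : par^[j] z ≠ v := by
        intro h'
        apply hjC.2.1
        rw [Function.iterate_succ_apply', h', hpv]
      have e1 : w ∈ ({u} : Finset (Fin n)) := by
        rw [← hu]; simp only [Finset.mem_filter, Finset.mem_erase]
        exact ⟨⟨hw, hkid _ hjC.2.2.1 w hw hw1⟩, hw1⟩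
      have e2 : par^[j] z ∈ ({u} : Finset (Fin n)) := by
        have e3 : par (par^[j] z) = par^[j+1] z := by rw [Function.iterate_succ_apply']
        rw [← hu]; simp only [Finset.mem_filter, Finset.mem_erase]
        exact ⟨⟨hne, hkid _ hjC.2.2.1 _ hne e3⟩, e3⟩
      rw [Finset.mem_singleton] at e1 e2
      exact hw2 (e1.trans e2.symm)
    have hcov : I ⊆ (NC ×ˢ Finset.range (m+1)).image (fun q => par^[q.2] q.1) := by
      intro x hx
      rw [Finset.mem_image]
      by_cases hxC : x ∈ Ch
      · obtain ⟨z, hz, i, hi, hj⟩ := hdesc _ x rfl hxC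
        obtain ⟨j, hjm, hjn⟩ := hgood z
        have : i < j := by
          by_contra h
          exact hjn (hj j (by omega))
        exact ⟨(z, i+1), by simp [hz]; omega, hi⟩
      · refine ⟨(x, 0), ?_, rfl⟩
        simp only [Finset.mem_product, Finset.mem_range, Nat.succ_pos, and_true]
        rw [hNC, Finset.mem_filter]
        refine ⟨hx, fun h => hxC ?_⟩
        rw [hCh, Finset.mem_filter]; exact ⟨hx, h⟩
    have h1 := (Finset.card_le_card hcov).trans Finset.card_image_le
    rw [Finset.card_product, Finset.card_range] at h1
    have h2 : NC.card * (m+1) ≤ (2 * r + 1) * (m+1) := Nat.mul_le_mul_right _ hNCc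
    omega

/-- abstract matching-finishing game -/
def PickWin {n : ℕ} (bad : Fin n → Fin n → Prop) : ℕ → Finset (Fin n) → Finset (Fin n) → Prop
  | 0, X, R => ∃ x a, X = {x} ∧ R = {a} ∧ ¬ bad x a
  | (k+1), X, R => ∃ x ∈ X, ∃ a ∈ R, ∃ b ∈ R, a ≠ b ∧ ¬ bad x a ∧ ¬ bad x b ∧
      PickWin bad k (X.erase x) (R.erase a) ∧ PickWin bad k (X.erase x) (R.erase b)

/-- bad pairs -/
def BP {n : ℕ} (bad : Fin n → Fin n → Prop) [DecidableRel bad] (X R : Finset (Fin n)) :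
    Finset (Fin n × Fin n) := (X ×ˢ R).filter (fun q => bad q.1 q.2)

lemma mem_BP {n : ℕ} {bad : Fin n → Fin n → Prop} [DecidableRel bad] {X R : Finset (Fin n)}
    {q : Fin n × Fin n} : q ∈ BP bad X R ↔ (q.1 ∈ X ∧ q.2 ∈ R) ∧ bad q.1 q.2 := by
  simp [BP]

lemma BP_mono {n : ℕ} {bad : Fin n → Fin n → Prop} [DecidableRel bad] {X R X' R' : Finset (Fin n)}
    (hX : X ⊆ X') (hR : R ⊆ R') : (BP bad X R).card ≤ (BP bad X' R').card := by
  apply Finset.card_le_card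
  intro q hq
  rw [mem_BP] at hq ⊢
  exact ⟨⟨hX hq.1.1, hR hq.1.2⟩, hq.2⟩

lemma BP_lt {n : ℕ} {bad : Fin n → Fin n → Prop} [DecidableRel bad] {X R X' R' : Finset (Fin n)}
    (hX : X ⊆ X') (hR : R ⊆ R') {x b : Fin n} (hq : (x, b) ∈ BP bad X' R')
    (hn : x ∉ X ∨ b ∉ R) : (BP bad X R).card < (BP bad X' R').card := by
  apply Finset.card_lt_card
  refine ⟨?_, fun h => ?_⟩
  · intro q hq
    rw [mem_BP] at hq ⊢
    exact ⟨⟨hX hq.1.1, hR hq.1.2⟩, hq.2⟩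
  · have := h hq
    rw [mem_BP] at this
    rcases hn with h | h
    · exact h this.1.1
    · exact h this.1.2

lemma bdeg_le_BP {n : ℕ} {bad : Fin n → Fin n → Prop} [DecidableRel bad] {X R : Finset (Fin n)}
    {b : Fin n} (hb : b ∈ R) : (X.filter (fun x => bad x b)).card =
      ((BP bad X R).filter (fun q => q.2 = b)).card := by
  rw [← Finset.card_image_of_injective (X.filter (fun x => bad x b))
    (f := fun x => (x, b)) (fun x y h => by simpa using h)]
  congr 1
  ext ⟨x, c⟩
  simp only [Finset.mem_image, Finset.mem_filter, mem_BP, Prod.mk.injEq]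
  grind

lemma exists_two_of_two_le {n : ℕ} {A : Finset (Fin n)} (h : 2 ≤ A.card) :
    ∃ a ∈ A, ∃ b ∈ A, a ≠ b := by
  obtain ⟨a, ha, b, hb, hab⟩ := Finset.one_lt_card.1 (show 1 < A.card by omega)
  exact ⟨a, ha, b, hb, hab⟩

lemma pick1 {n : ℕ} {bad : Fin n → Fin n → Prop} [DecidableRel bad] (k : ℕ) :
    ∀ X R : Finset (Fin n), X.card = k + 1 → R.card = k + 1 → 2 * (BP bad X R).card < k + 1 →
      PickWin bad k X R := by
  induction k with
  | zero =>
    intro X R hX hR hE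
    obtain ⟨x, rfl⟩ := Finset.card_eq_one.1 hX
    obtain ⟨a, rfl⟩ := Finset.card_eq_one.1 hR
    refine ⟨x, a, rfl, rfl, fun h => ?_⟩
    have h1 : (BP bad {x} {a}).card = 0 := by omega
    rw [Finset.card_eq_zero] at h1
    have : (x, a) ∈ BP bad {x} {a} := by rw [mem_BP]; simpa using h
    rw [h1] at this
    simp at this
  | succ k ih =>
    intro X R hX hR hE
    have key : ∀ x ∈ X, ∀ a ∈ R, ∀ b ∈ R, a ≠ b → ¬ bad x a → ¬ bad x b →
        2 * (BP bad (X.erase x) (R.erase a)).card < k + 1 →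
        2 * (BP bad (X.erase x) (R.erase b)).card < k + 1 → PickWin bad (k+1) X R := by
      intro x hx a ha b hb hab h1 h2 h3 h4
      refine ⟨x, hx, a, ha, b, hb, hab, h1, h2, ih _ _ ?_ ?_ h3, ih _ _ ?_ ?_ h4⟩
      · rw [Finset.card_erase_of_mem hx, hX]; rfl
      · rw [Finset.card_erase_of_mem ha, hR]; rfl
      · rw [Finset.card_erase_of_mem hx, hX]; rfl
      · rw [Finset.card_erase_of_mem hb, hR]; rfl
    by_cases h0 : BP bad X R = ∅
    · obtain ⟨x, hx⟩ : X.Nonempty := by rw [← Finset.card_pos]; omega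
      obtain ⟨a, ha, b, hb, hab⟩ := exists_two_of_two_le (A := R) (by omega)
      have h1 : ∀ c ∈ R, ¬ bad x c := fun c hc h => by
        have : (x, c) ∈ BP bad X R := by rw [mem_BP]; exact ⟨⟨hx, hc⟩, h⟩
        rw [h0] at this; simp at this
      have h2 : ∀ c, (BP bad (X.erase x) (R.erase c)).card = 0 := fun c => by
        have := BP_mono (bad := bad) (Finset.erase_subset x X) (Finset.erase_subset c R)
        rw [h0] at this; simpa using this
      exact key x hx a ha b hb hab (h1 a ha) (h1 b hb) (by rw [h2]; omega) (by rw [h2]; omega)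
    · obtain ⟨⟨x0, b1⟩, hq⟩ := Finset.nonempty_iff_ne_empty.2 h0
      have hq' := mem_BP.1 hq
      simp only at hq'
      obtain ⟨⟨hx0, hb1⟩, hbad⟩ := hq'
      by_cases h2 : ∃ x2 b2, (x2, b2) ∈ BP bad X R ∧ b2 ≠ b1
      · obtain ⟨x2, b2, hq2, hne⟩ := h2
        have hq2' := mem_BP.1 hq2
        simp only at hq2'
        obtain ⟨⟨hx2, hb2⟩, hbad2⟩ := hq2'
        have hcnt : (X.filter (fun x => bad x b1)).card + (X.filter (fun x => bad x b2)).card ≤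
            (BP bad X R).card := by
          rw [bdeg_le_BP hb1, bdeg_le_BP hb2, ← Finset.card_union_of_disjoint]
          · apply Finset.card_le_card
            intro q; simp only [Finset.mem_union, Finset.mem_filter]; tauto
          · rw [Finset.disjoint_left]; intro q; simp only [Finset.mem_filter]
            rintro ⟨_, h⟩ ⟨_, h'⟩; exact hne (h'.symm.trans h)
        obtain ⟨x, hx, hx'⟩ : ∃ x ∈ X, x ∉ X.filter (fun x => bad x b1) ∪
            X.filter (fun x => bad x b2) := by
          apply Finset.exists_mem_notMem_of_card_lt_card
          have := Finset.card_union_le (X.filter (fun x => bad x b1)) (X.filter (fun x => bad x b2))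
          omega
        simp only [Finset.mem_union, Finset.mem_filter, hx, true_and, not_or] at hx'
        have e1 := BP_lt (bad := bad) (Finset.erase_subset x X) (Finset.erase_subset b1 R) hq
          (Or.inr (by simp))
        have e2 := BP_lt (bad := bad) (Finset.erase_subset x X) (Finset.erase_subset b2 R) hq2
          (Or.inr (by simp))
        exact key x hx b1 hb1 b2 hb2 hne.symm hx'.1 hx'.2 (by omega) (by omega)
      · push Not at h2
        have hpos : 0 < (BP bad X R).card := Finset.card_pos.2 ⟨_, hq⟩
        obtain ⟨a, ha, b, hb, hab⟩ := exists_two_of_two_le (A := R.erase b1)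
          (by rw [Finset.card_erase_of_mem hb1]; omega)
        rw [Finset.mem_erase] at ha hb
        have h3 : ∀ c ∈ R, c ≠ b1 → ¬ bad x0 c := fun c hc hcb h =>
          hcb (h2 x0 c (by rw [mem_BP]; exact ⟨⟨hx0, hc⟩, h⟩))
        have e : ∀ c, (BP bad (X.erase x0) (R.erase c)).card < (BP bad X R).card := fun c =>
          BP_lt (bad := bad) (Finset.erase_subset x0 X) (Finset.erase_subset c R) hq
          (Or.inl (by simp))
        have ea := e a
        have eb := e b
        exact key x0 hx0 a ha.2 b hb.2 hab (h3 a ha.2 ha.1) (h3 b hb.2 hb.1) (by omega) (by omega)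

lemma pick2 {n : ℕ} {bad : Fin n → Fin n → Prop} [DecidableRel bad] {D : ℕ} (X' : Finset (Fin n))
    (hX'c : 2 * D + 2 ≤ X'.card) (k : ℕ) :
    ∀ X R : Finset (Fin n), X.card = k + 1 → R.card = k + 1 → X' ⊆ X →
      (∀ x ∈ X, (R.filter (fun b => bad x b)).card ≤ 2 * D) →
      (∀ b ∈ R, (X.filter (fun x => bad x b)).card ≤ D) →
      (2 * (BP bad X' R).card < X'.card ∨
        (BP bad X' R).card + 2 * D + 1 + X'.card ≤ X.card) → PickWin bad k X R := by
  induction k with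
  | zero =>
    intro X R hX hR hsub _ _ _
    have := Finset.card_le_card hsub
    omega
  | succ k ih =>
    intro X R hX hR hsub hdx hdb hor
    have key : ∀ x ∈ X, x ∉ X' → ∀ a ∈ R, ∀ b ∈ R, a ≠ b → ¬ bad x a → ¬ bad x b →
        (∀ c ∈ R, c = a ∨ c = b → (2 * (BP bad X' (R.erase c)).card < X'.card ∨
          (BP bad X' (R.erase c)).card + 2 * D + 1 + X'.card ≤ k + 1)) →
        PickWin bad (k+1) X R := by
      intro x hx hxX a ha b hb hab h1 h2 h3
      have hXc : (X.erase x).card = k + 1 := by rw [Finset.card_erase_of_mem hx, hX]; rfl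
      have hh : ∀ c ∈ R, c = a ∨ c = b → PickWin bad k (X.erase x) (R.erase c) := by
        intro c hc hcab
        refine ih _ _ hXc ?_ ?_ ?_ ?_ ?_
        · rw [Finset.card_erase_of_mem hc, hR]; rfl
        · intro y hy; rw [Finset.mem_erase]; exact ⟨fun h => hxX (h ▸ hy), hsub hy⟩
        · intro y hy
          exact (Finset.card_le_card (Finset.filter_subset_filter _ (Finset.erase_subset _ _))).trans
            (hdx y (Finset.mem_of_mem_erase hy))
        · intro y hy
          exact (Finset.card_le_card (Finset.filter_subset_filter _ (Finset.erase_subset _ _))).trans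
            (hdb y (Finset.mem_of_mem_erase hy))
        · rw [hXc]; exact h3 c hc hcab
      exact ⟨x, hx, a, ha, b, hb, hab, h1, h2, hh a ha (Or.inl rfl), hh b hb (Or.inr rfl)⟩
    by_cases hE : 2 * (BP bad X' R).card < X'.card
    · by_cases hXX : X' = X
      · subst hXX
        exact pick1 _ _ _ hX hR (by omega)
      · obtain ⟨x, hx, hxX⟩ := Finset.exists_of_ssubset (hsub.ssubset_of_ne hXX)
        have hlt := Finset.card_lt_card (hsub.ssubset_of_ne hXX)
        have hd := hdx x hx
        have hs : (R.filter (fun b => bad x b)).card + (R.filter (fun b => ¬ bad x b)).card =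
          R.card := Finset.card_filter_add_card_filter_not _
        obtain ⟨a, ha, b, hb, hab⟩ := exists_two_of_two_le (A := R.filter (fun b => ¬ bad x b))
          (by omega)
        rw [Finset.mem_filter] at ha hb
        refine key x hx hxX a ha.1 b hb.1 hab ha.2 hb.2 (fun c hc _ => Or.inl ?_)
        have := BP_mono (bad := bad) (le_refl X') (Finset.erase_subset c R)
        omega
    · have hor' := hor.resolve_left hE
      obtain ⟨⟨x0, b1⟩, hq⟩ : (BP bad X' R).Nonempty := by rw [← Finset.card_pos]; omega
      have hb1 := (mem_BP.1 hq).1.2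
      simp only at hb1
      obtain ⟨⟨x2, b2⟩, hq2, hne⟩ : ∃ q ∈ BP bad X' R, q.2 ≠ b1 := by
        by_contra hc
        push Not at hc
        have h1 := bdeg_le_BP (bad := bad) (X := X') hb1
        rw [Finset.filter_true_of_mem hc] at h1
        have h2 : (X'.filter (fun x => bad x b1)).card ≤ (X.filter (fun x => bad x b1)).card :=
          Finset.card_le_card (Finset.filter_subset_filter _ hsub)
        have := hdb b1 hb1
        omega
      have hb2 := (mem_BP.1 hq2).1.2
      simp only at hb2 hne
      obtain ⟨x, hx, hx'⟩ : ∃ x ∈ X, x ∉ X' ∪ (X.filter (fun x => bad x b1) ∪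
          X.filter (fun x => bad x b2)) := by
        apply Finset.exists_mem_notMem_of_card_lt_card
        have a1 := Finset.card_union_le (X.filter (fun x => bad x b1)) (X.filter (fun x => bad x b2))
        have a2 := Finset.card_union_le X' (X.filter (fun x => bad x b1) ∪
          X.filter (fun x => bad x b2))
        have := hdb b1 hb1
        have := hdb b2 hb2
        omega
      simp only [Finset.mem_union, Finset.mem_filter, hx, true_and, not_or] at hx'
      have e1 := BP_lt (bad := bad) (le_refl X') (Finset.erase_subset b1 R) hq
        (Or.inr (by simp))
      have e2 := BP_lt (bad := bad) (le_refl X') (Finset.erase_subset b2 R) hq2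
        (Or.inr (by simp))
      refine key x hx hx'.1 b1 hb1 b2 hb2 hne.symm hx'.2.1 hx'.2.2 ?_
      rintro c hc (rfl | rfl) <;> right <;> omega

lemma swap_base {n : ℕ} {T : SimpleGraph (Fin n)} {v p : Fin n} {l : Fin n → Fin n}
    {φ : Fin n → Fin n} {Cl W : Finset (Sym2 (Fin n))} {x y y' a : Fin n}
    (hlx : ∀ w, T.Adj w (l x) → w = x) (hly : ∀ w, T.Adj w (l y) → w = y)
    (hxy : x ≠ y) (hlxy : l x ≠ l y) (h1 : l x ≠ x) (h2 : l x ≠ y) (h3 : l y ≠ x) (h4 : l y ≠ y)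
    (hlxv : l x ≠ v) (hlyv : l y ≠ v) (hxv : x ≠ v) (hyv : y ≠ v)
    (hinj : ∀ u w, u ≠ l x → w ≠ l x → φ u = φ w → u = w) (hvp : φ v = p)
    (hcl : ∀ u w, u ≠ l x → w ≠ l x → T.Adj u w → s(φ u, φ w) ∈ Cl)
    (ha : ∀ u, u ≠ l x → φ u ≠ a) (hy'l : l y' ≠ l x)
    (hfx : s(φ x, a) ∉ Cl ∪ W) (hfy : s(φ y, a) ∉ Cl ∪ W) :
    Wins T v p 1 (insert s(φ x, φ (l y)) Cl) (insert s(φ x, φ (l y')) W) := by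
  have hax := ha x h1.symm
  have hay := ha y h2.symm
  have haly := ha (l y) hlxy.symm
  have haly' := ha (l y') hy'l
  have hφxy : φ x ≠ φ y := fun h => hxy (hinj x y h1.symm h2.symm h)
  have hpx : p ≠ φ x := fun h => hxv (hinj x v h1.symm hlxv.symm (by rw [← h, hvp]))
  have hpy : p ≠ φ y := fun h => hyv (hinj y v h2.symm hlxv.symm (by rw [← h, hvp]))
  refine Wins.star (x := a) (a := φ x) (b := φ y) hφxy hax.symm hay.symm hpx hpy ?_ ?_ ?_ ?_
  · rw [Sym2.eq_swap]
    simp only [Finset.mem_union, Finset.mem_insert, Sym2.eq_iff, not_or] at hfx ⊢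
    grind
  · rw [Sym2.eq_swap]
    simp only [Finset.mem_union, Finset.mem_insert, Sym2.eq_iff, not_or] at hfy ⊢
    grind
  · refine Wins.of_win (Function.update φ (l x) a) ?_ ?_ ?_
    · intro u w huw
      simp only [Function.update_apply] at huw
      grind
    · rw [Function.update_of_ne hlxv.symm, hvp]
    · intro u w huw
      have c1 := hcl u w
      have c2 : w = l x → u = x := fun h => hlx u (h ▸ huw)
      have c3 : u = l x → w = x := fun h => hlx w (h ▸ huw.symm)
      simp only [Function.update_apply, Finset.mem_insert, Sym2.eq_iff]
      grind
  · refine Wins.of_win (Function.update (Function.update φ (l y) a) (l x) (φ (l y))) ?_ ?_ ?_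
    · intro u w huw
      simp only [Function.update_apply] at huw
      grind
    · rw [Function.update_of_ne hlxv.symm, Function.update_of_ne hlyv.symm, hvp]
    · intro u w huw
      have c1 := hcl u w
      have c2 : w = l x → u = x := fun h => hlx u (h ▸ huw)
      have c3 : u = l x → w = x := fun h => hlx w (h ▸ huw.symm)
      have c4 : w = l y → u = y := fun h => hly u (h ▸ huw)
      have c5 : u = l y → w = y := fun h => hly w (h ▸ huw.symm)
      simp only [Function.update_apply, Finset.mem_insert, Sym2.eq_iff]
      grind

lemma transfer {n : ℕ} {T : SimpleGraph (Fin n)} {v p : Fin n} {l : Fin n → Fin n}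
    {Xs Yh : Finset (Fin n)} {bad : Fin n → Fin n → Prop}
    (hX : ∀ x ∈ Xs, x ≠ v ∧ l x ≠ v ∧ ∀ w, T.Adj w (l x) → w = x)
    (hll : ∀ x ∈ Xs, ∀ y ∈ Xs, l x ≠ y) (hlinj : ∀ x ∈ Xs, ∀ y ∈ Xs, l x = l y → x = y)
    (hYX : Yh ⊆ Xs) (k : ℕ) :
    ∀ (Xr : Finset (Fin n)) (φ : Fin n → Fin n) (Cl W : Finset (Sym2 (Fin n))),
      Xr ⊆ Xs → Disjoint Yh Xr →
      (∀ u w, u ∉ Xr.image l → w ∉ Xr.image l → φ u = φ w → u = w) → φ v = p →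
      (∀ u w, u ∉ Xr.image l → w ∉ Xr.image l → T.Adj u w → s(φ u, φ w) ∈ Cl) →
      (∀ x ∈ Xr, ∀ a ∈ Rm (Finset.univ \ Xr.image l) φ, ¬ bad x a → s(φ x, a) ∉ Cl ∪ W) →
      (∀ x ∈ Xr, ∀ a ∈ Rm (Finset.univ \ Xr.image l) φ, ∃ y1 ∈ Yh, ∃ y2 ∈ Yh, y1 ≠ y2 ∧
        s(φ x, φ (l y1)) ∉ Cl ∪ W ∧ s(φ x, φ (l y2)) ∉ Cl ∪ W ∧
        s(φ y1, a) ∉ Cl ∪ W ∧ s(φ y2, a) ∉ Cl ∪ W) →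
      PickWin bad k Xr (Rm (Finset.univ \ Xr.image l) φ) → Wins T v p (k + 2) Cl W := by
  induction k with
  | zero =>
    intro Xr φ Cl W hXr hdis hinj hvp hcl hbad hswap hpick
    obtain ⟨x, a, rfl, hR, hnb⟩ := hpick
    have haR : a ∈ Rm (Finset.univ \ ({x} : Finset (Fin n)).image l) φ := by rw [hR]; simp
    have hfx := hbad x (by simp) a haR hnb
    obtain ⟨y1, hy1, y2, hy2, h12, f1, f2, f3, f4⟩ := hswap x (by simp) a haR
    simp only [Finset.image_singleton, Finset.mem_singleton] at hinj hcl
    have ha : ∀ u, u ≠ l x → φ u ≠ a := by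
      intro u hu
      exact mem_Rm.1 haR u (by simp [hu])
    have hx : x ∈ Xs := hXr (by simp)
    have hxy : ∀ y ∈ Yh, x ≠ y := fun y hy h =>
      (Finset.disjoint_left.1 hdis hy) (by simp [h])
    have hlxy : ∀ y ∈ Yh, l x ≠ l y := fun y hy h => hxy y hy (hlinj x hx y (hYX hy) h)
    have base : ∀ y ∈ Yh, ∀ y' ∈ Yh, s(φ y, a) ∉ Cl ∪ W →
        Wins T v p 1 (insert s(φ x, φ (l y)) Cl) (insert s(φ x, φ (l y')) W) := by
      intro y hy y' hy' hf
      exact swap_base (hX x hx).2.2 (hX y (hYX hy)).2.2 (hxy y hy) (hlxy y hy) (hll x hx x hx)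
        (hll x hx y (hYX hy)) (hll y (hYX hy) x hx) (hll y (hYX hy) y (hYX hy)) (hX x hx).2.1
        (hX y (hYX hy)).2.1 (hX x hx).1 (hX y (hYX hy)).1 hinj hvp hcl ha (hlxy y' hy').symm hfx hf
    have n1 : ∀ y ∈ Yh, φ x ≠ φ (l y) := fun y hy h =>
      hll y (hYX hy) x hx (hinj x (l y) (hll x hx x hx).symm (hlxy y hy).symm h).symm
    have n2 : ∀ y ∈ Yh, p ≠ φ (l y) := fun y hy h =>
      (hX y (hYX hy)).2.1 (hinj v (l y) (hX x hx).2.1.symm (hlxy y hy).symm (hvp.trans h)).symm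
    refine Wins.star ?_ (n1 y1 hy1) (n1 y2 hy2) (n2 y1 hy1) (n2 y2 hy2) f1 f2
      (base y1 hy1 y2 hy2 f3) (base y2 hy2 y1 hy1 f4)
    intro h
    exact h12 (hlinj _ (hYX hy1) _ (hYX hy2) (hinj _ _ (hlxy y1 hy1).symm (hlxy y2 hy2).symm h))
  | succ k ih =>
    intro Xr φ Cl W hXr hdis hinj hvp hcl hbad hswap hpick
    obtain ⟨x, hx, a, ha, b, hb, hab, hna, hnb, hp1, hp2⟩ := hpick
    have hnl : ∀ z ∈ Xs, z ∉ Xr.image l := by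
      intro z hz h
      rw [Finset.mem_image] at h
      obtain ⟨w, hw, hwz⟩ := h
      exact hll w (hXr hw) z hz hwz
    have hnlY : ∀ y ∈ Yh, l y ∉ Xr.image l := by
      intro y hy h
      rw [Finset.mem_image] at h
      obtain ⟨w, hw, hwz⟩ := h
      exact Finset.disjoint_left.1 hdis hy (hlinj w (hXr hw) y (hYX hy) hwz ▸ hw)
    have hvl : v ∉ Xr.image l := by
      intro h
      rw [Finset.mem_image] at h
      obtain ⟨w, hw, hwz⟩ := h
      exact (hX w (hXr hw)).2.1 hwz
    have hR : ∀ a ∈ Rm (Finset.univ \ Xr.image l) φ, ∀ u, u ∉ Xr.image l → φ u ≠ a :=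
      fun a ha u hu => mem_Rm.1 ha u (by simpa using hu)
    have hxs := hXr hx
    have hxl := hnl x hxs
    have hlx : l x ∈ Xr.image l := Finset.mem_image_of_mem _ hx
    have himg : (Xr.erase x).image l = (Xr.image l).erase (l x) := by
      ext u
      simp only [Finset.mem_image, Finset.mem_erase]
      constructor
      · rintro ⟨w, ⟨h1, h2⟩, rfl⟩
        exact ⟨fun h => h1 (hlinj w (hXr h2) x hxs h), w, h2, rfl⟩
      · rintro ⟨h1, w, h2, rfl⟩
        exact ⟨w, ⟨fun h => h1 (by rw [h]), h2⟩, rfl⟩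
    have hmem : ∀ u, u ∉ (Xr.erase x).image l ↔ (u = l x ∨ u ∉ Xr.image l) := by
      intro u; rw [himg, Finset.mem_erase]; tauto
    have key : ∀ a ∈ Rm (Finset.univ \ Xr.image l) φ, ∀ b ∈ Rm (Finset.univ \ Xr.image l) φ,
        a ≠ b → PickWin bad k (Xr.erase x) ((Rm (Finset.univ \ Xr.image l) φ).erase a) →
        Wins T v p (k+2) (insert s(φ x, a) Cl) (insert s(φ x, b) W) := by
      intro a ha b hb hab hp
      have hS : Finset.univ \ (Xr.erase x).image l = insert (l x) (Finset.univ \ Xr.image l) := by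
        ext u
        have := hmem u
        simp only [Finset.mem_sdiff, Finset.mem_univ, true_and, Finset.mem_insert]
        exact this
      have hRm : Rm (Finset.univ \ (Xr.erase x).image l) (Function.update φ (l x) a) =
          (Rm (Finset.univ \ Xr.image l) φ).erase a := by
        rw [hS, Rm_insert (fun h => (Finset.mem_sdiff.1 h).2 hlx)]
      have hup : ∀ u, u ∉ Xr.image l → Function.update φ (l x) a u = φ u := by
        intro u hu
        rw [Function.update_of_ne]
        rintro rfl; exact hu hlx
      have hra := hR a ha
      have hrb := hR b hb
      apply ih (Xr.erase x) (Function.update φ (l x) a)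
      · exact (Finset.erase_subset _ _).trans hXr
      · exact hdis.mono_right (Finset.erase_subset _ _)
      · intro u w hu hw huw
        rw [hmem] at hu hw
        simp only [Function.update_apply] at huw
        have := hinj u w
        grind
      · rw [hup v hvl, hvp]
      · intro u w hu hw huw
        rw [hmem] at hu hw
        have c1 := hcl u w
        have c2 : w = l x → u = x := fun h => (hX x hxs).2.2 u (h ▸ huw)
        have c3 : u = l x → w = x := fun h => (hX x hxs).2.2 w (h ▸ huw.symm)
        have c4 := hll x hxs x hxs
        simp only [Function.update_apply, Finset.mem_insert, Sym2.eq_iff]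
        grind
      · intro x' hx' a' ha' hnb
        rw [hRm, Finset.mem_erase] at ha'
        rw [Finset.mem_erase] at hx'
        rw [hup x' (hnl x' (hXr hx'.2))]
        have h1 := hbad x' hx'.2 a' ha'.2 hnb
        have h2 : φ x' ≠ φ x := fun h => hx'.1 (hinj _ _ (hnl x' (hXr hx'.2)) hxl h)
        have h3 := hra x' (hnl x' (hXr hx'.2))
        have h4 := hrb x' (hnl x' (hXr hx'.2))
        simp only [Finset.mem_union, Finset.mem_insert, Sym2.eq_iff, not_or] at h1 ⊢
        grind
      · intro x' hx' a' ha'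
        rw [hRm, Finset.mem_erase] at ha'
        rw [Finset.mem_erase] at hx'
        rw [hup x' (hnl x' (hXr hx'.2))]
        obtain ⟨y1, hy1, y2, hy2, h12, f1, f2, f3, f4⟩ := hswap x' hx'.2 a' ha'.2
        have hra' := hR a' ha'.2
        have g1 : ∀ y ∈ Yh, s(φ x', φ (l y)) ∉ Cl ∪ W → s(φ x', φ (l y)) ∉
            insert s(φ x, a) Cl ∪ insert s(φ x, b) W := by
          intro y hy h1
          have h3 := hra x' (hnl x' (hXr hx'.2))
          have h4 := hrb x' (hnl x' (hXr hx'.2))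
          have h5 := hra (l y) (hnlY y hy)
          have h6 := hrb (l y) (hnlY y hy)
          simp only [Finset.mem_union, Finset.mem_insert, Sym2.eq_iff, not_or] at h1 ⊢
          grind
        have g2 : ∀ y ∈ Yh, s(φ y, a') ∉ Cl ∪ W → s(φ y, a') ∉
            insert s(φ x, a) Cl ∪ insert s(φ x, b) W := by
          intro y hy h1
          have h2 : φ y ≠ φ x := fun h => by
            have := hinj _ _ (hnl y (hYX hy)) hxl h
            subst this
            exact Finset.disjoint_left.1 hdis hy hx
          have h3 := hra y (hnl y (hYX hy))
          have h4 := hrb y (hnl y (hYX hy))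
          simp only [Finset.mem_union, Finset.mem_insert, Sym2.eq_iff, not_or] at h1 ⊢
          grind
        refine ⟨y1, hy1, y2, hy2, h12, ?_, ?_, ?_, ?_⟩
        · rw [hup _ (hnlY y1 hy1)]; exact g1 y1 hy1 f1
        · rw [hup _ (hnlY y2 hy2)]; exact g1 y2 hy2 f2
        · rw [hup _ (hnl y1 (hYX hy1))]; exact g2 y1 hy1 f3
        · rw [hup _ (hnl y2 (hYX hy2))]; exact g2 y2 hy2 f4
      · rw [hRm]; exact hp
    refine Wins.star hab (hR a ha x hxl) (hR b hb x hxl) ?_ ?_ (hbad x hx a ha hna)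
      (hbad x hx b hb hnb) (key a ha b hb hab hp1) (key b hb a ha hab.symm hp2)
    · rw [← hvp]; exact hR a ha v hvl
    · rw [← hvp]; exact hR b hb v hvl

lemma caseB {n : ℕ} {T : SimpleGraph (Fin n)} [DecidableRel T.Adj] {v p : Fin n}
    {par : Fin n → Fin n} {dep : Fin n → ℕ} (hR : Rooted T v par dep) {D d q : ℕ}
    (hD : n < 2 ^ (D+1))
    (hdv : 2 * (Finset.univ.filter (fun w => T.Adj v w)).card + 2 * D + 3 ≤ n)
    (hdx : ∀ x, x ≠ v → (Finset.univ.filter (fun w => T.Adj x w)).card ≤ d)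
    {X : Finset (Fin n)} (hXc : X.card = 2 * q) {l : Fin n → Fin n}
    (hX : ∀ x ∈ X, x ≠ v ∧ l x ≠ v ∧ par (l x) = x ∧ ∀ z, z ≠ v → par z ≠ l x)
    (hq1 : 2 * D + 2 + d ≤ q) (hq2 : 2 * D * (2 * D + 2) + 2 * D + 1 + (2 * D + 2) ≤ q)
    (hXv : ∀ x ∈ X, ¬ T.Adj v (l x)) :
    Wins T v p n ∅ ∅ := by
  classical
  have hlinj : ∀ x ∈ X, ∀ y ∈ X, l x = l y → x = y := by
    intro x hx y hy h
    rw [← (hX x hx).2.2.1, ← (hX y hy).2.2.1, h]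
  have hll : ∀ x ∈ X, ∀ y ∈ X, l x ≠ y := by
    intro x hx y hy h
    exact (hX x hx).2.2.2 (l y) (hX y hy).2.1 (by rw [(hX y hy).2.2.1, h])
  have hladj : ∀ x ∈ X, ∀ w, T.Adj w (l x) → w = x := by
    intro x hx w hw
    rw [hR.adj] at hw
    rcases hw with ⟨_, h⟩ | ⟨h, h'⟩
    · rw [← h, (hX x hx).2.2.1]
    · exact absurd h' ((hX x hx).2.2.2 w h)
  have hcard : ∀ X' ⊆ X, (Finset.univ \ X'.image l).card + X'.card = n := by
    intro X' hX'
    have h1 := Finset.card_sdiff_add_card_eq_card (Finset.subset_univ (X'.image l))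
    rw [Finset.card_image_of_injOn (fun x hx y hy h => hlinj x (hX' hx) y (hX' hy) h)] at h1
    simpa using h1
  set N := Finset.univ.filter (fun w => T.Adj v w) with hN
  have hvN : v ∉ N := by simp [hN]
  have hNpar : ∀ w, w ∈ N ↔ w ≠ v ∧ par w = v := by
    intro w
    simp only [hN, Finset.mem_filter, Finset.mem_univ, true_and, hR.adj]
    constructor
    · rintro (h | ⟨h, _⟩)
      · exact h
      · exact absurd rfl h
    · exact Or.inl
  set S1 := Finset.univ \ X.image l with hS1
  have hvS : ∀ X' ⊆ X, v ∈ Finset.univ \ X'.image l := by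
    intro X' hX'
    simp only [Finset.mem_sdiff, Finset.mem_univ, true_and, Finset.mem_image, not_exists, not_and]
    intro x hx; exact (hX x (hX' hx)).2.1
  have hpS : ∀ X' ⊆ X, ∀ y, y ≠ v → par y ∈ Finset.univ \ X'.image l := by
    intro X' hX' y hy
    simp only [Finset.mem_sdiff, Finset.mem_univ, true_and, Finset.mem_image, not_exists, not_and]
    intro x hx; exact fun h => (hX x (hX' hx)).2.2.2 y hy h.symm
  have hXS : ∀ X' ⊆ X, ∀ x ∈ X, x ∈ Finset.univ \ X'.image l := by
    intro X' hX' y hy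
    simp only [Finset.mem_sdiff, Finset.mem_univ, true_and, Finset.mem_image, not_exists, not_and]
    intro x hx; exact hll x (hX' hx) y hy
  have hadjp : ∀ y, y ≠ v → T.Adj (par y) y := fun y hy => (hR.adj _ _).2 (Or.inl ⟨hy, rfl⟩)
  have hcN : (insert v N).card = N.card + 1 := Finset.card_insert_of_notMem hvN
  have hc1 : S1.card + X.card = n := hcard X le_rfl
  have hNS1 : insert v N ⊆ S1 := by
    intro w hw
    rw [Finset.mem_insert] at hw
    rcases hw with rfl | hw
    · exact hvS X le_rfl
    · simp only [hS1, Finset.mem_sdiff, Finset.mem_univ, true_and, Finset.mem_image, not_exists,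
        not_and]
      rintro x hx rfl
      exact hXv x hx (by simpa [hN] using hw)
  have hc1' := Finset.card_le_card hNS1
  -- phase 1
  suffices h : Wins T v p (((q + 1 + q) + (S1.card - (insert v N).card)) +
      ((insert v N).card - ({v} : Finset (Fin n)).card)) ∅ ∅ by
    refine Wins.mono ?_ h
    rw [Finset.card_singleton]
    omega
  refine GInv.greedy (par := par) (dep := dep) hD (S0 := {v}) (S1 := insert v N) (by simp) ?_ ?_
    (GInv.init T v p D) ?_
  · intro y hy hy0
    simp only [Finset.mem_insert, Finset.mem_singleton] at hy hy0
    have hyN := hy.resolve_left hy0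
    refine ⟨by rw [((hNpar y).1 hyN).2]; simp, hadjp y hy0, hR.lt y hy0, ?_⟩
    rw [((hNpar y).1 hyN).2, hcN, ← hN]
    omega
  · intro y hy hy0 w hw hwy
    rw [hR.adj] at hwy
    rcases hwy with h | h
    · exact Or.inl h.2.symm
    · exact Or.inr ⟨by simpa using h.1, h.2⟩
  intro φ0 Cl0 W0 hI0 _ _
  -- phase 2
  refine GInv.greedy (par := par) (dep := dep) hD (S0 := insert v N) (S1 := S1) hNS1 ?_ ?_ hI0 ?_
  · intro y hy hy0
    simp only [Finset.mem_insert, not_or, hNpar] at hy0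
    refine ⟨hpS X le_rfl y hy0.1, hadjp y hy0.1, hR.lt y hy0.1, ?_⟩
    have := hdx (par y) (fun h => hy0.2 ⟨hy0.1, h⟩)
    omega
  · intro y hy hy0 w hw hwy
    rw [hR.adj] at hwy
    rcases hwy with h | h
    · exact Or.inl h.2.symm
    · refine Or.inr ⟨?_, h.2⟩
      simp only [Finset.mem_insert, not_or, hNpar] at hy0 ⊢
      exact ⟨h.1, fun h' => hy0.1 (h.2.symm.trans h'.2)⟩
  intro φ1 Cl1 W1 hI1 _ _
  -- choose the heavy half
  set R1 := Rm S1 φ1 with hR1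
  have hR1c : R1.card = 2 * q := by
    rw [hR1, card_Rm hI1.inj]; omega
  have hφX : Set.InjOn φ1 (X : Set (Fin n)) := by
    intro x hx y hy h
    exact hI1.inj (hXS X le_rfl x hx) (hXS X le_rfl y hy) h
  have hbc : ∀ b ∈ R1, (X.filter (fun x => s(φ1 x, b) ∈ W1)).card ≤ D := by
    intro b hb
    refine le_trans ?_ (hI1.wdeg_le hD hb)
    apply card_le_wdeg W1 b _ φ1
    · exact hφX.mono (by intro x hx; exact (Finset.mem_filter.1 hx).1)
    · intro x hx; rw [Sym2.eq_swap]; exact (Finset.mem_filter.1 hx).2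
  set Hi := X.filter (fun x => 2 * D + 1 ≤ (R1.filter (fun b => s(φ1 x, b) ∈ W1)).card) with hHi
  have hHic : Hi.card ≤ q := by
    have h1 : ∑ x ∈ X, (R1.filter (fun b => s(φ1 x, b) ∈ W1)).card ≤ 2 * q * D := by
      have : ∑ x ∈ X, (R1.filter (fun b => s(φ1 x, b) ∈ W1)).card =
          ∑ b ∈ R1, (X.filter (fun x => s(φ1 x, b) ∈ W1)).card :=
        Finset.sum_card_bipartiteAbove_eq_sum_card_bipartiteBelow _
      rw [this]
      refine (Finset.sum_le_sum hbc).trans ?_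
      rw [Finset.sum_const, hR1c, smul_eq_mul]
    have h2 : Hi.card * (2 * D + 1) ≤ ∑ x ∈ X, (R1.filter (fun b => s(φ1 x, b) ∈ W1)).card := by
      calc Hi.card * (2 * D + 1) = ∑ x ∈ Hi, (2 * D + 1) := by
            rw [Finset.sum_const, smul_eq_mul]
        _ ≤ ∑ x ∈ Hi, (R1.filter (fun b => s(φ1 x, b) ∈ W1)).card := by
            apply Finset.sum_le_sum
            intro x hx
            exact (Finset.mem_filter.1 hx).2
        _ ≤ _ := Finset.sum_le_sum_of_subset (Finset.filter_subset _ _)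
    by_contra hc
    push Not at hc
    have h3 : (q + 1) * (2 * D + 1) ≤ Hi.card * (2 * D + 1) := Nat.mul_le_mul_right _ hc
    nlinarith
  obtain ⟨Yh, hHY, hYX, hYc⟩ := Finset.exists_subsuperset_card_eq (Finset.filter_subset _ _) hHic
    (by omega : q ≤ X.card)
  set Xl := X \ Yh with hXl
  have hXlX : Xl ⊆ X := Finset.sdiff_subset
  have hXlc : Xl.card = q := by
    rw [hXl, Finset.card_sdiff_of_subset hYX]; omega
  set S2 := Finset.univ \ Xl.image l with hS2
  have hc2 : S2.card + Xl.card = n := hcard Xl hXlX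
  have hS12 : S1 ⊆ S2 := Finset.sdiff_subset_sdiff le_rfl (Finset.image_subset_image hXlX)
  have hnew : ∀ y ∈ S2, y ∉ S1 → ∃ x ∈ Yh, y = l x := by
    intro y hy hy1
    simp only [hS2, Finset.mem_sdiff, Finset.mem_univ, true_and, Finset.mem_image, not_exists,
      not_and] at hy
    simp only [hS1, Finset.mem_sdiff, Finset.mem_univ, true_and, Finset.mem_image, not_not] at hy1
    obtain ⟨x, hx, rfl⟩ := hy1
    refine ⟨x, ?_, rfl⟩
    by_contra hc
    exact hy x (by simp [hXl, hx, hc]) rfl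
  -- phase 3
  have hcq : S2.card - S1.card = q := by omega
  rw [show q + 1 + q = q + 1 + (S2.card - S1.card) by rw [hcq]]
  refine GInv.greedy (par := par) (dep := dep) hD (S0 := S1) (S1 := S2) hS12 ?_ ?_ hI1 ?_
  · intro y hy hy1
    obtain ⟨x, hx, rfl⟩ := hnew y hy hy1
    have hxX := hX x (hYX hx)
    refine ⟨hpS Xl hXlX _ hxX.2.1, hadjp _ hxX.2.1, hR.lt _ hxX.2.1, ?_⟩
    rw [hxX.2.2.1]
    have := hdx x hxX.1
    omega
  · intro y hy hy1 w hw hwy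
    obtain ⟨x, hx, rfl⟩ := hnew y hy hy1
    left
    rw [(hX x (hYX hx)).2.2.1]
    exact hladj x (hYX hx) w hwy
  intro φ2 Cl2 W2 hI2 hφ2 hW2
  set R2 := Rm S2 φ2 with hR2
  have hR2c : R2.card = q := by
    rw [hR2, card_Rm hI2.inj]; omega
  have hR21 : R2 ⊆ R1 := by
    intro b hb
    rw [hR2, mem_Rm] at hb
    rw [hR1, mem_Rm]
    intro x hx
    rw [← hφ2 x hx]; exact hb x (hS12 hx)
  have hXlS : ∀ x ∈ X, x ∈ S1 := fun x hx => hXS X le_rfl x hx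
  have hdegx : ∀ x ∈ Xl, (R2.filter (fun b => s(φ2 x, b) ∈ W2)).card ≤ 2 * D := by
    intro x hx
    have hxX := hXlX hx
    have hxY : x ∉ Yh := (Finset.mem_sdiff.1 hx).2
    have h1 : (R1.filter (fun b => s(φ1 x, b) ∈ W1)).card ≤ 2 * D := by
      by_contra hc
      apply hxY
      apply hHY
      rw [Finset.mem_filter]
      exact ⟨hxX, by omega⟩
    refine le_trans (Finset.card_le_card ?_) h1
    intro b hb
    rw [Finset.mem_filter] at hb ⊢
    refine ⟨hR21 hb.1, ?_⟩
    rw [← hφ2 x (hXlS x hxX)]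
    refine hW2 x (hXlS x hxX) ?_ _ hb.2 ?_
    · intro y hy hy1
      obtain ⟨z, hz, rfl⟩ := hnew y hy hy1
      rw [(hX z (hYX hz)).2.2.1]
      rintro rfl; exact hxY hz
    · rw [hφ2 x (hXlS x hxX)]; simp
  have hφX2 : Set.InjOn φ2 (X : Set (Fin n)) := by
    intro x hx y hy h
    exact hI2.inj (hS12 (hXlS x hx)) (hS12 (hXlS y hy)) h
  have hdegb : ∀ b ∈ R2, ∀ A ⊆ X, (A.filter (fun x => s(φ2 x, b) ∈ W2)).card ≤ D := by
    intro b hb A hA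
    refine le_trans ?_ (hI2.wdeg_le hD hb)
    apply card_le_wdeg W2 b _ φ2
    · exact hφX2.mono (by intro x hx; exact hA (Finset.mem_filter.1 hx).1)
    · intro x hx; rw [Sym2.eq_swap]; exact (Finset.mem_filter.1 hx).2
  obtain ⟨X', hX'X, hX'c⟩ := Finset.exists_subset_card_eq
    (show 2 * D + 2 ≤ Xl.card by omega)
  have hE : (BP (fun x b => s(φ2 x, b) ∈ W2) X' R2).card ≤ 2 * D * (2 * D + 2) := by
    unfold BP
    have : ((X' ×ˢ R2).filter (fun q => s(φ2 q.1, q.2) ∈ W2)).card =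
        ∑ x ∈ X', (R2.filter (fun b => s(φ2 x, b) ∈ W2)).card := by
      simp only [Finset.card_filter, Finset.sum_product]
    rw [this]
    refine (Finset.sum_le_sum (fun x hx => hdegx x (hX'X hx))).trans ?_
    rw [Finset.sum_const, hX'c, smul_eq_mul, mul_comm]
  have hpick : PickWin (fun x b => s(φ2 x, b) ∈ W2) (q-1) Xl R2 := by
    refine pick2 (D := D) X' (by omega) (q-1) Xl R2 (by omega) (by omega) hX'X hdegx
      (fun b hb => hdegb b hb Xl hXlX) (Or.inr ?_)
    rw [hX'c, hXlc]
    omega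
  have hfin : Wins T v p (q - 1 + 2) Cl2 W2 := by
    refine transfer (l := l) (Xs := X) (Yh := Yh) (bad := fun x b => s(φ2 x, b) ∈ W2)
      (fun x hx => ⟨(hX x hx).1, (hX x hx).2.1, hladj x hx⟩) hll hlinj hYX (q-1) Xl φ2 Cl2 W2
      hXlX Finset.disjoint_sdiff ?_ hI2.vp ?_ ?_ ?_ hpick
    · intro u w hu hw h
      exact hI2.inj (by simpa [hS2] using hu) (by simpa [hS2] using hw) h
    · intro u w hu hw h
      rw [hI2.cl]
      exact ⟨u, by simpa [hS2] using hu, w, by simpa [hS2] using hw, h, rfl⟩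
    · intro x hx a ha hnb
      rw [Finset.mem_union, not_or]
      exact ⟨hI2.not_cl ha _, hnb⟩
    · intro x hx a ha
      have hxX := hXlX hx
      have hxS2 := hS12 (hXlS x hxX)
      have hlS2 : ∀ y ∈ Yh, l y ∈ S2 := by
        intro y hy
        simp only [hS2, Finset.mem_sdiff, Finset.mem_univ, true_and, Finset.mem_image, not_exists,
          not_and]
        intro z hz h
        have := hlinj z (hXlX hz) y (hYX hy) h
        subst this
        exact (Finset.mem_sdiff.1 hz).2 hy
      have e1 : (Yh.filter (fun y => s(φ2 x, φ2 (l y)) ∈ W2)).card ≤ D + d := by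
        have h1 : (Yh.filter (fun y => s(φ2 x, φ2 (l y)) ∈ W2)).card ≤ wdeg W2 (φ2 x) := by
          apply card_le_wdeg W2 (φ2 x) _ (fun y => φ2 (l y))
          · intro y hy z hz h
            have hy' := (Finset.mem_filter.1 hy).1
            have hz' := (Finset.mem_filter.1 hz).1
            exact hlinj y (hYX hy') z (hYX hz') (hI2.inj (hlS2 y hy') (hlS2 z hz') h)
          · intro y hy; exact (Finset.mem_filter.1 hy).2
        have h2 := hI2.wdegS x hxS2
        have h3 := hdx x (hX x hxX).1
        have h4 : (S2.filter (fun y => T.Adj x y)).card ≤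
            (Finset.univ.filter (fun y => T.Adj x y)).card :=
          Finset.card_le_card (Finset.filter_subset_filter _ (Finset.subset_univ _))
        omega
      have e2 := hdegb a ha Yh hYX
      have e3 : 2 ≤ (Yh \ (Yh.filter (fun y => s(φ2 x, φ2 (l y)) ∈ W2) ∪
          Yh.filter (fun x => s(φ2 x, a) ∈ W2))).card := by
        have h1 := Finset.card_le_card_sdiff_add_card (s := Yh)
          (t := Yh.filter (fun y => s(φ2 x, φ2 (l y)) ∈ W2) ∪
          Yh.filter (fun x => s(φ2 x, a) ∈ W2))
        have h2 := Finset.card_union_le (Yh.filter (fun y => s(φ2 x, φ2 (l y)) ∈ W2))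
          (Yh.filter (fun x => s(φ2 x, a) ∈ W2))
        omega
      obtain ⟨y1, hy1, y2, hy2, h12⟩ := exists_two_of_two_le e3
      simp only [Finset.mem_sdiff, Finset.mem_union, Finset.mem_filter, not_or, not_and] at hy1 hy2
      have hncl : ∀ y ∈ Yh, s(φ2 x, φ2 (l y)) ∉ Cl2 := by
        intro y hy h
        rw [hI2.cl] at h
        obtain ⟨u, hu, w, hw, huw, he⟩ := h
        simp only [Sym2.eq_iff] at he
        have hxl : T.Adj x (l y) := by
          rcases he with ⟨h1, h2⟩ | ⟨h1, h2⟩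
          · rw [hI2.inj hxS2 hu h1, hI2.inj (hlS2 y hy) hw h2]; exact huw
          · rw [hI2.inj hxS2 hw h1, hI2.inj (hlS2 y hy) hu h2]; exact huw.symm
        have := hladj y (hYX hy) x hxl
        subst this
        exact (Finset.mem_sdiff.1 hx).2 hy
      refine ⟨y1, hy1.1, y2, hy2.1, h12, ?_, ?_, ?_, ?_⟩ <;> rw [Finset.mem_union, not_or]
      · exact ⟨hncl y1 hy1.1, hy1.2.1 hy1.1⟩
      · exact ⟨hncl y2 hy2.1, hy2.2.1 hy2.1⟩
      · exact ⟨hI2.not_cl ha _, hy1.2.2 hy1.1⟩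
      · exact ⟨hI2.not_cl ha _, hy2.2.2 hy2.1⟩
  refine Wins.mono ?_ hfin
  omega

/-- a bare path `c 0, …, c m` in the tree -/
structure Bare {n : ℕ} (T : SimpleGraph (Fin n)) (v : Fin n) (c : ℕ → Fin n) (m : ℕ) : Prop where
  inj : ∀ i j, i ≤ m → j ≤ m → c i = c j → i = j
  ne : ∀ j, j ≤ m → c j ≠ v
  adj : ∀ j, j < m → T.Adj (c j) (c (j+1))
  nbr : ∀ j, 1 ≤ j → j < m → ∀ w, T.Adj (c j) w → w = c (j-1) ∨ w = c (j+1)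

lemma Bare.win_rot {n : ℕ} {T : SimpleGraph (Fin n)} {v p : Fin n} {c : ℕ → Fin n} {m : ℕ}
    (hB : Bare T v c m) {t i : ℕ} (hi : 4 ≤ i) (him : i < m) {σ : Fin n → Fin n}
    {Cl W : Finset (Sym2 (Fin n))} (hσ : Function.Injective σ) (hv : σ v = p)
    (hcl : ∀ x y, T.Adj x y → s(x, y) ≠ s(c 1, c 2) → s(σ x, σ y) ∈ Cl)
    (h1 : s(σ (c 2), σ (c i)) ∈ Cl) (h2 : s(σ (c 1), σ (c (i-1))) ∈ Cl) :
    Wins T v p t Cl W := by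
  classical
  have hex : ∀ x, ∃ y, (∀ j, 2 ≤ j → j < i → c j = x → y = c (i+1-j)) ∧
      ((∀ j, 2 ≤ j → j < i → c j ≠ x) → y = x) := by
    intro x
    by_cases h : ∃ j, 2 ≤ j ∧ j < i ∧ c j = x
    · obtain ⟨j, hj1, hj2, rfl⟩ := h
      refine ⟨c (i+1-j), ?_, ?_⟩
      · intro k hk1 hk2 hk
        rw [hB.inj k j (by omega) (by omega) hk]
      · intro h; exact absurd rfl (h j hj1 hj2)
    · push Not at h
      exact ⟨x, fun j h1 h2 h3 => absurd h3 (h j h1 h2), fun _ => rfl⟩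
  choose ρ hρ1 hρ2 using hex
  have hρc : ∀ j, 2 ≤ j → j < i → ρ (c j) = c (i+1-j) := fun j a b => hρ1 _ j a b rfl
  have hne12 : ∀ j k, 2 ≤ j → 2 ≤ k → j ≤ m → k ≤ m → s(c j, c k) ≠ s(c 1, c 2) := by
    intro j k hj hk hjm hkm h
    simp only [Sym2.eq_iff] at h
    rcases h with ⟨h, _⟩ | ⟨_, h⟩
    · have := hB.inj j 1 hjm (by omega) h; omega
    · have := hB.inj k 1 hkm (by omega) h; omega
  have key : ∀ j, 2 ≤ j → j < i → ∀ y, T.Adj (c j) y → s(σ (ρ (c j)), σ (ρ y)) ∈ Cl := by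
    intro j hj1 hj2 y hy
    rw [hρc j hj1 hj2]
    rcases hB.nbr j (by omega) (by omega) y hy with rfl | rfl
    · by_cases hj : j = 2
      · subst hj
        have : ρ (c (2-1)) = c 1 := hρ2 _ (fun k hk1 hk2 h => by
          have := hB.inj k (2-1) (by omega) (by omega) h; omega)
        rw [this, Sym2.eq_swap, show i + 1 - 2 = i - 1 by omega]
        exact h2
      · rw [hρc (j-1) (by omega) (by omega)]
        apply hcl
        · have := hB.adj (i+1-j) (by omega)
          rwa [show i + 1 - j + 1 = i + 1 - (j-1) by omega] at this
        · apply hne12 <;> omega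
    · by_cases hj : j = i - 1
      · subst hj
        have : ρ (c (i-1+1)) = c i := by
          rw [show i - 1 + 1 = i by omega]
          exact hρ2 _ (fun k hk1 hk2 h => by
            have := hB.inj k i (by omega) (by omega) h; omega)
        rw [this, show i + 1 - (i-1) = 2 by omega]
        exact h1
      · rw [hρc (j+1) (by omega) (by omega)]
        apply hcl
        · have := hB.adj (i+1-(j+1)) (by omega)
          rw [show i + 1 - (j+1) + 1 = i + 1 - j by omega] at this
          exact this.symm
        · apply hne12 <;> omega
  refine Wins.of_win (σ ∘ ρ) (hσ.comp ?_) ?_ ?_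
  · intro x y hxy
    by_cases hx : ∃ j, 2 ≤ j ∧ j < i ∧ c j = x
    · obtain ⟨j, hj1, hj2, rfl⟩ := hx
      rw [hρc j hj1 hj2] at hxy
      by_cases hy : ∃ k, 2 ≤ k ∧ k < i ∧ c k = y
      · obtain ⟨k, hk1, hk2, rfl⟩ := hy
        rw [hρc k hk1 hk2] at hxy
        have := hB.inj _ _ (by omega) (by omega) hxy
        rw [show j = k by omega]
      · push Not at hy
        rw [hρ2 y hy] at hxy
        exact absurd hxy (hy (i+1-j) (by omega) (by omega))
    · push Not at hx
      rw [hρ2 x hx] at hxy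
      by_cases hy : ∃ k, 2 ≤ k ∧ k < i ∧ c k = y
      · obtain ⟨k, hk1, hk2, rfl⟩ := hy
        rw [hρc k hk1 hk2] at hxy
        exact absurd hxy.symm (hx (i+1-k) (by omega) (by omega))
      · push Not at hy
        rwa [hρ2 y hy] at hxy
  · rw [Function.comp_apply, hρ2 v (fun j _ h => hB.ne j (by omega)), hv]
  · intro x y hxy
    by_cases hx : ∃ j, 2 ≤ j ∧ j < i ∧ c j = x
    · obtain ⟨j, hj1, hj2, rfl⟩ := hx
      exact key j hj1 hj2 y hxy
    · by_cases hy : ∃ j, 2 ≤ j ∧ j < i ∧ c j = y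
      · obtain ⟨j, hj1, hj2, rfl⟩ := hy
        rw [Sym2.eq_swap]
        exact key j hj1 hj2 x hxy.symm
      · push Not at hx hy
        rw [Function.comp_apply, Function.comp_apply, hρ2 x hx, hρ2 y hy]
        apply hcl x y hxy
        intro h
        simp only [Sym2.eq_iff] at h
        rcases h with ⟨_, h⟩ | ⟨h, _⟩
        · exact hy 2 le_rfl (by omega) h.symm
        · exact hx 2 le_rfl (by omega) h.symm

/-- last two rounds -/
lemma Bare.win_two {n : ℕ} {T : SimpleGraph (Fin n)} {v p : Fin n} {c : ℕ → Fin n} {m : ℕ}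
    (hB : Bare T v c m) {i i' : ℕ} (hi : 4 ≤ i) (him : i < m) (hi' : 4 ≤ i') (him' : i' < m)
    (hii : i ≠ i') {σ : Fin n → Fin n}
    {Cl W : Finset (Sym2 (Fin n))} (hσ : Function.Injective σ) (hv : σ v = p)
    (hcl : ∀ x y, T.Adj x y → s(x, y) ≠ s(c 1, c 2) → s(σ x, σ y) ∈ Cl)
    (f0 : s(σ (c 1), σ (c 2)) ∉ Cl ∪ W)
    (f1 : s(σ (c 2), σ (c i)) ∉ Cl ∪ W) (f2 : s(σ (c 2), σ (c i')) ∉ Cl ∪ W)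
    (f3 : s(σ (c 1), σ (c (i-1))) ∉ Cl ∪ W) (f4 : s(σ (c 1), σ (c (i'-1))) ∉ Cl ∪ W) :
    Wins T v p 2 Cl W := by
  have hne : ∀ j k, j ≤ m → k ≤ m → j ≠ k → σ (c j) ≠ σ (c k) := by
    intro j k hj hk hjk h
    exact hjk (hB.inj j k hj hk (hσ h))
  have hp : ∀ j, j ≤ m → p ≠ σ (c j) := by
    intro j hj h
    rw [← hv] at h
    exact hB.ne j hj (hσ h).symm
  have key : ∀ i i', 4 ≤ i → i < m → 4 ≤ i' → i' < m → i ≠ i' →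
      s(σ (c 1), σ (c (i-1))) ∉ Cl ∪ W →
      Wins T v p 1 (insert s(σ (c 2), σ (c i)) Cl) (insert s(σ (c 2), σ (c i')) W) := by
    intro i i' hi him hi' him' hii f
    have n1 := hne 1 2 (by omega) (by omega) (by omega)
    have n2 := hne 1 i (by omega) (by omega) (by omega)
    have n3 := hne 1 i' (by omega) (by omega) (by omega)
    have n4 := hne (i-1) 2 (by omega) (by omega) (by omega)
    refine Wins.star (x := σ (c 1)) (a := σ (c 2)) (b := σ (c (i-1)))
      n4.symm n1
      (hne _ _ (by omega) (by omega) (by omega)) (hp _ (by omega)) (hp _ (by omega)) ?_ ?_ ?_ ?_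
    · simp only [Finset.mem_union, Finset.mem_insert, Sym2.eq_iff, not_or] at f0 ⊢
      grind
    · simp only [Finset.mem_union, Finset.mem_insert, Sym2.eq_iff, not_or] at f ⊢
      grind
    · refine Wins.of_win σ hσ hv ?_
      intro x y hxy
      by_cases h : s(x, y) = s(c 1, c 2)
      · have : s(σ x, σ y) = s(σ (c 1), σ (c 2)) := by
          simp only [Sym2.eq_iff] at h ⊢
          rcases h with ⟨rfl, rfl⟩ | ⟨rfl, rfl⟩ <;> simp
        rw [this]; simp
      · simp [hcl x y hxy h]
    · refine hB.win_rot hi him hσ hv ?_ ?_ ?_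
      · intro x y hxy h
        simp [hcl x y hxy h]
      · simp
      · simp
  refine Wins.star (hne _ _ (by omega) (by omega) hii) (hne _ _ (by omega) (by omega) (by omega))
    (hne _ _ (by omega) (by omega) (by omega)) (hp _ (by omega)) (hp _ (by omega)) f1 f2
    (key i i' hi him hi' him' hii f3) (key i' i hi' him' hi him hii.symm f4)

/-- set of vertices embedded -/
def SJ {n : ℕ} (c : ℕ → Fin n) (J : ℕ) : Finset (Fin n) :=
  Finset.univ \ (Finset.Ico 2 J).image c

lemma mem_SJ {n : ℕ} {c : ℕ → Fin n} {J : ℕ} {x : Fin n} :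
    x ∈ SJ c J ↔ ∀ k, 2 ≤ k → k < J → c k ≠ x := by
  simp [SJ]

/-- late state -/
structure Late {n : ℕ} (T : SimpleGraph (Fin n)) (v p : Fin n) (c : ℕ → Fin n) (m J0 J : ℕ)
    (φ : Fin n → Fin n) (Cl W : Finset (Sym2 (Fin n))) : Prop where
  vp : φ v = p
  inj : Set.InjOn φ (SJ c J)
  cl : ∀ x ∈ SJ c J, ∀ y ∈ SJ c J, T.Adj x y → s(x, y) ≠ s(c 1, c 2) → s(φ x, φ y) ∈ Cl
  free : ∀ a ∈ Rm (SJ c J) φ, ∀ b ∈ Rm (SJ c J) φ, a ≠ b → s(a, b) ∉ Cl ∪ W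
  freeS : ∀ a ∈ Rm (SJ c J) φ, s(φ (c J), a) ∉ Cl ∪ W
  freeT : ∀ a ∈ Rm (SJ c J) φ, s(φ (c 1), a) ∉ Cl ∪ W
  ready : ∀ a ∈ Rm (SJ c J) φ, ∃ i i', i ≠ i' ∧ J0 < i ∧ J0 < i' ∧ i < m ∧ i' < m ∧
    s(a, φ (c i)) ∉ Cl ∪ W ∧ s(a, φ (c i')) ∉ Cl ∪ W ∧
    s(φ (c 1), φ (c (i-1))) ∉ Cl ∪ W ∧ s(φ (c 1), φ (c (i'-1))) ∉ Cl ∪ W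

/-- completing the path inside the rest set -/
lemma Late.finish {n : ℕ} {T : SimpleGraph (Fin n)} {v p : Fin n} {c : ℕ → Fin n} {m J0 J : ℕ}
    {φ : Fin n → Fin n} {Cl W Cl' W' : Finset (Sym2 (Fin n))} (hB : Bare T v c m)
    (hJ : 3 ≤ J) (hJ0 : J ≤ J0) (hJm : J0 < m)
    (h : Late T v p c m J0 J φ Cl W) {q : ℕ → Fin n}
    (hqR : ∀ j, 2 ≤ j → j < J → q j ∈ Rm (SJ c J) φ)
    (hqi : ∀ i j, 2 ≤ i → i < J → 2 ≤ j → j < J → q i = q j → i = j)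
    (hqJ : q J = φ (c J)) (hsub : Cl ⊆ Cl')
    (hq : ∀ j, 2 ≤ j → j < J → s(q j, q (j+1)) ∈ Cl')
    (hnew : ∀ e ∈ Cl' ∪ W', e ∈ Cl ∪ W ∨ ∀ u ∈ e, u = φ (c J) ∨ u ∈ Rm (SJ c J) φ) :
    Wins T v p 2 Cl' W' := by
  classical
  have hex : ∀ x, ∃ y, (∀ j, 2 ≤ j → j < J → c j = x → y = q j) ∧ (x ∈ SJ c J → y = φ x) := by
    intro x
    by_cases hx : x ∈ SJ c J
    · exact ⟨φ x, fun j h1 h2 h3 => absurd h3 (mem_SJ.1 hx j h1 h2), fun _ => rfl⟩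
    · have hx' := hx
      rw [mem_SJ] at hx'
      push Not at hx'
      obtain ⟨j, h1, h2, rfl⟩ := hx'
      refine ⟨q j, ?_, fun h => absurd h hx⟩
      intro k hk1 hk2 hk
      rw [hB.inj k j (by omega) (by omega) hk]
  choose σ hσ1 hσ2 using hex
  have hσc : ∀ j, 2 ≤ j → j < J → σ (c j) = q j := fun j a b => hσ1 _ j a b rfl
  have hcS : ∀ j, j ≤ m → (j < 2 ∨ J ≤ j) → c j ∈ SJ c J := by
    intro j hj hj'
    rw [mem_SJ]
    intro k hk1 hk2 hk
    have := hB.inj k j (by omega) hj hk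
    omega
  have hvS : v ∈ SJ c J := by
    rw [mem_SJ]; intro k _ hk; exact hB.ne k (by omega)
  have hnS : ∀ x, x ∉ SJ c J → ∃ j, 2 ≤ j ∧ j < J ∧ c j = x := by
    intro x hx
    rw [mem_SJ] at hx; push Not at hx; exact hx
  have hinj : Function.Injective σ := by
    intro x y hxy
    by_cases hx : x ∈ SJ c J <;> by_cases hy : y ∈ SJ c J
    · rw [hσ2 x hx, hσ2 y hy] at hxy
      exact h.inj hx hy hxy
    · obtain ⟨j, h1, h2, rfl⟩ := hnS y hy
      rw [hσ2 x hx, hσc j h1 h2] at hxy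
      exact absurd hxy (mem_Rm.1 (hqR j h1 h2) x hx)
    · obtain ⟨j, h1, h2, rfl⟩ := hnS x hx
      rw [hσ2 y hy, hσc j h1 h2] at hxy
      exact absurd hxy.symm (mem_Rm.1 (hqR j h1 h2) y hy)
    · obtain ⟨j, h1, h2, rfl⟩ := hnS x hx
      obtain ⟨k, h3, h4, rfl⟩ := hnS y hy
      rw [hσc j h1 h2, hσc k h3 h4] at hxy
      rw [hqi j k h1 h2 h3 h4 hxy]
  have hseg : ∀ j, 2 ≤ j → j ≤ J → σ (c j) = q j := by
    intro j h1 h2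
    rcases h2.lt_or_eq with h2 | rfl
    · exact hσc j h1 h2
    · rw [hσ2 _ (hcS j (by omega) (Or.inr le_rfl)), hqJ]
  have key : ∀ j, 2 ≤ j → j < J → ∀ y, T.Adj (c j) y → s(c j, y) ≠ s(c 1, c 2) →
      s(σ (c j), σ y) ∈ Cl' := by
    intro j hj1 hj2 y hy hne
    rcases hB.nbr j (by omega) (by omega) y hy with rfl | rfl
    · by_cases hj : j = 2
      · subst hj; exact absurd Sym2.eq_swap hne
      · rw [hseg j (by omega) (by omega), hseg (j-1) (by omega) (by omega), Sym2.eq_swap]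
        have := hq (j-1) (by omega) (by omega)
        rwa [show j - 1 + 1 = j by omega] at this
    · rw [hseg j (by omega) (by omega), hseg (j+1) (by omega) (by omega)]
      exact hq j hj1 hj2
  have hcl : ∀ x y, T.Adj x y → s(x, y) ≠ s(c 1, c 2) → s(σ x, σ y) ∈ Cl' := by
    intro x y hxy hne
    by_cases hx : x ∈ SJ c J
    · by_cases hy : y ∈ SJ c J
      · rw [hσ2 x hx, hσ2 y hy]
        exact hsub (h.cl x hx y hy hxy hne)
      · obtain ⟨j, h1, h2, rfl⟩ := hnS y hy
        rw [Sym2.eq_swap]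
        exact key j h1 h2 x hxy.symm (by rwa [Sym2.eq_swap])
    · obtain ⟨j, h1, h2, rfl⟩ := hnS x hx
      exact key j h1 h2 y hxy hne
  have hq2 := hqR 2 le_rfl (by omega)
  obtain ⟨i, i', hii, hi, hi', him, him', g1, g2, g3, g4⟩ := h.ready (q 2) hq2
  have hold : ∀ a b, s(a, b) ∉ Cl ∪ W → (a ≠ φ (c J) ∧ a ∉ Rm (SJ c J) φ) →
      s(a, b) ∉ Cl' ∪ W' := by
    intro a b hab ha hc
    rcases hnew _ hc with h1 | h1
    · exact hab h1
    · rcases h1 a (by simp) with h2 | h2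
      · exact ha.1 h2
      · exact ha.2 h2
  have hS : ∀ x ∈ SJ c J, φ x ∉ Rm (SJ c J) φ := fun x hx hc => mem_Rm.1 hc x hx rfl
  have hc1 := hcS 1 (by omega) (by omega)
  have hcJ := hcS J (by omega) (by omega)
  have ht : φ (c 1) ≠ φ (c J) ∧ φ (c 1) ∉ Rm (SJ c J) φ := by
    refine ⟨fun h' => ?_, hS _ hc1⟩
    have := hB.inj _ _ (by omega) (by omega) (h.inj hc1 hcJ h')
    omega
  have hti : ∀ k, J0 < k → k < m → φ (c k) ≠ φ (c J) ∧ φ (c k) ∉ Rm (SJ c J) φ := by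
    intro k hk hkm
    have hck := hcS k (by omega) (by omega)
    refine ⟨fun h' => ?_, hS _ hck⟩
    have := hB.inj _ _ (by omega) (by omega) (h.inj hck hcJ h')
    omega
  have e1 : σ (c 1) = φ (c 1) := hσ2 _ hc1
  have e2 : σ (c 2) = q 2 := hσc 2 le_rfl (by omega)
  have e3 : ∀ k, J ≤ k → k ≤ m → σ (c k) = φ (c k) := fun k hk hkm => hσ2 _ (hcS k hkm (by omega))
  refine hB.win_two (i := i) (i' := i') (by omega) him (by omega) him' hii hinj
    (by rw [hσ2 v hvS, h.vp]) hcl ?_ ?_ ?_ ?_ ?_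
  · rw [e1, e2]; exact hold _ _ (h.freeT _ hq2) ht
  · rw [e2, e3 i (by omega) (by omega), Sym2.eq_swap]
    exact hold _ _ (by rwa [Sym2.eq_swap]) (hti i hi him)
  · rw [e2, e3 i' (by omega) (by omega), Sym2.eq_swap]
    exact hold _ _ (by rwa [Sym2.eq_swap]) (hti i' hi' him')
  · rw [e1, e3 (i-1) (by omega) (by omega)]; exact hold _ _ g3 ht
  · rw [e1, e3 (i'-1) (by omega) (by omega)]; exact hold _ _ g4 ht

/-- what has been added since the late state -/
structure Mid {n : ℕ} (P : Fin n → Prop) (Cl W Cl' W' : Finset (Sym2 (Fin n))) : Prop where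
  sub : Cl ⊆ Cl'
  new : ∀ e ∈ Cl' ∪ W', e ∈ Cl ∪ W ∨ ∀ u ∈ e, P u

lemma Mid.ins {n : ℕ} {P : Fin n → Prop} {Cl W Cl' W' : Finset (Sym2 (Fin n))}
    (h : Mid P Cl W Cl' W') {x y z w : Fin n} (hx : P x) (hy : P y) (hz : P z) (hw : P w) :
    Mid P Cl W (insert s(x, y) Cl') (insert s(z, w) W') := by
  refine ⟨h.sub.trans (Finset.subset_insert _ _), ?_⟩
  intro e he
  simp only [Finset.mem_union, Finset.mem_insert] at he
  rcases he with (rfl | he) | (rfl | he)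
  · right; intro u hu; simp only [Sym2.mem_iff] at hu; rcases hu with rfl | rfl <;> assumption
  · exact h.new e (by simp [he])
  · right; intro u hu; simp only [Sym2.mem_iff] at hu; rcases hu with rfl | rfl <;> assumption
  · exact h.new e (by simp [he])

lemma Late.sixD {n : ℕ} {T : SimpleGraph (Fin n)} {v p : Fin n} {c : ℕ → Fin n} {m J0 : ℕ}
    {φ : Fin n → Fin n} {Cl W Cl' W' : Finset (Sym2 (Fin n))} (hB : Bare T v c m)
    (hJ0 : 8 ≤ J0) (hJm : J0 < m)
    (h : Late T v p c m J0 8 φ Cl W) {s1 s2 s3 y e f : Fin n}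
    (hR : ∀ u ∈ [s1, s2, s3, y, e, f], u ∈ Rm (SJ c 8) φ)
    (hnd : [s1, s2, s3, y, e, f].Nodup)
    (hM : Mid (fun u => u = φ (c 8) ∨ u ∈ Rm (SJ c 8) φ) Cl W Cl' W')
    (h1 : s(φ (c 8), s1) ∈ Cl') (h2 : s(s1, s2) ∈ Cl') (h3 : s(s2, s3) ∈ Cl')
    (h4 : s(s3, y) ∈ Cl') (h5 : s(y, e) ∈ Cl') (h6 : s(e, f) ∈ Cl') : Wins T v p 2 Cl' W' := by
  have hlist : ∀ j, 2 ≤ j → j < 8 → j = 2 ∨ j = 3 ∨ j = 4 ∨ j = 5 ∨ j = 6 ∨ j = 7 := by omega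
  refine h.finish hB (q := fun j => if j = 2 then f else if j = 3 then e else if j = 4 then y else
    if j = 5 then s3 else if j = 6 then s2 else if j = 7 then s1 else φ (c 8))
    (by omega) hJ0 hJm ?_ ?_ (by simp) hM.sub ?_ hM.new
  · intro j hj1 hj2
    rcases hlist j hj1 hj2 with rfl | rfl | rfl | rfl | rfl | rfl <;> simp <;> apply hR <;> simp
  · simp only [List.nodup_cons, List.mem_cons, not_or, List.not_mem_nil] at hnd
    intro i j hi1 hi2 hj1 hj2
    rcases hlist j hj1 hj2 with rfl | rfl | rfl | rfl | rfl | rfl <;>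
    rcases hlist i hi1 hi2 with rfl | rfl | rfl | rfl | rfl | rfl <;> simp <;> grind
  · intro j hj1 hj2
    rcases hlist j hj1 hj2 with rfl | rfl | rfl | rfl | rfl | rfl <;> simp <;>
      first | assumption | (rw [Sym2.eq_swap]; assumption)

lemma Late.sixC {n : ℕ} {T : SimpleGraph (Fin n)} {v p : Fin n} {c : ℕ → Fin n} {m J0 : ℕ}
    {φ : Fin n → Fin n} {Cl W Cl' W' : Finset (Sym2 (Fin n))} (hB : Bare T v c m)
    (hJ0 : 8 ≤ J0) (hJm : J0 < m)
    (h : Late T v p c m J0 8 φ Cl W) {s1 s2 s3 y a b : Fin n}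
    (hR : ∀ u ∈ [s1, s2, s3, y, a, b], u ∈ Rm (SJ c 8) φ)
    (hnd : [s1, s2, s3, y, a, b].Nodup) (hp : ∀ u ∈ [s1, s2, s3, y, a, b], p ≠ u)
    (hM : Mid (fun u => u = φ (c 8) ∨ u ∈ Rm (SJ c 8) φ) Cl W Cl' W')
    (h1 : s(φ (c 8), s1) ∈ Cl') (h2 : s(s1, s2) ∈ Cl') (h3 : s(s2, s3) ∈ Cl')
    (h6 : s(a, b) ∈ Cl') (f1 : s(y, a) ∉ Cl' ∪ W') (f2 : s(y, b) ∉ Cl' ∪ W')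
    (f3 : s(s3, y) ∉ Cl' ∪ W') (f4 : s(s3, a) ∉ Cl' ∪ W') (f5 : s(s3, b) ∉ Cl' ∪ W') :
    Wins T v p 4 Cl' W' := by
  have key : ∀ a b, (∀ u ∈ [s1, s2, s3, y, a, b], u ∈ Rm (SJ c 8) φ) →
      [s1, s2, s3, y, a, b].Nodup → (∀ u ∈ [s1, s2, s3, y, a, b], p ≠ u) →
      s(a, b) ∈ Cl' → s(s3, b) ∉ Cl' ∪ W' →
      Wins T v p 3 (insert s(y, a) Cl') (insert s(y, b) W') := by
    intro a b hR hnd hp hab f5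
    have hnd' := hnd
    simp only [List.nodup_cons, List.mem_cons, not_or, List.not_mem_nil] at hnd'
    have hM' := hM.ins (x := y) (y := a) (z := y) (w := b) (Or.inr (hR y (by simp)))
      (Or.inr (hR a (by simp))) (Or.inr (hR y (by simp))) (Or.inr (hR b (by simp)))
    refine Wins.star (x := s3) (a := y) (b := b) (by grind) (by grind) (by grind)
      (hp _ (by simp)) (hp _ (by simp)) ?_ ?_ ?_ ?_
    · simp only [Finset.mem_union, Finset.mem_insert, Sym2.eq_iff, not_or] at f3 ⊢
      grind
    · simp only [Finset.mem_union, Finset.mem_insert, Sym2.eq_iff, not_or] at f5 ⊢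
      grind
    · refine h.sixD hB hJ0 hJm (s1 := s1) (s2 := s2) (s3 := s3) (y := y) (e := a) (f := b) hR hnd
        (hM'.ins (Or.inr (hR _ (by simp))) (Or.inr (hR _ (by simp))) (Or.inr (hR _ (by simp)))
          (Or.inr (hR _ (by simp)))) ?_ ?_ ?_ ?_ ?_ ?_ <;> simp [*]
    · refine h.sixD hB hJ0 hJm (s1 := s1) (s2 := s2) (s3 := s3) (y := b) (e := a) (f := y)
        (fun u hu => hR u (by
          simp only [List.mem_cons, List.not_mem_nil, or_false] at hu
          rcases hu with rfl | rfl | rfl | rfl | rfl | rfl <;> simp))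
        (by simp only [List.nodup_cons, List.mem_cons, not_or, List.not_mem_nil]; grind)
        (hM'.ins (Or.inr (hR _ (by simp))) (Or.inr (hR _ (by simp))) (Or.inr (hR _ (by simp)))
          (Or.inr (hR _ (by simp)))) ?_ ?_ ?_ ?_ ?_ ?_
      · simp [*]
      · simp [*]
      · simp [*]
      · simp [*]
      · rw [Sym2.eq_swap (a := b)]; simp [*]
      · rw [Sym2.eq_swap (a := a)]; simp [*]
  have hnd' := hnd
  simp only [List.nodup_cons, List.mem_cons, not_or, List.not_mem_nil] at hnd'
  refine Wins.star (x := y) (a := a) (b := b) (by grind) (by grind) (by grind)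
      (hp _ (by simp)) (hp _ (by simp)) f1 f2 (key a b hR hnd hp h6 f5) (key b a ?_ ?_ ?_ ?_ f4)
  · exact fun u hu => hR u (by
          simp only [List.mem_cons, List.not_mem_nil, or_false] at hu
          rcases hu with rfl | rfl | rfl | rfl | rfl | rfl <;> simp)
  · simp only [List.nodup_cons, List.mem_cons, not_or, List.not_mem_nil]; grind
  · exact fun u hu => hp u (by
          simp only [List.mem_cons, List.not_mem_nil, or_false] at hu
          rcases hu with rfl | rfl | rfl | rfl | rfl | rfl <;> simp)
  · rwa [Sym2.eq_swap]

lemma Late.sixB {n : ℕ} {T : SimpleGraph (Fin n)} {v p : Fin n} {c : ℕ → Fin n} {m J0 : ℕ}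
    {φ : Fin n → Fin n} {Cl W Cl' W' : Finset (Sym2 (Fin n))} (hB : Bare T v c m)
    (hJ0 : 8 ≤ J0) (hJm : J0 < m)
    (h : Late T v p c m J0 8 φ Cl W) {s1 s2 b' d a b : Fin n}
    (hR : ∀ u ∈ [s1, s2, b', d, a, b], u ∈ Rm (SJ c 8) φ)
    (hnd : [s1, s2, b', d, a, b].Nodup) (hp : ∀ u ∈ [s1, s2, b', d, a, b], p ≠ u)
    (hM : Mid (fun u => u = φ (c 8) ∨ u ∈ Rm (SJ c 8) φ) Cl W Cl' W')
    (h1 : s(φ (c 8), s1) ∈ Cl') (h2 : s(s1, s2) ∈ Cl')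
    (h6 : s(a, b) ∈ Cl')
    (f1 : s(s2, b') ∉ Cl' ∪ W') (f2 : s(s2, d) ∉ Cl' ∪ W') (f3 : s(b', d) ∉ Cl' ∪ W')
    (f4 : s(b', a) ∉ Cl' ∪ W') (f5 : s(b', b) ∉ Cl' ∪ W')
    (f6 : s(d, a) ∉ Cl' ∪ W') (f7 : s(d, b) ∉ Cl' ∪ W') :
    Wins T v p 5 Cl' W' := by
  have hnd' := hnd
  simp only [List.nodup_cons, List.mem_cons, not_or, List.not_mem_nil] at hnd'
  refine Wins.star (x := s2) (a := b') (b := d) (by grind) (by grind) (by grind)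
      (hp _ (by simp)) (hp _ (by simp)) f1 f2 ?_ ?_
  · refine h.sixC hB hJ0 hJm (s1 := s1) (s2 := s2) (s3 := b') (y := d) (a := a) (b := b) hR hnd hp
      (hM.ins (Or.inr (hR _ (by simp))) (Or.inr (hR _ (by simp))) (Or.inr (hR _ (by simp)))
          (Or.inr (hR _ (by simp)))) ?_ ?_ ?_ ?_ ?_ ?_ ?_ ?_ ?_
    iterate 4 simp [*]
    all_goals
      simp only [Finset.mem_union, Finset.mem_insert, Sym2.eq_iff, not_or] at f3 f4 f5 f6 f7 ⊢
      grind
  · refine h.sixC hB hJ0 hJm (s1 := s1) (s2 := s2) (s3 := d) (y := b') (a := a) (b := b)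
      (fun u hu => hR u (by
          simp only [List.mem_cons, List.not_mem_nil, or_false] at hu
          rcases hu with rfl | rfl | rfl | rfl | rfl | rfl <;> simp))
        (by simp only [List.nodup_cons, List.mem_cons, not_or, List.not_mem_nil]; grind)
      (fun u hu => hp u (by
          simp only [List.mem_cons, List.not_mem_nil, or_false] at hu
          rcases hu with rfl | rfl | rfl | rfl | rfl | rfl <;> simp))
      (hM.ins (Or.inr (hR _ (by simp))) (Or.inr (hR _ (by simp))) (Or.inr (hR _ (by simp)))
          (Or.inr (hR _ (by simp)))) ?_ ?_ ?_ ?_ ?_ ?_ ?_ ?_ ?_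
    iterate 4 simp [*]
    rw [Sym2.eq_swap] at f3
    all_goals
      simp only [Finset.mem_union, Finset.mem_insert, Sym2.eq_iff, not_or] at f3 f4 f5 f6 f7 ⊢
      grind

lemma Late.sixA {n : ℕ} {T : SimpleGraph (Fin n)} {v p : Fin n} {c : ℕ → Fin n} {m J0 : ℕ}
    {φ : Fin n → Fin n} {Cl W : Finset (Sym2 (Fin n))} (hB : Bare T v c m)
    (hJ0 : 8 ≤ J0) (hJm : J0 < m)
    (h : Late T v p c m J0 8 φ Cl W) {a' b' c' d a b : Fin n}
    (hR : ∀ u ∈ [a', c', b', d, a, b], u ∈ Rm (SJ c 8) φ)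
    (hnd : [a', c', b', d, a, b].Nodup) (hp : ∀ u ∈ [a', c', b', d, a, b], p ≠ u)
    (hs : ∀ u ∈ Rm (SJ c 8) φ, φ (c 8) ≠ u) :
    Wins T v p 7 (insert s(a, b) Cl) (insert s(a', b') W) := by
  have hM0 : Mid (fun u => u = φ (c 8) ∨ u ∈ Rm (SJ c 8) φ) Cl W (insert s(a, b) Cl)
      (insert s(a', b') W) := by
    have : Mid (fun u => u = φ (c 8) ∨ u ∈ Rm (SJ c 8) φ) Cl W Cl W :=
      ⟨subset_rfl, fun e he => Or.inl he⟩
    exact this.ins (Or.inr (hR _ (by simp))) (Or.inr (hR _ (by simp))) (Or.inr (hR _ (by simp)))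
          (Or.inr (hR _ (by simp)))
  have keyB : ∀ a' b' c' d : Fin n, (∀ u ∈ [a', c', b', d, a, b], u ∈ Rm (SJ c 8) φ) →
      [a', c', b', d, a, b].Nodup → (∀ u ∈ [a', c', b', d, a, b], p ≠ u) →
      Mid (fun u => u = φ (c 8) ∨ u ∈ Rm (SJ c 8) φ) Cl W (insert s(a, b) Cl)
      (insert s(a', b') W) → Wins T v p 5
        (insert s(a', c') (insert s(φ (c 8), a') (insert s(a, b) Cl)))
        (insert s(a', d) (insert s(φ (c 8), b') (insert s(a', b') W))) := by
    intro a' b' c' d hR hnd hp hM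
    have hnd' := hnd
    simp only [List.nodup_cons, List.mem_cons, not_or, List.not_mem_nil] at hnd'
    have q1 := hs a' (hR _ (by simp))
    have q2 := hs b' (hR _ (by simp))
    have q3 := hs c' (hR _ (by simp))
    have q4 := hs d (hR _ (by simp))
    have q5 := hs a (hR _ (by simp))
    have q6 := hs b (hR _ (by simp))
    have fr := h.free
    have f1 := fr c' (hR _ (by simp)) b' (hR _ (by simp)) (by grind)
    have f2 := fr c' (hR _ (by simp)) d (hR _ (by simp)) (by grind)
    have f3 := fr b' (hR _ (by simp)) d (hR _ (by simp)) (by grind)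
    have f4 := fr b' (hR _ (by simp)) a (hR _ (by simp)) (by grind)
    have f5 := fr b' (hR _ (by simp)) b (hR _ (by simp)) (by grind)
    have f6 := fr d (hR _ (by simp)) a (hR _ (by simp)) (by grind)
    have f7 := fr d (hR _ (by simp)) b (hR _ (by simp)) (by grind)
    clear fr hs
    refine h.sixB hB hJ0 hJm (s1 := a') (s2 := c') (b' := b') (d := d) (a := a) (b := b) hR hnd hp
      ((hM.ins (Or.inl rfl) (Or.inr (hR _ (by simp))) (Or.inl rfl)
          (Or.inr (hR _ (by simp)))).ins (Or.inr (hR _ (by simp))) (Or.inr (hR _ (by simp)))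
          (Or.inr (hR _ (by simp)))
          (Or.inr (hR _ (by simp)))) ?_ ?_ ?_ ?_ ?_ ?_ ?_ ?_ ?_ ?_
    iterate 3 simp
    all_goals
      simp only [Finset.mem_union, Finset.mem_insert, Sym2.eq_iff, not_or] at f1 f2 f3 f4 f5 f6 f7 ⊢
      grind
  have keyA : ∀ a' b' c' d : Fin n, (∀ u ∈ [a', c', b', d, a, b], u ∈ Rm (SJ c 8) φ) →
      [a', c', b', d, a, b].Nodup → (∀ u ∈ [a', c', b', d, a, b], p ≠ u) →
      Mid (fun u => u = φ (c 8) ∨ u ∈ Rm (SJ c 8) φ) Cl W (insert s(a, b) Cl)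
      (insert s(a', b') W) → Wins T v p 6
        (insert s(φ (c 8), a') (insert s(a, b) Cl))
        (insert s(φ (c 8), b') (insert s(a', b') W)) := by
    intro a' b' c' d hR hnd hp hM
    have hnd' := hnd
    simp only [List.nodup_cons, List.mem_cons, not_or, List.not_mem_nil] at hnd'
    have q1 := hs a' (hR _ (by simp))
    have q2 := hs b' (hR _ (by simp))
    have q3 := hs c' (hR _ (by simp))
    have q4 := hs d (hR _ (by simp))
    have f1 := h.free a' (hR _ (by simp)) c' (hR _ (by simp)) (by grind)
    have f2 := h.free a' (hR _ (by simp)) d (hR _ (by simp)) (by grind)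
    refine Wins.star (x := a') (a := c') (b := d) (by grind) (by grind) (by grind)
      (hp _ (by simp)) (hp _ (by simp)) ?_ ?_ (keyB a' b' c' d hR hnd hp hM)
      (keyB a' b' d c' (fun u hu => hR u (by
          simp only [List.mem_cons, List.not_mem_nil, or_false] at hu
          rcases hu with rfl | rfl | rfl | rfl | rfl | rfl <;> simp))
        (by simp only [List.nodup_cons, List.mem_cons, not_or, List.not_mem_nil]; grind)
      (fun u hu => hp u (by
          simp only [List.mem_cons, List.not_mem_nil, or_false] at hu
          rcases hu with rfl | rfl | rfl | rfl | rfl | rfl <;> simp)) hM)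
    all_goals
      simp only [Finset.mem_union, Finset.mem_insert, Sym2.eq_iff, not_or] at f1 f2 ⊢
      grind
  have hnd' := hnd
  simp only [List.nodup_cons, List.mem_cons, not_or, List.not_mem_nil] at hnd'
  have q1 := hs a' (hR _ (by simp))
  have q2 := hs b' (hR _ (by simp))
  have q5 := hs a (hR _ (by simp))
  have q6 := hs b (hR _ (by simp))
  have f1 := h.freeS a' (hR _ (by simp))
  have f2 := h.freeS b' (hR _ (by simp))
  refine Wins.star (x := φ (c 8)) (a := a') (b := b') (by grind) (by grind) (by grind)
      (hp _ (by simp)) (hp _ (by simp)) ?_ ?_ (keyA a' b' c' d hR hnd hp hM0) ?_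
  · simp only [Finset.mem_union, Finset.mem_insert, Sym2.eq_iff, not_or] at f1 f2 ⊢
    grind
  · simp only [Finset.mem_union, Finset.mem_insert, Sym2.eq_iff, not_or] at f1 f2 ⊢
    grind
  · have := keyA b' a' c' d (fun u hu => hR u (by
          simp only [List.mem_cons, List.not_mem_nil, or_false] at hu
          rcases hu with rfl | rfl | rfl | rfl | rfl | rfl <;> simp))
        (by simp only [List.nodup_cons, List.mem_cons, not_or, List.not_mem_nil]; grind)
      (fun u hu => hp u (by
          simp only [List.mem_cons, List.not_mem_nil, or_false] at hu
          rcases hu with rfl | rfl | rfl | rfl | rfl | rfl <;> simp)) (by rwa [Sym2.eq_swap (a := b')])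
    rwa [Sym2.eq_swap (a := b')] at this

lemma SJ_card {n : ℕ} {T : SimpleGraph (Fin n)} {v : Fin n} {c : ℕ → Fin n} {m J : ℕ}
    (hB : Bare T v c m) (hJm : J ≤ m) : (SJ c J).card = n - (J - 2) := by
  rw [SJ, Finset.card_sdiff_of_subset (Finset.subset_univ _), Finset.card_image_of_injOn]
  · simp
  · intro i hi j hj hij
    simp only [Finset.coe_Ico, Set.mem_Ico] at hi hj
    exact hB.inj i j (by omega) (by omega) hij

lemma Late.six {n : ℕ} {T : SimpleGraph (Fin n)} {v p : Fin n} {c : ℕ → Fin n} {m J0 : ℕ}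
    {φ : Fin n → Fin n} {Cl W : Finset (Sym2 (Fin n))} (hB : Bare T v c m)
    (hJ0 : 8 ≤ J0) (hJm : J0 < m)
    (h : Late T v p c m J0 8 φ Cl W) : Wins T v p 8 Cl W := by
  have hmn : m + 1 ≤ n := by
    have : (Finset.range (m+1)).card ≤ (Finset.univ : Finset (Fin n)).card :=
      Finset.card_le_card_of_injOn c (by simp) (by
        intro i hi j hj hij
        simp only [Finset.coe_range, Set.mem_Iio] at hi hj
        exact hB.inj i j (by omega) (by omega) hij)
    simpa using this
  have hcard : (Rm (SJ c 8) φ).card = 6 := by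
    rw [card_Rm h.inj, SJ_card hB (by omega)]; omega
  have hvS : v ∈ SJ c 8 := by
    rw [mem_SJ]; intro k _ hk; exact hB.ne k (by omega)
  have h8S : c 8 ∈ SJ c 8 := by
    rw [mem_SJ]; intro k _ hk hh
    have := hB.inj k 8 (by omega) (by omega) hh
    omega
  have hs : ∀ u ∈ Rm (SJ c 8) φ, φ (c 8) ≠ u := fun u hu => mem_Rm.1 hu _ h8S
  have hp : ∀ u ∈ Rm (SJ c 8) φ, p ≠ u := fun u hu => h.vp ▸ mem_Rm.1 hu _ hvS
  set g := (Rm (SJ c 8) φ).orderEmbOfFin hcard with hg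
  have hgR : ∀ i, g i ∈ Rm (SJ c 8) φ := fun i => Finset.orderEmbOfFin_mem _ _ i
  have hgi : ∀ i j, i ≠ j → g i ≠ g j := fun i j hij h => hij (g.injective h)
  obtain ⟨a, b, a', b', c', d, hR, hnd⟩ : ∃ a b a' b' c' d : Fin n,
      (∀ u ∈ [a', c', b', d, a, b], u ∈ Rm (SJ c 8) φ) ∧ [a', c', b', d, a, b].Nodup := by
    refine ⟨g 0, g 1, g 2, g 3, g 4, g 5, ?_, ?_⟩
    · intro u hu
      simp only [List.mem_cons, List.not_mem_nil, or_false] at hu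
      rcases hu with rfl | rfl | rfl | rfl | rfl | rfl <;> apply hgR
    · simp only [List.nodup_cons, List.mem_cons, not_or, List.not_mem_nil, not_false_eq_true,
        and_true, List.nodup_nil]
      refine ⟨⟨?_, ?_, ?_, ?_, ?_⟩, ⟨?_, ?_, ?_, ?_⟩, ⟨?_, ?_, ?_⟩, ⟨?_, ?_⟩, ?_⟩ <;>
        apply hgi <;> decide
  have hnd' := hnd
  simp only [List.nodup_cons, List.mem_cons, not_or, List.not_mem_nil] at hnd'
  have ma := hR a (by simp)
  have mb := hR b (by simp)
  have ma' := hR a' (by simp)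
  have mb' := hR b' (by simp)
  refine Wins.step (e := s(a, b)) (f := s(a', b')) ?_ ?_ ?_ (h.free _ ma _ mb (by grind))
    (h.free _ ma' _ mb' (by grind)) ?_ 
    (h.sixA hB hJ0 hJm (a' := a') (b' := b') (c' := c') (d := d) (a := a) (b := b) hR hnd
      (fun u hu => hp u (hR u hu)) hs)
    (h.sixA hB hJ0 hJm (a' := a) (b' := b) (c' := c') (d := d) (a := a') (b := b')
      (fun u hu => hR u (by
          simp only [List.mem_cons, List.not_mem_nil, or_false] at hu
          rcases hu with rfl | rfl | rfl | rfl | rfl | rfl <;> simp))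
        (by simp only [List.nodup_cons, List.mem_cons, not_or, List.not_mem_nil]; grind)
      (fun u hu => hp u (hR u (by
          simp only [List.mem_cons, List.not_mem_nil, or_false] at hu
          rcases hu with rfl | rfl | rfl | rfl | rfl | rfl <;> simp))) hs)
  · simp only [ne_eq, Sym2.eq_iff]; grind
  · simp only [Sym2.mk_isDiag_iff]; grind
  · simp only [Sym2.mk_isDiag_iff]; grind
  · have := hp _ ma
    have := hp _ mb
    have := hp _ ma'
    have := hp _ mb'
    simp only [Sym2.mem_iff]; grind

lemma Late.grow1 {n : ℕ} {T : SimpleGraph (Fin n)} {v p : Fin n} {c : ℕ → Fin n} {m J0 J : ℕ}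
    {φ : Fin n → Fin n} {Cl W : Finset (Sym2 (Fin n))} (hB : Bare T v c m)
    (hJ : 4 ≤ J) (hJ0 : J ≤ J0) (hJm : J0 < m)
    (h : Late T v p c m J0 J φ Cl W) {a b : Fin n} (ha : a ∈ Rm (SJ c J) φ)
    (hb : b ∈ Rm (SJ c J) φ) :
    Late T v p c m J0 (J-1) (Function.update φ (c (J-1)) a) (insert s(φ (c J), a) Cl)
      (insert s(φ (c J), b) W) := by
  have hcn : c (J-1) ∉ SJ c J := by
    rw [mem_SJ]; push Not; exact ⟨J-1, by omega, by omega, rfl⟩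
  have hcS : ∀ j, j ≤ m → (j < 2 ∨ J ≤ j) → c j ∈ SJ c J := by
    intro j hj hj'
    rw [mem_SJ]
    intro k hk1 hk2 hk
    have := hB.inj k j (by omega) hj hk
    omega
  have hvS : v ∈ SJ c J := by
    rw [mem_SJ]; intro k _ hk; exact hB.ne k (by omega)
  have hS : SJ c (J-1) = insert (c (J-1)) (SJ c J) := by
    ext x
    rw [Finset.mem_insert, mem_SJ, mem_SJ]
    constructor
    · intro hx
      by_cases hxe : x = c (J-1)
      · exact Or.inl hxe
      · right
        intro k hk1 hk2
        by_cases hk : k = J - 1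
        · subst hk; exact fun h => hxe h.symm
        · exact hx k hk1 (by omega)
    · rintro (rfl | hx) k hk1 hk2
      · intro hh
        have := hB.inj k (J-1) (by omega) (by omega) hh
        omega
      · exact hx k hk1 (by omega)
  have hup : ∀ x ∈ SJ c J, Function.update φ (c (J-1)) a x = φ x := by
    intro x hx
    apply Function.update_of_ne
    rintro rfl; exact hcn hx
  have hRm := Rm_insert (φ := φ) (a := a) hcn
  rw [← hS] at hRm
  have hφ : ∀ x ∈ SJ c J, ∀ r ∈ Rm (SJ c J) φ, φ x ≠ r := fun x hx r hr => mem_Rm.1 hr x hx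
  have hcJ := hcS J (by omega) (by omega)
  have hold : ∀ x y, s(x, y) ∉ Cl ∪ W → x ≠ φ (c J) → y ≠ φ (c J) →
      s(x, y) ∉ insert s(φ (c J), a) Cl ∪ insert s(φ (c J), b) W := by
    intro x y h1 h2 h3
    simp only [Finset.mem_union, Finset.mem_insert, Sym2.eq_iff, not_or] at h1 ⊢
    grind
  have hj : ∀ k, k ≤ m → (k < 2 ∨ J < k) → φ (c k) ≠ φ (c J) := by
    intro k hk hk' hh
    have := hB.inj k J hk (by omega) (h.inj (hcS k hk (by omega)) hcJ hh)
    omega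
  have hold1 : ∀ y, s(φ (c 1), y) ∉ Cl ∪ W →
      s(φ (c 1), y) ∉ insert s(φ (c J), a) Cl ∪ insert s(φ (c J), b) W := by
    intro y h1
    have h2 := hj 1 (by omega) (by omega)
    have h3 := hφ (c 1) (hcS 1 (by omega) (by omega)) a ha
    have h4 := hφ (c 1) (hcS 1 (by omega) (by omega)) b hb
    simp only [Finset.mem_union, Finset.mem_insert, Sym2.eq_iff, not_or] at h1 ⊢
    grind
  refine ⟨?_, ?_, ?_, ?_, ?_, ?_, ?_⟩
  · rw [hup v hvS, h.vp]
  · rw [hS]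
    intro x hx y hy hxy
    simp only [Finset.coe_insert, Set.mem_insert_iff, Finset.mem_coe] at hx hy
    rcases hx with rfl | hx <;> rcases hy with rfl | hy
    · rfl
    · rw [Function.update_self, hup y hy] at hxy
      exact absurd hxy.symm (hφ y hy a ha)
    · rw [Function.update_self, hup x hx] at hxy
      exact absurd hxy (hφ x hx a ha)
    · rw [hup x hx, hup y hy] at hxy
      exact h.inj hx hy hxy
  · have key : ∀ y ∈ SJ c J, T.Adj (c (J-1)) y → s(a, φ y) ∈ insert s(φ (c J), a) Cl := by
      intro y hy hadj
      rcases hB.nbr (J-1) (by omega) (by omega) y hadj with rfl | rfl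
      · exact absurd rfl (mem_SJ.1 hy (J-1-1) (by omega) (by omega))
      · rw [show J - 1 + 1 = J by omega, Sym2.eq_swap]; simp
    rw [hS]
    intro x hx y hy hadj hne
    rw [Finset.mem_insert] at hx hy
    rcases hx with rfl | hx <;> rcases hy with rfl | hy
    · exact absurd hadj (T.loopless.irrefl _)
    · rw [Function.update_self, hup y hy]; exact key y hy hadj
    · rw [Function.update_self, hup x hx, Sym2.eq_swap (a := φ x)]; exact key x hx hadj.symm
    · rw [hup x hx, hup y hy]
      exact Finset.mem_insert_of_mem (h.cl x hx y hy hadj hne)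
  · rw [hRm]
    intro x hx y hy hxy
    have hx := Finset.mem_of_mem_erase hx
    have hy := Finset.mem_of_mem_erase hy
    exact hold _ _ (h.free x hx y hy hxy) (hφ _ hcJ _ hx).symm (hφ _ hcJ _ hy).symm
  · rw [hRm]
    intro x hx
    rw [Function.update_self]
    have hx' := Finset.mem_of_mem_erase hx
    exact hold _ _ (h.free a ha x hx' (Finset.ne_of_mem_erase hx).symm) (hφ _ hcJ _ ha).symm
      (hφ _ hcJ _ hx').symm
  · rw [hRm, hup _ (hcS 1 (by omega) (by omega))]
    intro x hx
    have hx' := Finset.mem_of_mem_erase hx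
    exact hold _ _ (h.freeT x hx') (hj 1 (by omega) (by omega))
      (hφ _ hcJ _ hx').symm
  · rw [hRm]
    intro x hx
    have hx' := Finset.mem_of_mem_erase hx
    obtain ⟨i, i', hii, hi, hi', him, him', g1, g2, g3, g4⟩ := h.ready x hx'
    refine ⟨i, i', hii, hi, hi', him, him', ?_, ?_, ?_, ?_⟩
    · rw [hup _ (hcS i (by omega) (by omega))]
      exact hold _ _ g1 (hφ _ hcJ _ hx').symm (hj i (by omega) (by omega))
    · rw [hup _ (hcS i' (by omega) (by omega))]
      exact hold _ _ g2 (hφ _ hcJ _ hx').symm (hj i' (by omega) (by omega))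
    · rw [hup _ (hcS (i-1) (by omega) (by omega)), hup _ (hcS 1 (by omega) (by omega))]
      exact hold1 _ g3
    · rw [hup _ (hcS (i'-1) (by omega) (by omega)), hup _ (hcS 1 (by omega) (by omega))]
      exact hold1 _ g4

lemma Late.wins {n : ℕ} {T : SimpleGraph (Fin n)} {v p : Fin n} {c : ℕ → Fin n} {m J0 J : ℕ}
    {φ : Fin n → Fin n} {Cl W : Finset (Sym2 (Fin n))} (hB : Bare T v c m)
    (hJ : 8 ≤ J) (hJ0 : J ≤ J0) (hJm : J0 < m)
    (h : Late T v p c m J0 J φ Cl W) : Wins T v p J Cl W := by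
  induction J, hJ using Nat.le_induction generalizing φ Cl W with
  | base => exact h.six hB hJ0 hJm
  | succ J hJ ih =>
    have hmn : m + 1 ≤ n := by
      have : (Finset.range (m+1)).card ≤ (Finset.univ : Finset (Fin n)).card :=
        Finset.card_le_card_of_injOn c (by simp) (by
          intro i hi j hj hij
          simp only [Finset.coe_range, Set.mem_Iio] at hi hj
          exact hB.inj i j (by omega) (by omega) hij)
      simpa using this
    have hcard : 2 ≤ (Rm (SJ c (J+1)) φ).card := by
      rw [card_Rm h.inj, SJ_card hB (by omega)]; omega
    obtain ⟨a, ha, b, hb, hab⟩ := exists_two_of_two_le hcard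
    have hvS : v ∈ SJ c (J+1) := by
      rw [mem_SJ]; intro k _ hk; exact hB.ne k (by omega)
    have h8S : c (J+1) ∈ SJ c (J+1) := by
      rw [mem_SJ]; intro k _ hk hh
      have := hB.inj k (J+1) (by omega) (by omega) hh
      omega
    have hs : ∀ u ∈ Rm (SJ c (J+1)) φ, φ (c (J+1)) ≠ u := fun u hu => mem_Rm.1 hu _ h8S
    have hp : ∀ u ∈ Rm (SJ c (J+1)) φ, p ≠ u := fun u hu => h.vp ▸ mem_Rm.1 hu _ hvS
    refine Wins.star hab (hs a ha) (hs b hb) (hp a ha) (hp b hb) (h.freeS a ha) (h.freeS b hb) ?_ ?_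
    · exact ih (by omega) (h.grow1 hB (by omega) hJ0 hJm ha hb)
    · exact ih (by omega) (h.grow1 hB (by omega) hJ0 hJm hb ha)

lemma chain_bare {n : ℕ} {T : SimpleGraph (Fin n)} {v : Fin n} {par : Fin n → Fin n}
    {dep : Fin n → ℕ} (hR : Rooted T v par dep) {M : ℕ} {z : Fin n} (hM : 1 ≤ M)
    (hz : ∀ j, j < M → par^[j+1] z ≠ v ∧
      ∀ w, w ≠ v → par w = par^[j+1] z → w = par^[j] z) :
    Bare T v (fun j => par^[j] z) M := by
  have hc : ∀ j, par (par^[j] z) = par^[j+1] z := fun j => (Function.iterate_succ_apply' par j z).symm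
  have hne : ∀ j, j ≤ M → par^[j] z ≠ v := by
    intro j hj
    rcases j with _ | j
    · intro h
      have h1 := hc 0
      rw [h, hR.parv] at h1
      exact (hz 0 hM).1 h1.symm
    · exact (hz j hj).1
  have hdep : ∀ k j, j + k ≤ M → 0 < k → dep (par^[j+k] z) < dep (par^[j] z) := by
    intro k
    induction k with
    | zero => intro j _ h; omega
    | succ k ih =>
      intro j hj _
      have h1 := hR.lt _ (hne (j+k) (by omega))
      rw [hc] at h1
      rcases Nat.eq_zero_or_pos k with rfl | hk
      · exact h1
      · exact h1.trans (ih j (by omega) hk)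
  refine ⟨?_, hne, ?_, ?_⟩
  · intro i j hi hj hij
    rcases lt_trichotomy i j with h | h | h
    · have := hdep (j-i) i (by omega) (by omega)
      rw [show i + (j-i) = j by omega] at this
      rw [hij] at this; omega
    · exact h
    · have := hdep (i-j) j (by omega) (by omega)
      rw [show j + (i-j) = i by omega] at this
      rw [hij] at this; omega
  · intro j hj
    rw [hR.adj]
    exact Or.inr ⟨hne j hj.le, hc j⟩
  · intro j hj1 hjM w hw
    rw [hR.adj] at hw
    rcases hw with ⟨h1, h2⟩ | ⟨h1, h2⟩
    · left
      have := (hz (j-1) (by omega)).2 w h1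
      rw [show j - 1 + 1 = j by omega] at this
      exact this h2
    · right
      rw [← h2]; exact hc j

lemma caseA {n : ℕ} {T : SimpleGraph (Fin n)} [DecidableRel T.Adj] {v p : Fin n}
    {par : Fin n → Fin n} {dep : Fin n → ℕ} (hR : Rooted T v par dep) {D d M : ℕ}
    (hD : n < 2 ^ (D+1))
    (hdv : 2 * (Finset.univ.filter (fun y => T.Adj v y)).card + 2 * D + 4 ≤ n)
    (hdx : ∀ x, x ≠ v → (Finset.univ.filter (fun y => T.Adj x y)).card ≤ d) {z : Fin n}
    (hz : ∀ j, j < M → par^[j+1] z ≠ v ∧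
      ∀ w, w ≠ v → par w = par^[j+1] z → w = par^[j] z)
    (hM : d + 3 * D + 16 ≤ M) : Wins T v p n ∅ ∅ := by
  classical
  have hB := chain_bare hR (by omega) hz
  obtain ⟨c, hcdef⟩ : ∃ c : ℕ → Fin n, c = fun j => par^[j] z := ⟨_, rfl⟩
  rw [← hcdef] at hB
  have hc0 : c 0 = z := by rw [hcdef]; rfl
  have hcp : ∀ j, par (c j) = c (j+1) := by
    intro j; rw [hcdef]; exact (Function.iterate_succ_apply' par j z).symm
  have hcu : ∀ j, 1 ≤ j → j ≤ M → ∀ w, w ≠ v → par w = c j → w = c (j-1) := by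
    intro j hj1 hj2 w hw h
    rw [hcdef] at h ⊢
    have := (hz (j-1) (by omega)).2 w hw
    rw [show j - 1 + 1 = j by omega] at this
    exact this h
  clear hcdef hz
  have hmn : M + 1 ≤ n := by
    have : (Finset.range (M+1)).card ≤ (Finset.univ : Finset (Fin n)).card :=
      Finset.card_le_card_of_injOn c (by simp) (by
        intro i hi j hj hij
        simp only [Finset.coe_range, Set.mem_Iio] at hi hj
        exact hB.inj i j (by omega) (by omega) hij)
    simpa using this
  have hci : ∀ i j, i ≤ M → j ≤ M → i ≠ j → c i ≠ c j := fun i j hi hj hij h =>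
    hij (hB.inj i j hi hj h)
  have hzv : z ≠ v := hc0 ▸ hB.ne 0 (by omega)
  set F : SimpleGraph (Fin n) := T.deleteEdges {s(c 1, c 2)} with hF
  have hFa : ∀ x y, F.Adj x y ↔ T.Adj x y ∧ s(x, y) ≠ s(c 1, c 2) := by
    intro x y; rw [hF, SimpleGraph.deleteEdges_adj]; simp
  clear_value F
  have hFdeg : ∀ x, (Finset.univ.filter (fun w => F.Adj x w)).card ≤
      (Finset.univ.filter (fun w => T.Adj x w)).card := by
    intro x
    apply Finset.card_le_card
    intro w hw
    simp only [Finset.mem_filter, Finset.mem_univ, true_and] at hw ⊢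
    exact ((hFa _ _).1 hw).1
  have hFdeg2 : ∀ x (S : Finset (Fin n)), x ≠ v → (S.filter (fun w => F.Adj x w)).card ≤ d := by
    intro x S hx
    refine le_trans (Finset.card_le_card ?_) ((hFdeg x).trans (hdx x hx))
    exact Finset.filter_subset_filter _ (Finset.subset_univ _)
  have hadjp : ∀ y, y ≠ v → T.Adj (par y) y := by
    intro y hy; rw [hR.adj]; exact Or.inl ⟨hy, rfl⟩
  -- the sets
  set N := Finset.univ.filter (fun y => T.Adj v y) with hN
  have hNpar : ∀ y, y ∈ N ↔ y ≠ v ∧ par y = v := by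
    intro y
    simp only [hN, Finset.mem_filter, Finset.mem_univ, true_and]
    rw [hR.adj]
    simp
  have hvN : v ∉ N := by simp [hN]
  have hzN : z ∉ N := by
    rw [hNpar, ← hc0, hcp]; exact fun h => hB.ne 1 (by omega) h.2
  set Sb := insert v (insert z N) with hSb
  have hSbc : Sb.card = N.card + 2 := by
    rw [hSb, Finset.card_insert_of_notMem, Finset.card_insert_of_notMem hzN]
    simp [hvN, hzv.symm]
  set Sc := Finset.univ \ (Finset.Ico 1 M).image c with hSc
  have mSc : ∀ x, x ∈ Sc ↔ ∀ k, 1 ≤ k → k < M → c k ≠ x := by intro x; simp [hSc]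
  have hScc : Sc.card = n - (M - 1) := by
    rw [hSc, Finset.card_sdiff_of_subset (Finset.subset_univ _), Finset.card_image_of_injOn]
    · simp
    · intro i hi j hj hij
      simp only [Finset.coe_Ico, Set.mem_Ico] at hi hj
      exact hB.inj i j (by omega) (by omega) hij
  clear_value Sc
  have hSbSc : Sb ⊆ Sc := by
    intro w hw
    rw [hSb] at hw
    simp only [Finset.mem_insert] at hw
    rw [mSc]
    intro k hk1 hk2 h
    rcases hw with rfl | rfl | hw
    · exact hB.ne k (by omega) h
    · rw [← hc0] at h; exact hci k 0 (by omega) (by omega) (by omega) h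
    · rw [← h, hNpar, hcp] at hw
      exact hB.ne (k+1) (by omega) hw.2
  have hSac : ({v, z} : Finset (Fin n)).card = 2 := by
    rw [Finset.card_pair hzv.symm]
  obtain ⟨J1, hJ1⟩ : ∃ J1, J1 = d + 2 * D + 12 := ⟨_, rfl⟩
  have hSd : insert (c 1) Sc = SJ c M := by
    ext x
    rw [Finset.mem_insert, mSc, mem_SJ]
    constructor
    · rintro (rfl | hx) k hk1 hk2
      · exact hci k 1 (by omega) (by omega) (by omega)
      · exact hx k (by omega) hk2
    · intro hx
      by_cases h : x = c 1
      · exact Or.inl h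
      · right
        intro k hk1 hk2
        by_cases hk : k = 1
        · subst hk; exact fun h' => h h'.symm
        · exact hx k (by omega) hk2
  have hSdc : (SJ c M).card = n - (M - 2) := SJ_card hB (by omega)
  have hSec : (SJ c J1).card = n - (J1 - 2) := SJ_card hB (by omega)
  have hcSJ : ∀ J j, J ≤ M → j ≤ M → (j < 2 ∨ J ≤ j) → c j ∈ SJ c J := by
    intro J j hJ hj hj'
    rw [mem_SJ]
    intro k hk1 hk2 hk
    have := hB.inj k j (by omega) hj hk
    omega
  have hsubde : SJ c M ⊆ SJ c J1 := by
    intro x hx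
    rw [mem_SJ] at hx ⊢
    intro k hk1 hk2
    exact hx k hk1 (by omega)
  have hcbc := Finset.card_le_card hSbSc
  -- start
  suffices h : Wins T v p ((((J1 - 1 + 1) + ((SJ c J1).card - (SJ c M).card) + 1) +
      (Sc.card - Sb.card)) + (Sb.card - ({v, z} : Finset (Fin n)).card)) ∅ ∅ by
    refine Wins.mono ?_ h
    omega
  obtain ⟨z', hz'⟩ : ∃ a, a ≠ p := by
    have : Nontrivial (Fin n) := Fin.nontrivial_iff_two_le.2 (by omega)
    exact exists_ne p
  have hIa := (GInv.init F v p D).root hD (y := z) (by simpa using hzv) (by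
    intro w hw h
    rw [Finset.mem_singleton] at hw
    subst hw
    apply hzN
    rw [hN]; simpa using ((hFa _ _).1 h).1) (a := z') (by
    rw [mem_Rm]; intro _ _; exact hz'.symm)
  rw [Finset.pair_comm z v] at hIa
  -- phase 1
  refine GInv.greedy (par := par) (dep := dep) hD (S0 := {v, z}) (S1 := Sb) ?_ ?_ ?_ hIa ?_
  · rw [hSb]; intro x hx; simp only [Finset.mem_insert, Finset.mem_singleton] at hx ⊢; tauto
  · intro y hy hy0
    rw [hSb] at hy
    simp only [Finset.mem_insert, Finset.mem_singleton, not_or] at hy hy0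
    have hyN : y ∈ N := by tauto
    have hyp := (hNpar y).1 hyN
    refine ⟨by rw [hyp.2, hSb]; simp, ?_, hR.lt y hyp.1, ?_⟩
    · rw [hFa]
      refine ⟨hadjp y hyp.1, ?_⟩
      rw [hyp.2]
      intro h
      have : v ∈ s(c 1, c 2) := by rw [← h]; simp
      rw [Sym2.mem_iff] at this
      rcases this with h | h
      · exact hB.ne 1 (by omega) h.symm
      · exact hB.ne 2 (by omega) h.symm
    · rw [hyp.2]
      have := hFdeg v
      rw [← hN] at this
      omega
  · intro y hy hy0 w hw hwy
    rw [hSb] at hy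
    simp only [Finset.mem_insert, Finset.mem_singleton, not_or] at hy hy0
    have hyN : y ∈ N := by tauto
    have hyp := (hNpar y).1 hyN
    have h := ((hFa _ _).1 hwy).1
    rw [hR.adj] at h
    rcases h with h | h
    · exact Or.inl h.2.symm
    · refine Or.inr ⟨?_, h.2⟩
      simp only [Finset.mem_insert, Finset.mem_singleton, not_or]
      refine ⟨h.1, ?_⟩
      rintro rfl
      rw [← hc0, hcp] at h
      rw [← h.2, hcp] at hyp
      exact hB.ne 2 (by omega) hyp.2
  intro φb Clb Wb hIb _ _
  -- phase 2
  refine GInv.greedy (par := par) (dep := dep) hD (S0 := Sb) (S1 := Sc) hSbSc ?_ ?_ hIb ?_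
  · intro y hy hy0
    rw [hSb] at hy0
    simp only [Finset.mem_insert, not_or, hNpar, not_and] at hy0
    obtain ⟨hyv, hyz, hyN⟩ := hy0
    rw [mSc] at hy
    refine ⟨?_, ?_, hR.lt y hyv, ?_⟩
    · rw [mSc]
      intro k hk1 hk2 h
      have h1 := hcu k hk1 (by omega) y hyv h.symm
      by_cases hk : k = 1
      · subst hk; exact hyz (h1.trans hc0)
      · exact hy (k-1) (by omega) (by omega) h1.symm
    · rw [hFa]
      refine ⟨hadjp y hyv, ?_⟩
      intro h
      have : y ∈ s(c 1, c 2) := by rw [← h]; simp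
      rw [Sym2.mem_iff] at this
      rcases this with h | h
      · exact hy 1 (by omega) (by omega) h.symm
      · exact hy 2 (by omega) (by omega) h.symm
    · have := hFdeg2 (par y) Finset.univ (hyN hyv)
      omega
  · intro y hy hy0 w hw hwy
    rw [hSb] at hy0
    simp only [Finset.mem_insert, not_or, hNpar, not_and] at hy0
    rw [mSc] at hy
    have h := ((hFa _ _).1 hwy).1
    rw [hR.adj] at h
    rcases h with h | h
    · exact Or.inl h.2.symm
    · refine Or.inr ⟨?_, h.2⟩
      rw [hSb]
      simp only [Finset.mem_insert, not_or, hNpar, not_and]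
      refine ⟨h.1, ?_, fun _ h' => hy0.1 (h.2.symm.trans h')⟩
      rintro rfl
      rw [← hc0, hcp] at h
      exact hy 1 le_rfl (by omega) h.2
  intro φc Clc Wc hIc _ _
  have hzSc : z ∈ Sc := hSbSc (by rw [hSb]; simp)
  have hc1Sc : c 1 ∉ Sc := by
    rw [mSc]; push Not; exact ⟨1, le_rfl, by omega, rfl⟩
  -- embed c 1
  refine hIc.ext hD (x := z) (y := c 1) hzSc hc1Sc ?_ ?_ ?_ ?_
  · rw [hFa, ← hc0]
    refine ⟨hB.adj 0 (by omega), ?_⟩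
    have h1 := hci 0 1 (by omega) (by omega) (by omega)
    have h2 := hci 0 2 (by omega) (by omega) (by omega)
    simp only [ne_eq, Sym2.eq_iff]
    tauto
  · intro w hw hwc
    rcases hB.nbr 1 le_rfl (by omega) w ((hFa _ _).1 hwc).1.symm with h | h
    · exact h.trans hc0
    · exact absurd h.symm ((mSc w).1 hw 2 (by omega) (by omega))
  · have := hFdeg2 z Sc hzv
    omega
  intro a b hab ha hb hId
  rw [hSd] at hId
  obtain ⟨φd, hφd⟩ : ∃ φd, φd = Function.update φc (c 1) a := ⟨_, rfl⟩
  obtain ⟨Wd, hWd⟩ : ∃ Wd, Wd = insert s(φc z, b) Wc := ⟨_, rfl⟩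
  obtain ⟨Cld, hCld⟩ : ∃ Cld, Cld = insert s(φc z, a) Clc := ⟨_, rfl⟩
  rw [← hφd, ← hWd, ← hCld] at hId
  rw [← hWd, ← hCld]
  have hfreshd : ∀ r ∈ Rm (SJ c M) φd, s(φd (c 1), r) ∉ Wd := by
    intro r hr
    rw [← hSd, hφd, Rm_insert hc1Sc, Finset.mem_erase] at hr
    rw [hφd, Function.update_self, hWd, Finset.mem_insert, not_or]
    constructor
    · have h1 := mem_Rm.1 ha z hzSc
      have h2 := mem_Rm.1 hr.2 z hzSc
      simp only [Sym2.eq_iff]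
      grind
    · intro h
      obtain ⟨x, hx, hxe⟩ := hIc.wtouch _ h
      rw [Sym2.mem_iff] at hxe
      rcases hxe with h | h
      · exact mem_Rm.1 ha x hx h
      · exact mem_Rm.1 hr.2 x hx h
  clear hφd hWd hCld hIc hIb hIa
  have hnewe : ∀ y ∈ SJ c J1, y ∉ SJ c M → ∃ j, J1 ≤ j ∧ j < M ∧ y = c j := by
    intro y hy hy0
    rw [mem_SJ] at hy hy0
    push Not at hy0
    obtain ⟨j, hj1, hj2, rfl⟩ := hy0
    refine ⟨j, ?_, hj2, rfl⟩
    by_contra hc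
    exact hy j hj1 (by omega) rfl
  have hFc : ∀ j, 2 ≤ j → j < M → F.Adj (c (j+1)) (c j) := by
    intro j hj1 hj2
    rw [hFa]
    refine ⟨(hB.adj j hj2).symm, ?_⟩
    have h1 := hci j 1 (by omega) (by omega) (by omega)
    have h2 := hci (j+1) 1 (by omega) (by omega) (by omega)
    simp only [ne_eq, Sym2.eq_iff]
    tauto
  -- phase 3
  refine GInv.greedy (par := par) (dep := dep) hD (S0 := SJ c M) (S1 := SJ c J1) hsubde ?_ ?_ hId ?_
  · intro y hy hy0
    obtain ⟨j, hj1, hj2, rfl⟩ := hnewe y hy hy0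
    refine ⟨?_, ?_, hR.lt _ (hB.ne j (by omega)), ?_⟩
    · rw [hcp]; exact hcSJ _ _ (by omega) (by omega) (by omega)
    · rw [hcp]; exact hFc j (by omega) hj2
    · have := hFdeg2 (par (c j)) Finset.univ (by rw [hcp]; exact hB.ne _ (by omega))
      omega
  · intro y hy hy0 w hw hwy
    obtain ⟨j, hj1, hj2, rfl⟩ := hnewe y hy hy0
    rcases hB.nbr j (by omega) hj2 w ((hFa _ _).1 hwy).1.symm with rfl | rfl
    · right
      have hjJ : J1 ≤ j - 1 := by
        by_contra hc
        exact mem_SJ.1 hw (j-1) (by omega) (by omega) rfl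
      refine ⟨?_, by rw [hcp, show j - 1 + 1 = j by omega]⟩
      rw [mem_SJ]; push Not; exact ⟨j-1, by omega, by omega, rfl⟩
    · left; rw [hcp]
  intro φe Cle We hIe hφe hWe
  have hc1d : c 1 ∈ SJ c M := hcSJ _ _ le_rfl (by omega) (by omega)
  have hfreshe : ∀ r ∈ Rm (SJ c M) φd, s(φe (c 1), r) ∉ We := by
    intro r hr h
    rw [hφe _ hc1d] at h
    refine hfreshd r hr (hWe (c 1) hc1d ?_ _ h (by simp))
    intro y hy hy0
    obtain ⟨j, hj1, hj2, rfl⟩ := hnewe y hy hy0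
    rw [hcp]
    exact hci _ _ (by omega) (by omega) (by omega)
  have hRed : ∀ r ∈ Rm (SJ c J1) φe, r ∈ Rm (SJ c M) φd := by
    intro r hr
    rw [mem_Rm] at hr ⊢
    intro x hx
    rw [← hφe x hx]; exact hr x (hsubde hx)
  have hRed2 : ∀ j, J1 ≤ j → j < M → φe (c j) ∈ Rm (SJ c M) φd := by
    intro j hj1 hj2
    rw [mem_Rm]
    intro x hx h
    rw [← hφe x hx] at h
    have := hIe.inj (hsubde hx) (hcSJ J1 j (by omega) (by omega) (by omega)) h
    exact mem_SJ.1 hx j (by omega) hj2 this.symm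
  clear hWe hfreshd
  -- last explicit step
  have hcn : c (J1 - 1) ∉ SJ c J1 := by
    rw [mem_SJ]; push Not; exact ⟨J1-1, by omega, by omega, rfl⟩
  have hSf : insert (c (J1-1)) (SJ c J1) = SJ c (J1-1) := by
    ext x
    rw [Finset.mem_insert, mem_SJ, mem_SJ]
    constructor
    · rintro (rfl | hx) k hk1 hk2
      · exact hci _ _ (by omega) (by omega) (by omega)
      · exact hx k hk1 (by omega)
    · intro hx
      by_cases hxe : x = c (J1-1)
      · exact Or.inl hxe
      · right
        intro k hk1 hk2
        by_cases hk : k = J1 - 1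
        · subst hk; exact fun h => hxe h.symm
        · exact hx k hk1 (by omega)
  have hcJ1 : c J1 ∈ SJ c J1 := hcSJ _ _ (by omega) (by omega) (by omega)
  refine hIe.ext hD (x := c J1) (y := c (J1 - 1)) hcJ1 hcn ?_ ?_ ?_ ?_
  · have := hFc (J1-1) (by omega) (by omega)
    rwa [show J1 - 1 + 1 = J1 by omega] at this
  · intro w hw hwc
    rcases hB.nbr (J1-1) (by omega) (by omega) w ((hFa _ _).1 hwc).1.symm with rfl | rfl
    · exact absurd rfl (mem_SJ.1 hw (J1-1-1) (by omega) (by omega))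
    · rw [show J1 - 1 + 1 = J1 by omega]
  · have := hFdeg2 (c J1) (SJ c J1) (hB.ne _ (by omega))
    omega
  intro a1 b1 hab1 ha1 hb1 hIf
  have hRm := Rm_insert (φ := φe) (a := a1) hcn
  rw [hSf] at hIf hRm
  have hup : ∀ x ∈ SJ c J1, Function.update φe (c (J1-1)) a1 x = φe x := by
    intro x hx
    apply Function.update_of_ne
    rintro rfl; exact hcn hx
  have hc1e : c 1 ∈ SJ c J1 := hsubde hc1d
  have hupc1 := hup _ hc1e
  have hupJ : Function.update φe (c (J1-1)) a1 (c (J1-1)) = a1 := Function.update_self ..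
  have hupJ1 := hup _ hcJ1
  obtain ⟨φf, hφf⟩ : ∃ φf, φf = Function.update φe (c (J1-1)) a1 := ⟨_, rfl⟩
  obtain ⟨Wf, hWf⟩ : ∃ Wf, Wf = insert s(φe (c J1), b1) We := ⟨_, rfl⟩
  obtain ⟨Clf, hClf⟩ : ∃ Clf, Clf = insert s(φe (c J1), a1) Cle := ⟨_, rfl⟩
  rw [← hφf] at hIf hRm hup hupc1 hupJ hupJ1
  rw [← hWf, ← hClf] at hIf ⊢
  have hfreshf : ∀ r ∈ Rm (SJ c M) φd, s(φf (c 1), r) ∉ Wf := by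
    intro r hr h
    rw [hWf, Finset.mem_insert, hupc1] at h
    rcases h with h | h
    · have h1 := mem_Rm.1 hb1 (c 1) hc1e
      have h2 : φe (c 1) ≠ φe (c J1) := fun h' =>
        hci 1 J1 (by omega) (by omega) (by omega) (hIe.inj hc1e hcJ1 h')
      simp only [Sym2.eq_iff] at h
      grind
    · exact hfreshe r hr h
  have hRfe : ∀ r ∈ Rm (SJ c (J1-1)) φf, r ∈ Rm (SJ c J1) φe := by
    intro r hr; rw [hRm] at hr; exact Finset.mem_of_mem_erase hr
  have hcl : ∀ x y, F.Adj x y → x ∈ SJ c (J1-1) → y ∈ SJ c (J1-1) → s(φf x, φf y) ∈ Clf :=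
    fun x y h hx hy => (hIf.cl _).2 ⟨x, hx, y, hy, h, rfl⟩
  have hc1f : c 1 ∈ SJ c (J1-1) := hcSJ _ _ (by omega) (by omega) (by omega)
  have hLate : Late T v p c M (J1-1) (J1-1) φf Clf Wf := by
    refine ⟨hIf.vp, hIf.inj, ?_, ?_, ?_, ?_, ?_⟩
    · intro x hx y hy hadj hne
      exact hcl x y ((hFa _ _).2 ⟨hadj, hne⟩) hx hy
    · intro r hr r' hr' _ h
      rw [Finset.mem_union] at h
      rcases h with h | h
      · exact hIf.not_cl hr' _ h
      · obtain ⟨x, hx, hxe⟩ := hIf.wtouch _ h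
        rw [Sym2.mem_iff] at hxe
        rcases hxe with h | h
        · exact mem_Rm.1 hr x hx h
        · exact mem_Rm.1 hr' x hx h
    · intro r hr h
      rw [Finset.mem_union] at h
      rcases h with h | h
      · exact hIf.not_cl hr _ h
      · have hre := hRfe r hr
        rw [hupJ, hWf, Finset.mem_insert] at h
        have h1 := mem_Rm.1 ha1 _ hcJ1
        have h2 := mem_Rm.1 hre _ hcJ1
        rcases h with h | h
        · simp only [Sym2.eq_iff] at h
          grind
        · obtain ⟨x, hx, hxe⟩ := hIe.wtouch _ h
          rw [Sym2.mem_iff] at hxe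
          rcases hxe with h | h
          · exact mem_Rm.1 ha1 x hx h
          · exact mem_Rm.1 hre x hx h
    · intro r hr h
      rw [Finset.mem_union] at h
      rcases h with h | h
      · exact hIf.not_cl hr _ h
      · exact hfreshf r (hRed r (hRfe r hr)) h
    · intro r hr
      have hT : ∀ j, J1 - 1 ≤ j → j < M → s(φf (c 1), φf (c j)) ∉ Clf ∪ Wf := by
        intro j hj1 hj2 h
        have hjf : c j ∈ SJ c (J1-1) := hcSJ _ _ (by omega) (by omega) (by omega)
        rw [Finset.mem_union] at h
        rcases h with h | h
        · obtain ⟨x, hx, y, hy, hxy, he⟩ := (hIf.cl _).1 h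
          have hadj : T.Adj (c 1) (c j) := by
            have h1 := ((hFa _ _).1 hxy).1
            simp only [Sym2.eq_iff] at he
            rcases he with ⟨e1, e2⟩ | ⟨e1, e2⟩
            · rw [hIf.inj hc1f hx e1, hIf.inj hjf hy e2]; exact h1
            · rw [hIf.inj hc1f hy e1, hIf.inj hjf hx e2]; exact h1.symm
          rcases hB.nbr 1 le_rfl (by omega) _ hadj with h | h
          · exact hci j 0 (by omega) (by omega) (by omega) h
          · exact hci j 2 (by omega) (by omega) (by omega) h
        · by_cases hj : j = J1 - 1
          · subst hj
            rw [hupJ] at h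
            exact hfreshf _ (hRed _ ha1) h
          · rw [hup (c j) (hcSJ _ _ (by omega) (by omega) (by omega))] at h
            exact hfreshf _ (hRed2 j (by omega) hj2) h
      set A := (Finset.Ioo (J1-1) M).filter (fun i => s(r, φf (c i)) ∈ Wf) with hA
      set B := (Finset.Ioo (J1-1) M).filter (fun i => s(r, φf (c i)) ∉ Wf) with hBdef
      have hAB : A.card + B.card = M - (J1 - 1) - 1 := by
        rw [← Nat.card_Ioo]; exact Finset.card_filter_add_card_filter_not _
      have hAc : A.card ≤ D := by
        refine le_trans ?_ (hIf.wdeg_le hD hr)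
        apply card_le_wdeg Wf r A (fun i => φf (c i))
        · intro i hi j hj hij
          simp only [hA, Finset.coe_filter, Finset.mem_Ioo, Set.mem_ofPred_eq] at hi hj
          exact hB.inj i j (by omega) (by omega) (hIf.inj (hcSJ _ _ (by omega) (by omega) (by omega))
            (hcSJ _ _ (by omega) (by omega) (by omega)) hij)
        · intro i hi; exact (Finset.mem_filter.1 hi).2
      have hBc : 1 < B.card := by omega
      obtain ⟨i, hi, i', hi', hii⟩ := Finset.one_lt_card.1 hBc
      rw [hBdef, Finset.mem_filter, Finset.mem_Ioo] at hi hi'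
      have hW : ∀ i, s(r, φf (c i)) ∉ Wf → s(r, φf (c i)) ∉ Clf ∪ Wf := by
        intro i h
        rw [Finset.mem_union, not_or]
        refine ⟨?_, h⟩
        rw [Sym2.eq_swap]; exact hIf.not_cl hr _
      exact ⟨i, i', hii, hi.1.1, hi'.1.1, hi.1.2, hi'.1.2, hW i hi.2, hW i' hi'.2,
        hT _ (by omega) (by omega), hT _ (by omega) (by omega)⟩
  exact hLate.wins hB (by omega) le_rfl (by omega)

lemma num_aux : ∀ D, 60 ≤ D → (100 * (D+1)^2 + 10000)^2 ≤ 2 ^ D := by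
  intro D hD
  induction D, hD using Nat.le_induction with
  | base => norm_num
  | succ D hD ih =>
    have h1 : 5 * (100 * (D+1+1)^2 + 10000) ≤ 7 * (100 * (D+1)^2 + 10000) := by nlinarith
    have h2 : (5 * (100 * (D+1+1)^2 + 10000))^2 ≤ (7 * (100 * (D+1)^2 + 10000))^2 :=
      Nat.pow_le_pow_left h1 2
    rw [mul_pow, mul_pow] at h2
    rw [pow_succ 2 D]
    omega

lemma num_aux2 {n : ℕ} (hn : 2 ^ 60 ≤ n) :
    100 * (Nat.log 2 n + 1)^2 + 10000 ≤ Nat.sqrt n := by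
  have hn0 : n ≠ 0 := by
    rintro rfl; norm_num at hn
  have h60 : 60 ≤ Nat.log 2 n := Nat.le_log_of_pow_le (by norm_num) hn
  rw [Nat.le_sqrt']
  exact (num_aux _ h60).trans (Nat.pow_log_le_self 2 hn0)

lemma main_wins {n : ℕ} (hn : 2 ^ 60 ≤ n) (T : SimpleGraph (Fin n)) (hT : T.IsTree) (v : Fin n)
    (hl : ∀ u : Fin n, T.Adj v u → (T.neighborSet u).ncard ≠ 1)
    (hdv : ((T.neighborSet v).ncard : ℝ) ≤ (n : ℝ) / 3)
    (hdu : ∀ u : Fin n, u ≠ v →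
      (((T.neighborSet u) \ {v}).ncard : ℝ) ≤ (1 / 200 : ℝ) * Real.sqrt n)
    (p : Fin n) : Wins T v p n ∅ ∅ := by
  classical
  obtain ⟨par, dep, hR⟩ := exists_rooted hT v
  have hnum := num_aux2 hn
  have hD : n < 2 ^ (Nat.log 2 n + 1) := Nat.lt_pow_succ_log_self (by norm_num) n
  obtain ⟨D, hDdef⟩ : ∃ D, D = Nat.log 2 n := ⟨_, rfl⟩
  obtain ⟨s, hs⟩ : ∃ s, s = Nat.sqrt n := ⟨_, rfl⟩
  rw [← hDdef] at hD hnum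
  rw [← hs] at hnum
  have hsn : s * s ≤ n := hs ▸ Nat.sqrt_le n
  have hsqrt : Real.sqrt n ≤ s + 1 := by
    rw [Real.sqrt_le_left (by positivity)]
    have h := Nat.lt_succ_sqrt' n
    rw [← hs] at h
    have : (n : ℝ) ≤ ((Nat.succ s ^ 2 : ℕ) : ℝ) := by exact_mod_cast h.le
    simpa using this
  have hnb : ∀ u, (T.neighborSet u).ncard = (Finset.univ.filter (fun y => T.Adj u y)).card := by
    intro u
    rw [← Set.ncard_coe_finset]; congr 1; ext y; simp
  have hΔ : ∀ u, u ≠ v → 200 * ((Finset.univ.filter (fun y => T.Adj u y)).erase v).card ≤ s + 1 := by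
    intro u hu
    have h1 := hdu u hu
    have h2 : ((T.neighborSet u) \ {v}).ncard =
        ((Finset.univ.filter (fun y => T.Adj u y)).erase v).card := by
      rw [← Set.ncard_coe_finset]; congr 1; ext y; simp [and_comm]
    rw [h2] at h1
    have : (200 : ℝ) * ((Finset.univ.filter (fun y => T.Adj u y)).erase v).card ≤ s + 1 := by
      linarith
    exact_mod_cast this
  obtain ⟨Δ, hΔd⟩ : ∃ Δ, Δ = (s + 1) / 200 := ⟨_, rfl⟩
  have hch : ∀ x, x ≠ v → (Finset.univ.filter (fun y => y ≠ v ∧ par y = x)).card ≤ Δ := by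
    intro x hx
    have h1 := hΔ x hx
    have h2 : (Finset.univ.filter (fun y => y ≠ v ∧ par y = x)).card ≤
        ((Finset.univ.filter (fun y => T.Adj x y)).erase v).card := by
      apply Finset.card_le_card
      intro y hy
      simp only [Finset.mem_filter, Finset.mem_univ, true_and, Finset.mem_erase] at hy ⊢
      refine ⟨hy.1, ?_⟩
      rw [hR.adj]; exact Or.inl hy
    omega
  have hdx : ∀ x, x ≠ v → (Finset.univ.filter (fun y => T.Adj x y)).card ≤ Δ + 1 := by
    intro x hx
    have h1 := hΔ x hx
    have h2 := Finset.pred_card_le_card_erase (s := Finset.univ.filter (fun y => T.Adj x y)) (a := v)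
    omega
  have hdv' : 3 * (Finset.univ.filter (fun y => T.Adj v y)).card ≤ n := by
    rw [hnb] at hdv
    have : (3 : ℝ) * (Finset.univ.filter (fun y => T.Adj v y)).card ≤ n := by linarith
    exact_mod_cast this
  have hleaf : ∀ y, y ≠ v → par y = v → ∃ z, z ≠ v ∧ par z = y := by
    intro y hy hyv
    by_contra hc
    push Not at hc
    refine hl y ?_ ?_
    · rw [hR.adj]; exact Or.inl ⟨hy, hyv⟩
    · rw [Set.ncard_eq_one]
      refine ⟨v, ?_⟩
      ext w
      rw [SimpleGraph.mem_neighborSet, hR.adj, Set.mem_singleton_iff]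
      constructor
      · rintro (h | h)
        · exact absurd h.2 (hc w h.1)
        · rw [← h.2, hyv]
      · rintro rfl; exact Or.inr ⟨hy, hyv⟩
  have hDs : 100 * D ^ 2 + 200 * D + 10100 ≤ s := by nlinarith
  have hDD : D ≤ D ^ 2 := by nlinarith
  have hns : 10100 * s ≤ n := le_trans (Nat.mul_le_mul_right s (by omega)) hsn
  have hdich : 2 * (s / 8) * Δ + (2 * (2 * (s / 8)) + 1) * (s / 2 + 1) < n := by
    have h1 : 8 * (s / 8) ≤ s := Nat.mul_div_le s 8
    have h2 : 200 * Δ ≤ s + 1 := hΔd ▸ Nat.mul_div_le (s+1) 200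
    have h3 : 2 * (s / 2) ≤ s := Nat.mul_div_le s 2
    generalize s / 8 = q at h1 ⊢
    generalize s / 2 = m at h3 ⊢
    have h4 : (8 * q) * (200 * Δ) ≤ s * (s + 1) := Nat.mul_le_mul h1 h2
    have h5 : (8 * q) * (2 * m) ≤ s * s := Nat.mul_le_mul h1 h3
    nlinarith
  rcases dichotomy hR.parv hR.lt (Δ := Δ) (r := 2 * (s / 8)) (m := s / 2) hch hleaf hdich with
    ⟨X, hXc, l, hX⟩ | ⟨z, hz⟩
  · refine caseB hR hD (d := Δ + 1) (q := s / 8) ?_ hdx hXc hX ?_ ?_ ?_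
    · omega
    · omega
    · have : 2 * D * (2 * D + 2) = 4 * D ^ 2 + 4 * D := by ring
      omega
    · intro x hx h
      obtain ⟨h1, h2, h3, h4⟩ := hX x hx
      rw [hR.adj] at h
      rcases h with h | h
      · exact h1 (h3.symm.trans h.2)
      · exact h.1 rfl
  · refine caseA hR hD (d := Δ + 1) ?_ hdx hz ?_
    · omega
    · omega

/-- There is a constant `ε > 0` such that for every large enough `n` the following holds.
Let `T` be a tree on `n` vertices and let `v` be a vertex of `T` which is neither a leaf nor a
neighbour of a leaf, with `d_T(v) ≤ n/3`, such that deleting `v` from `T` leaves a graph of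
maximum degree at most `ε·√n`.  Then for any vertex `p` of `K_n`, in the unbiased Waiter-Client
game on `E(K_n)`, Waiter can force Client to claim a copy of `T` within `n` rounds in such a way
that (a) the vertex `p` represents `v` in Client's copy of `T`, and (b) in each round Waiter
offers either exactly two edges incident to `p` or no edge incident to `p`. -/
theorem WC_tree_embedding_rooted :
    ∃ ε : ℝ, 0 < ε ∧ ∃ n₀ : ℕ, ∀ n : ℕ, n₀ ≤ n →
      ∀ T : SimpleGraph (Fin n), T.IsTree →
      ∀ v : Fin n,
        -- `v` is not a leaf of `T`
        (T.neighborSet v).ncard ≠ 1 →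
        -- `v` is not adjacent to a leaf of `T`
        (∀ u : Fin n, T.Adj v u → (T.neighborSet u).ncard ≠ 1) →
        -- `d_T(v) ≤ n/3`
        ((T.neighborSet v).ncard : ℝ) ≤ (n : ℝ) / 3 →
        -- the tree obtained from `T` by deleting `v` has maximum degree at most `ε·√n`
        (∀ u : Fin n, u ≠ v → (((T.neighborSet u) \ {v}).ncard : ℝ) ≤ ε * Real.sqrt n) →
      ∀ p : Fin n,
        WaiterWinsOffers (Kedges n) 1
          -- (b): each offer contains exactly two or no edges incident to `p`
          (fun O => (O.filter (fun e => p ∈ e)).card = 0 ∨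
                    (O.filter (fun e => p ∈ e)).card = 2)
          -- (a): Client's graph contains a copy of `T` in which `p` represents `v`
          (fun Cl _ => ∃ σ : Equiv.Perm (Fin n), σ v = p ∧
            ∀ e ∈ T.edgeSet, Sym2.map σ e ∈ Cl)
          n ∅ ∅ := by
  refine ⟨1 / 200, by norm_num, 2 ^ 60, ?_⟩
  intro n hn T hT v _ hl hdv hdu p
  exact main_wins hn T hT v hl hdv hdu p
end

section
/- For every μ ∈ (0, 1/2) there exists ε > 0 such that for every large enough integer n the following holds: if T is a tree on n vertices such that every vertex of T is adjacent to at most ε·√n leaves of T (i.e. Δ(N_T(L)) ≤ ε·√n), then either the number of vertices of T adjacent to some leaf satisfies |N_T(L)| ≥ μ·√n, or T contains a bare path of length at least μ·√n. -/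
open Finset

/-- `IsBarePath T q` : the path `q` in the tree `T` is a bare path, i.e. all of its internal
vertices have degree exactly `2` in `T`. -/
def IsBarePath {V : Type*} (T : SimpleGraph V) {u w : V} (q : T.Walk u w) : Prop :=
  q.IsPath ∧ ∀ x ∈ q.support, x ≠ u → x ≠ w → (T.neighborSet x).ncard = 2

lemma td_parent {V : Type*} [Fintype V] (T : SimpleGraph V) (hT : T.IsTree) (r : V) :
    ∃ (p : V → V) (d : V → ℕ), (∀ v, d v < Fintype.card V) ∧ ∀ u v, T.Adj u v →
      (p u = v ∧ d u = d v + 1) ∨ (p v = u ∧ d v = d u + 1) := by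
  classical
  choose f hf hf' using (hT.existsUnique_path r ·)
  refine ⟨fun v => (f v).penultimate, fun v => (f v).length, fun v => (hf v).length_lt, ?_⟩
  intro u v huv
  by_cases h : v ∈ (f u).support
  · left
    have := hT.isAcyclic.path_concat (hf v) (hf u) huv.symm h
    refine ⟨?_, ?_⟩
    · simp only [this]; simp
    · simp only [this]; simp
  · right
    have := hf' v _ ((hf u).concat h huv)
    refine ⟨?_, ?_⟩
    · simp only [← this]; simp
    · simp only [← this]; simp

lemma td_cover {V : Type*} [Fintype V] (T : SimpleGraph V) (p : V → V) (d : V → ℕ)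
    (hd : ∀ v, d v < Fintype.card V)
    (hp : ∀ u v, T.Adj u v → (p u = v ∧ d u = d v + 1) ∨ (p v = u ∧ d v = d u + 1))
    (L S : V → Prop)
    (hQ : ∀ v, ¬ L v → ¬ S v → (T.neighborSet v).ncard = 2 ∧ ∀ u, T.Adj v u → ¬ L u) :
    ∀ k v, Fintype.card V ≤ d v + k → ¬ L v →
      ∃ s, S s ∧ ∃ q : T.Walk s v, IsBarePath T q ∧ (∀ x ∈ q.support, d v ≤ d x) ∧
        p^[q.length] s = v ∧ (S v → s = v) := by
  intro k
  induction k with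
  | zero => intro v hv; have := hd v; omega
  | succ k ih =>
    intro v hv hL
    by_cases hS : S v
    · refine ⟨v, hS, SimpleGraph.Walk.nil, ⟨by simp, by simp⟩, by simp, by simp, fun _ => rfl⟩
    · obtain ⟨h2, hN⟩ := hQ v hL hS
      obtain ⟨a, b, hab, hset⟩ := Set.ncard_eq_two.1 h2
      have ha : T.Adj v a := by
        have : a ∈ T.neighborSet v := by rw [hset]; simp
        simpa using this
      have hb : T.Adj v b := by
        have : b ∈ T.neighborSet v := by rw [hset]; simp
        simpa using this
      obtain ⟨c, hc, hpc, hdc⟩ : ∃ c, T.Adj v c ∧ p c = v ∧ d c = d v + 1 := by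
        rcases hp v a ha with h | h
        · rcases hp v b hb with h' | h'
          · exact absurd (h.1.symm.trans h'.1) hab
          · exact ⟨b, hb, h'⟩
        · exact ⟨a, ha, h⟩
      obtain ⟨s, hs, q, hq, hqd, hqp, hqS⟩ := ih c (by omega) (hN c hc)
      have hv' : v ∉ q.support := fun h => by have := hqd v h; omega
      refine ⟨s, hs, q.concat hc.symm, ⟨hq.1.concat hv' hc.symm, ?_⟩, ?_, ?_, fun h => absurd h hS⟩
      · intro x hx hxs hxv
        rw [SimpleGraph.Walk.support_concat] at hx
        simp only [List.concat_eq_append, List.mem_append, List.mem_singleton, hxv, or_false] at hx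
        by_cases hxc : x = c
        · subst hxc
          by_cases hSx : S x
          · exact absurd (hqS hSx).symm hxs
          · exact (hQ x (hN x hc) hSx).1
        · exact hq.2 x hx hxs hxc
      · intro x hx
        rw [SimpleGraph.Walk.support_concat] at hx
        simp only [List.concat_eq_append, List.mem_append, List.mem_singleton] at hx
        rcases hx with hx | hx
        · have := hqd x hx; omega
        · rw [hx]
      · rw [SimpleGraph.Walk.length_concat, Function.iterate_succ_apply', hqp, hpc]

lemma td_count {V : Type*} [Fintype V] (T : SimpleGraph V) (hT : T.IsTree)
    (hV : 2 ≤ Fintype.card V) :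
    ({x | (∃ u, T.Adj x u ∧ (T.neighborSet u).ncard = 1) ∨
        ((T.neighborSet x).ncard ≠ 1 ∧ (T.neighborSet x).ncard ≠ 2)} : Set V).ncard ≤
      3 * ({x | ∃ u, T.Adj x u ∧ (T.neighborSet u).ncard = 1} : Set V).ncard := by
  classical
  have hdeg : ∀ v, (T.neighborSet v).ncard = T.degree v := by
    intro v
    rw [Set.ncard_eq_toFinset_card', ← SimpleGraph.card_neighborFinset_eq_degree]
    congr 1
  have : Nontrivial V := Fintype.one_lt_card_iff_nontrivial.1 hV
  have hpos : ∀ v, 0 < T.degree v := fun v => hT.connected.preconnected.degree_pos_of_nontrivial v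
  simp only [hdeg]
  have hsum : ∑ v, (T.degree v : ℤ) = 2 * Fintype.card V - 2 := by
    have h1 := T.sum_degrees_eq_twice_card_edges
    have h2 := hT.card_edgeFinset
    have h3 : ∑ v, (T.degree v : ℤ) = 2 * (#T.edgeFinset : ℤ) := by exact_mod_cast h1
    rw [h3, ← h2]; push_cast; ring
  let l : V → ℤ := fun v => ∑ u, if T.Adj v u ∧ T.degree u = 1 then 1 else 0
  have hl : ∑ v, l v = ∑ u, if T.degree u = 1 then (1 : ℤ) else 0 := by
    simp only [l]
    rw [Finset.sum_comm]
    refine Finset.sum_congr rfl fun u _ => ?_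
    split_ifs with h
    · simp only [h, and_true]
      rw [← Finset.sum_filter]
      simp only [Finset.sum_const, nsmul_eq_mul, mul_one]
      have : T.degree u = #{v | T.Adj v u} := by
        rw [← SimpleGraph.card_neighborFinset_eq_degree]
        congr 1; ext v; simp [T.adj_comm]
      rw [← this, h]; rfl
    · simp [h]
  have hle : ∀ v, l v ≤ T.degree v := by
    intro v
    have : (T.degree v : ℤ) = ∑ u, if T.Adj v u then 1 else 0 := by
      rw [← Finset.sum_filter]
      simp only [Finset.sum_const, nsmul_eq_mul, mul_one]
      rw [← SimpleGraph.card_neighborFinset_eq_degree]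
      congr 2; ext u; simp
    rw [this]
    refine Finset.sum_le_sum fun u _ => ?_
    split_ifs <;> simp_all
  let N : Finset V := {x | ∃ u, T.Adj x u ∧ T.degree u = 1}
  let S : Finset V := {x | (∃ u, T.Adj x u ∧ T.degree u = 1) ∨ (T.degree x ≠ 1 ∧ T.degree x ≠ 2)}
  have hl0 : ∀ v, v ∉ N → l v = 0 := by
    intro v hv
    simp only [N, Finset.mem_filter, Finset.mem_univ, true_and, not_exists] at hv
    exact Finset.sum_eq_zero fun u _ => if_neg (hv u)
  have key : ∀ v, (if v ∈ S then (1 : ℤ) else 0) - 3 * (if v ∈ N then 1 else 0) ≤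
      T.degree v - 2 + (if T.degree v = 1 then 1 else 0) - l v := by
    intro v
    by_cases hN : v ∈ N
    · have hS : v ∈ S := by
        simp only [S, N, Finset.mem_filter, Finset.mem_univ, true_and] at hN ⊢
        exact Or.inl hN
      have := hle v
      simp only [hN, hS, if_true]
      split_ifs <;> omega
    · have h0 := hl0 v hN
      have hp := hpos v
      have hS : v ∈ S ↔ (T.degree v ≠ 1 ∧ T.degree v ≠ 2) := by
        simp only [S, N, Finset.mem_filter, Finset.mem_univ, true_and] at hN ⊢
        exact or_iff_right hN
      rw [h0, if_neg hN]
      simp only [hS]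
      split_ifs <;> omega
  have tot := Finset.sum_le_sum (s := Finset.univ) fun v _ => key v
  simp only [Finset.sum_sub_distrib, Finset.sum_add_distrib, ← Finset.mul_sum, hl, hsum] at tot
  simp at tot
  have e1 : ({x | (∃ u, T.Adj x u ∧ T.degree u = 1) ∨ (T.degree x ≠ 1 ∧ T.degree x ≠ 2)} :
      Set V).ncard = #S := by
    rw [← Set.ncard_coe_finset]; simp [S]
  have e2 : ({x | ∃ u, T.Adj x u ∧ T.degree u = 1} : Set V).ncard = #N := by
    rw [← Set.ncard_coe_finset]; simp [N]
  rw [e1, e2]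
  omega

lemma td_leaves {V : Type*} [Fintype V] (T : SimpleGraph V) (hT : T.IsTree)
    (c : ℝ) (h : ∀ x : V,
          (({u | T.Adj x u ∧ (T.neighborSet u).ncard = 1} : Set V).ncard : ℝ) ≤ c) :
    (({u | (T.neighborSet u).ncard = 1} : Set V).ncard : ℝ) ≤
      ({x | ∃ u, T.Adj x u ∧ (T.neighborSet u).ncard = 1} : Set V).ncard * c := by
  classical
  let N : Finset V := {x | ∃ u, T.Adj x u ∧ (T.neighborSet u).ncard = 1}
  let A : V → Finset V := fun x => {u | T.Adj x u ∧ (T.neighborSet u).ncard = 1}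
  let L : Finset V := {u | (T.neighborSet u).ncard = 1}
  have e1 : ({u | (T.neighborSet u).ncard = 1} : Set V).ncard = #L := by
    rw [← Set.ncard_coe_finset]; simp [L]
  have e2 : ({x | ∃ u, T.Adj x u ∧ (T.neighborSet u).ncard = 1} : Set V).ncard = #N := by
    rw [← Set.ncard_coe_finset]; simp [N]
  have e3 : ∀ x, ({u | T.Adj x u ∧ (T.neighborSet u).ncard = 1} : Set V).ncard = #(A x) := by
    intro x; rw [← Set.ncard_coe_finset]; simp [A]
  rw [e1, e2]
  have hsub : L ⊆ N.biUnion A := by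
    intro u hu
    simp only [L, Finset.mem_filter, Finset.mem_univ, true_and] at hu
    obtain ⟨x, hx⟩ := Set.ncard_eq_one.1 hu
    have hux : T.Adj u x := by
      have : x ∈ T.neighborSet u := by rw [hx]; simp
      simpa using this
    simp only [N, A, Finset.mem_biUnion, Finset.mem_filter, Finset.mem_univ, true_and]
    exact ⟨x, ⟨u, hux.symm, hu⟩, hux.symm, hu⟩
  calc (#L : ℝ) ≤ ((∑ x ∈ N, #(A x) : ℕ) : ℝ) := by
        exact_mod_cast (Finset.card_le_card hsub).trans Finset.card_biUnion_le
    _ = ∑ x ∈ N, (#(A x) : ℝ) := by push_cast; rfl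
    _ ≤ ∑ x ∈ N, c := Finset.sum_le_sum fun x _ => by rw [← e3]; exact h x
    _ = #N * c := by simp

/-- For every `μ ∈ (0, 1/2)` there is `ε > 0` such that for every large enough `n` the
following holds: if `T` is a tree on `n` vertices in which every vertex has at most `ε·√n`
leaf neighbours, then either at least `μ·√n` vertices of `T` are adjacent to a leaf, or `T`
contains a bare path of length at least `μ·√n`. -/
theorem tree_dichotomy :
    ∀ μ : ℝ, 0 < μ → μ < 1 / 2 → ∃ ε : ℝ, 0 < ε ∧ ∃ n₀ : ℕ, ∀ n : ℕ, n₀ ≤ n →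
      ∀ T : SimpleGraph (Fin n), T.IsTree →
        (∀ x : Fin n,
          (({u | T.Adj x u ∧ (T.neighborSet u).ncard = 1} : Set (Fin n)).ncard : ℝ) ≤
            ε * Real.sqrt n) →
        (μ * Real.sqrt n ≤
            (({x | ∃ u, T.Adj x u ∧ (T.neighborSet u).ncard = 1} : Set (Fin n)).ncard : ℝ)) ∨
        (∃ (u w : Fin n) (q : T.Walk u w), IsBarePath T q ∧
          μ * Real.sqrt n ≤ (q.length : ℝ)) := by
  intro μ hμ0 hμ
  refine ⟨1 / 4, by norm_num, 400, ?_⟩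
  intro n hn T hT hl
  by_contra hcon
  push Not at hcon
  obtain ⟨hN, hP⟩ := hcon
  have hnR : (400 : ℝ) ≤ n := by exact_mod_cast hn
  set t := Real.sqrt n with ht
  have htt : t * t = n := Real.mul_self_sqrt (by positivity)
  have ht20 : 20 ≤ t := Real.le_sqrt_of_sq_le (by norm_num; exact hn)
  have hcount := td_count T hT (by simp; omega)
  have hleaves := td_leaves T hT _ hl
  obtain ⟨p, d, hd, hp⟩ := td_parent T hT ⟨0, by omega⟩
  set Nn := ({x | ∃ u, T.Adj x u ∧ (T.neighborSet u).ncard = 1} : Set (Fin n)).ncard with hNn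
  set L : Set (Fin n) := {u | (T.neighborSet u).ncard = 1} with hL
  set S : Set (Fin n) := {x | (∃ u, T.Adj x u ∧ (T.neighborSet u).ncard = 1) ∨
        ((T.neighborSet x).ncard ≠ 1 ∧ (T.neighborSet x).ncard ≠ 2)} with hS
  have hcov := td_cover T p d hd hp (· ∈ L) (· ∈ S) (by
    intro v hvL hvS
    simp only [hL, hS, Set.mem_ofPred_eq, not_or, not_exists, not_and, not_not] at hvL hvS ⊢
    exact ⟨hvS.2 hvL, hvS.1⟩)
  set M := ⌈μ * t⌉₊ with hM
  have hMlt : (M : ℝ) < μ * t + 1 := Nat.ceil_lt_add_one (by positivity)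
  classical
  have hsub : (Finset.univ : Finset (Fin n)) ⊆ L.toFinset ∪
      (S.toFinset ×ˢ Finset.range M).image (fun a => p^[a.2] a.1) := by
    intro v _
    by_cases hv : v ∈ L
    · simp [hv]
    · obtain ⟨s, hs, q, hq, -, hqp, -⟩ := hcov (Fintype.card (Fin n)) v (by omega) hv
      refine Finset.mem_union_right _ (Finset.mem_image.2 ⟨(s, q.length), ?_, hqp⟩)
      simp only [Finset.mem_product, Set.mem_toFinset, Finset.mem_range]
      exact ⟨hs, Nat.lt_ceil.2 (hP s v q hq)⟩
  have hc := (Finset.card_le_card hsub).trans ((Finset.card_union_le _ _).trans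
    (Nat.add_le_add_left Finset.card_image_le _))
  rw [Finset.card_product, Finset.card_range, Finset.card_univ, Fintype.card_fin,
    ← Set.ncard_eq_toFinset_card', ← Set.ncard_eq_toFinset_card'] at hc
  have hcR : (n : ℝ) ≤ L.ncard + S.ncard * M := by exact_mod_cast hc
  have hcS : (S.ncard : ℝ) ≤ 3 * Nn := by exact_mod_cast hcount
  have h1 : (S.ncard : ℝ) * M ≤ (3 * (μ * t)) * (μ * t + 1) := by
    apply mul_le_mul (by linarith) hMlt.le (by positivity) (by positivity)
  have h2 : (Nn : ℝ) * (1 / 4 * t) ≤ (μ * t) * (1 / 4 * t) := by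
    apply mul_le_mul_of_nonneg_right hN.le (by positivity)
  have h3 : μ * t ≤ 1 / 2 * t := mul_le_mul_of_nonneg_right hμ.le (by positivity)
  have h4 : (3 * (μ * t)) * (μ * t + 1) ≤ (3 * (1 / 2 * t)) * (1 / 2 * t + 1) := by
    gcongr
  have h5 : (μ * t) * (1 / 4 * t) ≤ (1 / 2 * t) * (1 / 4 * t) := by gcongr
  nlinarith
end

section
/- In an unbiased Waiter-Client game played on the edge set of K₁₂, for any two fixed vertices u and v, Waiter has a strategy such that within 7 rounds Client's claimed edges contain two vertex-disjoint triangles with the following additional properties: (1) u and v each lie in one of the two triangles, and (2) no edge with both endpoints among the 6 vertices not covered by the two triangles has been offered, and the edge uv has not been offered. -/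
open Finset

/-- `WaiterWins board b win t Cl W` means: starting from the position where Client owns the
elements of `Cl` and Waiter owns the elements of `W`, Waiter can force that within the next `t`
rounds of the `b`-biased Waiter-Client game on the board `board` a position is reached in which
the predicate `win` holds of (Client's elements, Waiter's elements).  In each round Waiter offers
`b+1` previously unclaimed board elements (or all remaining unclaimed elements, if fewer than
`b+1` remain); Client claims exactly one of them, the rest go to Waiter. -/
def WaiterWins {X : Type*} [DecidableEq X] (board : Finset X) (b : ℕ)
    (win : Finset X → Finset X → Prop) :
    ℕ → Finset X → Finset X → Prop
  | 0, Cl, W => win Cl W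
  | (t+1), Cl, W => win Cl W ∨
      ∃ O : Finset X, O.Nonempty ∧ O ⊆ board \ (Cl ∪ W) ∧
        O.card = min (b + 1) ((board \ (Cl ∪ W)).card) ∧
        ∀ x ∈ O, WaiterWins board b win t (insert x Cl) (W ∪ O.erase x)

/-- `tauWC board F b` : the smallest number of rounds within which Waiter can force Client's
elements to contain some member of the winning family `F`, in the `b`-biased Waiter-Client game
on the board `board`. -/
noncomputable def tauWC {X : Type*} [DecidableEq X] (board : Finset X)
    (F : Set (Finset X)) (b : ℕ) : ℕ :=
  sInf {t | WaiterWins board b (fun Cl _ => ∃ A ∈ F, A ⊆ Cl) t ∅ ∅}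

def WinTT (u v : Fin 12) (Cl W : Finset (Sym2 (Fin 12))) : Prop :=
  ∃ x : Fin 6 → Fin 12, Function.Injective x ∧
          s(x 0, x 1) ∈ Cl ∧ s(x 0, x 2) ∈ Cl ∧ s(x 1, x 2) ∈ Cl ∧
          s(x 3, x 4) ∈ Cl ∧ s(x 3, x 5) ∈ Cl ∧ s(x 4, x 5) ∈ Cl ∧
          u ∈ Set.range x ∧ v ∈ Set.range x ∧
          (∀ a b : Fin 12, a ∉ Set.range x → b ∉ Set.range x →
            s(a, b) ∉ Cl ∧ s(a, b) ∉ W) ∧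
          s(u, v) ∉ Cl ∧ s(u, v) ∉ W

/-- Up to relabelling, Client owns `C` and everything offered is in `L`; Waiter wins in `t`. -/
def GoodTT (t : ℕ) (C L : List (Sym2 (Fin 12))) : Prop :=
  ∀ (u v : Fin 12) (p : Fin 12 → Fin 12), Function.Injective p →
    s(u, v) = Sym2.map p s(0, 1) →
    ∀ Cl W : Finset (Sym2 (Fin 12)), (∀ c ∈ C, Sym2.map p c ∈ Cl) →
    (∀ e, e ∈ Cl ∨ e ∈ W → ∃ l ∈ L, e = Sym2.map p l) →
    WaiterWins (Kedges 12) 1 (WinTT u v) t Cl W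

theorem step_TT {t : ℕ} {C L : List (Sym2 (Fin 12))} (i j : Sym2 (Fin 12))
    (h : ¬ i.IsDiag ∧ ¬ j.IsDiag ∧ i ≠ j ∧ i ∉ L ∧ j ∉ L)
    (h1 : GoodTT t (i :: C) (i :: j :: L)) (h2 : GoodTT t (j :: C) (i :: j :: L)) :
    GoodTT (t + 1) C L := by
  obtain ⟨hi, hj, hij, hiL, hjL⟩ := h
  intro u v p hp huv Cl W hC hL
  have hpi := Sym2.map.injective hp
  have hne : Sym2.map p i ≠ Sym2.map p j := fun h => hij (hpi h)
  have fresh : ∀ k, ¬ k.IsDiag → k ∉ L → Sym2.map p k ∈ Kedges 12 \ (Cl ∪ W) := by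
    intro k hk hkL
    simp only [Kedges, mem_sdiff, mem_filter, mem_univ, true_and, mem_union]
    refine ⟨?_, fun h => ?_⟩
    · induction k with | _ a b =>
      simpa [hp.eq_iff] using hk
    · obtain ⟨l, hl, e⟩ := hL _ h
      exact hkL (hpi e ▸ hl)
  have hsub : ({Sym2.map p i, Sym2.map p j} : Finset _) ⊆ Kedges 12 \ (Cl ∪ W) := by
    intro e he
    simp only [mem_insert, mem_singleton] at he
    rcases he with rfl | rfl
    · exact fresh _ hi hiL
    · exact fresh _ hj hjL
  have hcard : ({Sym2.map p i, Sym2.map p j} : Finset _).card = 2 := card_pair hne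
  refine Or.inr ⟨{Sym2.map p i, Sym2.map p j}, ⟨_, mem_insert_self _ _⟩, hsub, ?_, ?_⟩
  · have := card_le_card hsub
    omega
  · intro x hx
    have key : ∀ e, e ∈ insert x Cl ∨
        e ∈ W ∪ ({Sym2.map p i, Sym2.map p j} : Finset _).erase x →
        ∃ l ∈ i :: j :: L, e = Sym2.map p l := by
      intro e he
      have : (e ∈ Cl ∨ e ∈ W) ∨ e = Sym2.map p i ∨ e = Sym2.map p j := by
        simp only [mem_insert, mem_singleton, mem_union, mem_erase] at he hx
        rcases he with (rfl | h) | h | h <;> tauto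
      rcases this with h | h | h
      · obtain ⟨l, hl, e⟩ := hL _ h
        exact ⟨l, by simp [hl], e⟩
      · exact ⟨i, by simp, h⟩
      · exact ⟨j, by simp, h⟩
    simp only [mem_insert, mem_singleton] at hx
    have hC' : ∀ k, x = Sym2.map p k → ∀ c ∈ k :: C, Sym2.map p c ∈ insert x Cl := by
      intro k hk c hc
      rcases List.mem_cons.1 hc with rfl | hc
      · simp [hk]
      · exact mem_insert_of_mem (hC c hc)
    rcases hx with hx | hx
    · exact h1 u v p hp huv _ _ (hC' i hx) key
    · exact h2 u v p hp huv _ _ (hC' j hx) key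

theorem symm_TT {t : ℕ} {C L C' L' : List (Sym2 (Fin 12))} (h : GoodTT t C' L')
    (q : Equiv.Perm (Fin 12)) (hq : Sym2.map q s(0, 1) = s(0, 1))
    (hC : ∀ c ∈ C', Sym2.map q c ∈ C) (hL : ∀ l ∈ L, l ∈ L'.map (Sym2.map q)) :
    GoodTT t C L := by
  intro u v p hp huv Cl W hc hl
  refine h u v (p ∘ q) (hp.comp q.injective) ?_ Cl W ?_ ?_
  · rw [huv, Sym2.map_comp, Function.comp, hq]
  · intro c hc'
    rw [Sym2.map_comp]
    exact hc _ (hC c hc')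
  · intro e he
    obtain ⟨l, hl1, rfl⟩ := hl e he
    obtain ⟨l', h1, rfl⟩ := List.mem_map.1 (hL l hl1)
    exact ⟨l', h1, by rw [Sym2.map_comp]; rfl⟩

theorem win_TT {C L : List (Sym2 (Fin 12))} (x : Fin 6 → Fin 12)
    (hx : Function.Injective x)
    (hC : ∀ e ∈ [s(x 0, x 1), s(x 0, x 2), s(x 1, x 2), s(x 3, x 4), s(x 3, x 5),
      s(x 4, x 5)], e ∈ C)
    (h0 : ∃ i, x i = 0) (h1 : ∃ i, x i = 1)
    (hL : ∀ l ∈ L, ∃ i, x i ∈ l) (hL' : s(0, 1) ∉ L) :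
    GoodTT 0 C L := by
  intro u v p hp huv Cl W hc hl
  have hpi := Sym2.map.injective hp
  have hr : ∀ w, w ∈ s(u, v) → w ∈ Set.range (p ∘ x) := by
    intro w hw
    rw [huv] at hw
    simp only [Sym2.map_mk, Sym2.mem_iff] at hw
    obtain ⟨i, hi⟩ := h0
    obtain ⟨j, hj⟩ := h1
    rcases hw with rfl | rfl
    · exact ⟨i, by simp [hi]⟩
    · exact ⟨j, by simp [hj]⟩
  have hn : ¬ (s(u, v) ∈ Cl ∨ s(u, v) ∈ W) := by
    intro h
    obtain ⟨l, h1, h2⟩ := hl _ h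
    rw [huv] at h2
    exact hL' (hpi h2 ▸ h1)
  have hm : ∀ a b : Fin 12, a ∉ Set.range (p ∘ x) → b ∉ Set.range (p ∘ x) →
      ¬ (s(a, b) ∈ Cl ∨ s(a, b) ∈ W) := by
    intro a b ha hb h
    obtain ⟨l, h1, h2⟩ := hl _ h
    obtain ⟨i, hi⟩ := hL l h1
    have : p (x i) ∈ s(a, b) := by
      rw [h2]
      exact Sym2.mem_map.2 ⟨_, hi, rfl⟩
    rcases Sym2.mem_iff.1 this with e | e
    · exact ha ⟨i, e⟩
    · exact hb ⟨i, e⟩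
  have hE : ∀ a b, s(x a, x b) ∈ C → s((p ∘ x) a, (p ∘ x) b) ∈ Cl := fun a b h => hc _ h
  refine ⟨p ∘ x, hp.comp hx, hE _ _ (hC _ (by simp)), hE _ _ (hC _ (by simp)),
    hE _ _ (hC _ (by simp)), hE _ _ (hC _ (by simp)), hE _ _ (hC _ (by simp)),
    hE _ _ (hC _ (by simp)), hr _ (by simp), hr _ (by simp),
    fun a b ha hb => not_or.1 (hm a b ha hb), not_or.1 hn⟩

set_option maxRecDepth 100000 in
theorem good_TT6 : GoodTT 1
    [s(1, 10), s(2, 4), s(1, 8), s(1, 6), s(0, 4), s(0, 2)]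
    [s(1, 10), s(1, 11), s(2, 4), s(6, 8), s(1, 8), s(1, 9), s(1, 6), s(1, 7), s(0, 4), s(0, 5), s(0, 2), s(0, 3)] :=
  step_TT s(6, 10) s(8, 10) (by decide)
    (win_TT ![0, 2, 4, 1, 6, 10] (by decide) (by decide) (by decide) (by decide) (by decide) (by decide))
    (win_TT ![0, 2, 4, 1, 8, 10] (by decide) (by decide) (by decide) (by decide) (by decide) (by decide))

set_option maxRecDepth 100000 in
theorem good_TT5 : GoodTT 2
    [s(2, 4), s(1, 8), s(1, 6), s(0, 4), s(0, 2)]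
    [s(2, 4), s(6, 8), s(1, 8), s(1, 9), s(1, 6), s(1, 7), s(0, 4), s(0, 5), s(0, 2), s(0, 3)] :=
  step_TT s(1, 10) s(1, 11) (by decide) good_TT6
    (symm_TT good_TT6 (Equiv.swap 10 11) (by decide) (by decide) (by decide))

set_option maxRecDepth 100000 in
theorem good_TT4 : GoodTT 3
    [s(1, 8), s(1, 6), s(0, 4), s(0, 2)]
    [s(1, 8), s(1, 9), s(1, 6), s(1, 7), s(0, 4), s(0, 5), s(0, 2), s(0, 3)] :=
  step_TT s(2, 4) s(6, 8) (by decide) good_TT5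
    (symm_TT good_TT5 (Equiv.swap 0 1 * Equiv.swap 2 6 * Equiv.swap 3 7 * Equiv.swap 4 8 * Equiv.swap 5 9) (by decide) (by decide) (by decide))

set_option maxRecDepth 100000 in
theorem good_TT3 : GoodTT 4
    [s(1, 6), s(0, 4), s(0, 2)]
    [s(1, 6), s(1, 7), s(0, 4), s(0, 5), s(0, 2), s(0, 3)] :=
  step_TT s(1, 8) s(1, 9) (by decide) good_TT4
    (symm_TT good_TT4 (Equiv.swap 8 9) (by decide) (by decide) (by decide))

set_option maxRecDepth 100000 in
theorem good_TT2 : GoodTT 5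
    [s(0, 4), s(0, 2)]
    [s(0, 4), s(0, 5), s(0, 2), s(0, 3)] :=
  step_TT s(1, 6) s(1, 7) (by decide) good_TT3
    (symm_TT good_TT3 (Equiv.swap 6 7) (by decide) (by decide) (by decide))

set_option maxRecDepth 100000 in
theorem good_TT1 : GoodTT 6
    [s(0, 2)]
    [s(0, 2), s(0, 3)] :=
  step_TT s(0, 4) s(0, 5) (by decide) good_TT2
    (symm_TT good_TT2 (Equiv.swap 4 5) (by decide) (by decide) (by decide))

set_option maxRecDepth 100000 in
theorem good_TT0 : GoodTT 7
    []
    [] :=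
  step_TT s(0, 2) s(0, 3) (by decide) good_TT1
    (symm_TT good_TT1 (Equiv.swap 2 3) (by decide) (by decide) (by decide))

/-- In the unbiased Waiter-Client game on the edge set of `K₁₂`, for any two fixed vertices
`u ≠ v`, Waiter has a strategy such that within `7` rounds Client's claimed edges contain two
vertex-disjoint triangles `{x 0, x 1, x 2}` and `{x 3, x 4, x 5}` with: (1) `u` and `v` both
among the six triangle vertices, and (2) no edge with both endpoints among the six vertices not
covered by the triangles has been offered (i.e. claimed by either player), and the edge `uv`
has not been offered. -/
theorem WC_two_triangles_K12 :
    ∀ u v : Fin 12, u ≠ v →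
      WaiterWins (Kedges 12) 1
        (fun Cl W => ∃ x : Fin 6 → Fin 12, Function.Injective x ∧
          -- two vertex-disjoint triangles in Client's graph
          s(x 0, x 1) ∈ Cl ∧ s(x 0, x 2) ∈ Cl ∧ s(x 1, x 2) ∈ Cl ∧
          s(x 3, x 4) ∈ Cl ∧ s(x 3, x 5) ∈ Cl ∧ s(x 4, x 5) ∈ Cl ∧
          -- (1) both `u` and `v` lie in the two triangles
          u ∈ Set.range x ∧ v ∈ Set.range x ∧
          -- (2) edges among the remaining six vertices, and the edge `uv`, were never offered
          (∀ a b : Fin 12, a ∉ Set.range x → b ∉ Set.range x →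
            s(a, b) ∉ Cl ∧ s(a, b) ∉ W) ∧
          s(u, v) ∉ Cl ∧ s(u, v) ∉ W)
        7 ∅ ∅ := by
  intro u v huv
  obtain ⟨p, hp0, hp1⟩ : ∃ p : Equiv.Perm (Fin 12), p 0 = u ∧ p 1 = v := by
    refine ⟨Equiv.swap (Equiv.swap 0 u 1) v * Equiv.swap 0 u, ?_, ?_⟩
    · have h1 : u ≠ Equiv.swap 0 u 1 := by
        intro h
        have h' := congrArg (Equiv.swap 0 u) h
        simp at h'
      simp [Equiv.swap_apply_of_ne_of_ne h1 huv]
    · simp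
  exact good_TT0 u v p p.injective (by simp [hp0, hp1]) ∅ ∅ (by simp) (by simp)
end
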